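/- arXiv:2310.00292 — 2 statements merged into one kernel-verified Lean document; each statement's English description precedes it below -/
import Mathlib

section
/- Let n ≥ 2 and let μ = f·Lⁿ ∈ 𝒲(ℝⁿ) be a PS measure. Then either f = 0 Lⁿ-a.e., or for every orthonormal basis {e_1, …, e_n} of ℝⁿ there exist functions f_1, …, f_n ∈ L¹(ℝ) ∩ W^{1,1}_loc(ℝ) with f_i > 0 on ℝ such that f(Σ_{i=1}^n x_i e_i) = Π_{i=1}^n f_i(x_i) for Lⁿ-a.e. (x_1, …, x_n); in particular, in the latter case the precise representative of f is continuous and strictly positive on ℝⁿ. -/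
/-!
A nonzero PS density is a Gaussian `C exp (κ |x|² / 2 + ⟨b, x⟩)` with `κ < 0`, and a Gaussian splits
in every orthonormal basis.

*First variation.* Let `v, w` be orthogonal unit vectors and `π` the projection to `v^⊥`. The
superlevel sets of `x ↦ ⟨x, w⟩ + ε θ(π x) g(⟨x, v⟩)` are small perturbations of half-spaces, and
half-spaces in direction `w` are unchanged by symmetrization along `v`, up to `f`-null sets.
Integrate the PS inequality for these sets over all levels. As `|w + ε p| = 1 + ε ⟨p, w⟩ + O(ε²)`,
the term of order `ε` has a sign, and replacing `w` by `-w` turns the resulting inequality into an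
equality. Since `θ` is arbitrary, on almost every line in direction `v` the derivative `∂_w f` is
orthogonal to the difference between the rearrangement of `g` and `g` itself.

*Transport on a line.* Let `φ = f` and `ψ = ∂_w f` on such a line. Letting `g` tend to the indicator
of `(a, b) ∪ (d, ∞)` shows that replacing `(a, b)` by an interval `(c, d)` of equal `φ`-mass does
not change the integral of `ψ`. Differentiating at Lebesgue points shows that `ψ` is proportional
to `φ`.

*Gaussian form.* Consequently, for almost all `x, y`, the vector `f(x) ∇f(y) - f(y) ∇f(x)` is
parallel to `y - x`, as it is for every field `∇f = f (κ x + b)`. Subtract the field of this form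
that agrees with `∇f` at two generic base points: as `n ≥ 2`, the remainder at `y` lies on two
different lines and hence vanishes. So `f exp (-κ |x|² / 2 - ⟨b, x⟩)` has zero weak gradient and is
constant, and integrability gives `κ < 0`.
-/

open MeasureTheory Set Filter
open scoped ENNReal RealInnerProductSpace Topology

noncomputable section

/-- Euclidean space ℝⁿ. -/
abbrev En (n : ℕ) := EuclideanSpace ℝ (Fin n)

/-- Divergence of a vector field on ℝⁿ. -/
noncomputable def dvg {n : ℕ} (φ : En n → En n) (x : En n) : ℝ :=
  ∑ i : Fin n, fderiv ℝ φ x (EuclideanSpace.single i 1) i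

/-- `f'` is the (weak) gradient of `f`, and both are locally integrable;
this encodes `f ∈ W^{1,1}_loc(ℝⁿ)` with weak gradient `∇f = f'`. -/
def HasWeakGrad {n : ℕ} (f : En n → ℝ) (f' : En n → En n) : Prop :=
  LocallyIntegrable f volume ∧ LocallyIntegrable f' volume ∧
    ∀ φ : En n → En n, ContDiff ℝ 1 φ → HasCompactSupport φ →
      (∫ x, f x * dvg φ x) = - ∫ x, ⟪φ x, f' x⟫

/-- Membership of `μ = f·Lⁿ` in the class `𝒲(ℝⁿ)`: the density `f` is non-negative,
integrable and lies in `W^{1,1}_loc(ℝⁿ)` with weak gradient `f'`. -/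
def MemW {n : ℕ} (f : En n → ℝ) (f' : En n → En n) : Prop :=
  (∀ x, 0 ≤ f x) ∧ Integrable f volume ∧ HasWeakGrad f f'

/-- Admissible test vector fields: `C¹`, compactly supported in `U`, sup-norm at most 1. -/
def IsTestField {n : ℕ} (U : Set (En n)) (φ : En n → En n) : Prop :=
  ContDiff ℝ 1 φ ∧ HasCompactSupport φ ∧ tsupport φ ⊆ U ∧ ∀ x, ‖φ x‖ ≤ 1

/-- The weighted variation `‖g‖_{BV_μ(U)}` (valued in `ℝ≥0∞`;
membership in `BV_μ(U)` means that this quantity is finite). -/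
noncomputable def bvVar {n : ℕ} (f : En n → ℝ) (f' : En n → En n) (U : Set (En n))
    (g : En n → ℝ) : ℝ≥0∞ :=
  ⨆ (φ : En n → En n) (_ : IsTestField U φ),
    ENNReal.ofReal (∫ x in U, g x * (f x * dvg φ x + ⟪φ x, f' x⟫))

/-- The weighted perimeter `Per_μ(E; U)`. -/
noncomputable def perim {n : ℕ} (f : En n → ℝ) (f' : En n → En n) (U : Set (En n))
    (E : Set (En n)) : ℝ≥0∞ :=
  bvVar f f' U (E.indicator fun _ => (1 : ℝ))

/-- The measure `μ = f·Lⁿ`. -/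
noncomputable def muM {n : ℕ} (f : En n → ℝ) : Measure (En n) :=
  volume.withDensity fun x => ENNReal.ofReal (f x)

/-- One-dimensional generalized Ehrhard symmetrization of `A ⊆ ℝ` in direction `v ∈ {−1,+1}`
with respect to a measure `ν` on `ℝ`: the largest half-line `{t : v·t ≥ c}` of `ν`-measure
`ν A` (with the conventions `∅`, `ℝ` when `c = ±∞`). -/
def ehrhard1D (ν : Measure ℝ) (v : ℝ) (A : Set ℝ) : Set ℝ :=
  {t | ∀ b : ℝ, (∀ c : ℝ, ν {y | c ≤ v * y} ≤ ν A → b ≤ c) → b ≤ v * t}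

/-- The weighted measure `f·H¹` on the fiber `{x + t·v : t ∈ ℝ}`, identified with `ℝ`. -/
noncomputable def fiberMeasure {n : ℕ} (f : En n → ℝ) (x v : En n) : Measure ℝ :=
  (volume : Measure ℝ).withDensity fun t => ENNReal.ofReal (f (x + t • v))

/-- Generalized `v`-Ehrhard symmetrization of `E ⊆ ℝⁿ` with respect to `μ = f·Lⁿ`:
on each fiber over `v^⊥` one replaces `E` by the largest half-line in direction `v`
of the same weighted measure. -/
def ehrhardSymm {n : ℕ} (f : En n → ℝ) (v : En n) (E : Set (En n)) : Set (En n) :=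
  {z | ⟪z, v⟫ ∈
      ehrhard1D (fiberMeasure f (z - ⟪z, v⟫ • v) v) 1
        {t | (z - ⟪z, v⟫ • v) + t • v ∈ E}}

/-- `μ = f·Lⁿ` is a perimeter symmetrization (PS) measure: generalized Ehrhard
symmetrization does not increase the weighted perimeter of sets of finite `μ`-perimeter. -/
def IsPSMeasure {n : ℕ} (f : En n → ℝ) (f' : En n → En n) : Prop :=
  ∀ v : En n, ‖v‖ = 1 → ∀ E : Set (En n), NullMeasurableSet E volume →
    perim f f' univ E < ⊤ →
      perim f f' univ (ehrhardSymm f v E) ≤ perim f f' univ E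

/-- The half-space `H(v, r) = {x : x·v ≥ r}`. -/
def halfSpace {n : ℕ} (v : En n) (r : ℝ) : Set (En n) := {x | r ≤ ⟪x, v⟫}

/-- `H_μ(E, v)`: the largest half-space in direction `v` with `μ`-measure `μ(E)`. -/
def halfSpaceOf {n : ℕ} (f : En n → ℝ) (E : Set (En n)) (v : En n) : Set (En n) :=
  {x | ∀ b : ℝ, (∀ c : ℝ, muM f (halfSpace v c) ≤ muM f E → b ≤ c) → b ≤ ⟪x, v⟫}

/-- `g'` is the weak derivative of `g : ℝ → ℝ` (so `g ∈ W^{1,1}_loc(ℝ)`). -/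
def HasWeakDeriv (g g' : ℝ → ℝ) : Prop :=
  LocallyIntegrable g volume ∧ LocallyIntegrable g' volume ∧
    ∀ φ : ℝ → ℝ, ContDiff ℝ 1 φ → HasCompactSupport φ →
      (∫ t, g t * deriv φ t) = - ∫ t, φ t * g' t

section Lines

variable {E F : Type*} [NormedAddCommGroup E] [NormedSpace ℝ E] [MeasurableSpace E] [BorelSpace E]
  [SecondCountableTopology E] [NormedAddCommGroup F] {μ : Measure E} [SFinite μ]
  [μ.IsAddRightInvariant] {g : E → F}

lemma measurePreserving_shear (ν : Measure ℝ) [SFinite ν] (v : E) :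
    MeasurePreserving (fun q : E × ℝ => (q.1 + q.2 • v, q.2)) (μ.prod ν) (μ.prod ν) := by
  have h := MeasurePreserving.skew_product (MeasurePreserving.id ν)
    (g := fun s (z : E) => z + s • v) (μc := μ) (μd := μ) (by fun_prop)
    (Eventually.of_forall fun s => (measurePreserving_add_right μ (s • v)).map_eq)
  exact (Measure.measurePreserving_swap.comp h).comp Measure.measurePreserving_swap

lemma ae_ae_add_smul (v : E) {P : E → Prop} (h : ∀ᵐ x ∂μ, P x) :
    ∀ᵐ z ∂μ, ∀ᵐ s : ℝ, P (z + s • v) :=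
  Measure.ae_ae_of_ae_prod <| (Measure.quasiMeasurePreserving_fst.comp
    (measurePreserving_shear (μ := μ) volume v).quasiMeasurePreserving).ae h

lemma ae_of_ae_ae_add_smul (v : E) {P : E → Prop} (hP : MeasurableSet {x | P x})
    (h : ∀ᵐ z ∂μ, ∀ᵐ s : ℝ, P (z + s • v)) : ∀ᵐ x ∂μ, P x := by
  have hm : Measurable (fun q : E × ℝ => q.1 + q.2 • v) := by fun_prop
  obtain ⟨s, hs⟩ := ((Measure.ae_ae_comm (p := fun z s => P (z + s • v)) (hm hP)).1 h).exists
  filter_upwards [(measurePreserving_add_right μ (-(s • v))).quasiMeasurePreserving.ae hs] with x hx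
  simpa using hx

lemma integrable_restrict_prod_add_smul (hg : LocallyIntegrable g μ) (v : E) {K : Set E}
    (hK : IsCompact K) {I : Set ℝ} (hI : IsCompact I) :
    Integrable (fun q : E × ℝ => g (q.1 + q.2 • v)) ((μ.restrict K).prod (volume.restrict I)) := by
  have : IsFiniteMeasure ((volume : Measure ℝ).restrict I) := ⟨by simpa using hI.measure_lt_top⟩
  set K' : Set E := (fun q : E × ℝ => q.1 + q.2 • v) '' (K ×ˢ I)
  have hcomp : IsCompact K' := (hK.prod hI).image (by fun_prop)
  have hint := (measurePreserving_shear (volume.restrict I) v).integrable_comp_of_integrable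
    (((hg.integrableOn_isCompact hcomp).integrable_indicator hcomp.measurableSet).comp_fst _)
  rw [← Measure.restrict_univ (μ := volume.restrict I), Measure.prod_restrict]
  refine hint.integrableOn.congr ?_
  rw [← Measure.prod_restrict, Measure.restrict_univ, Measure.prod_restrict]
  filter_upwards [ae_restrict_mem (hK.measurableSet.prod hI.measurableSet)] with q hq
  exact indicator_of_mem (mem_image_of_mem _ hq) _

lemma ae_locallyIntegrable_add_smul [ProperSpace E] (hg : LocallyIntegrable g μ) (v : E) :
    ∀ᵐ z ∂μ, LocallyIntegrable (fun s : ℝ => g (z + s • v)) := by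
  have hball (N : ℕ) : ∀ᵐ z ∂μ, z ∈ Metric.closedBall (0 : E) N →
      IntegrableOn (fun s : ℝ => g (z + s • v)) (Metric.closedBall 0 N) :=
    (ae_restrict_iff' Metric.isClosed_closedBall.measurableSet).1
      (integrable_restrict_prod_add_smul hg v (isCompact_closedBall _ _)
        (isCompact_closedBall _ _)).prod_right_ae
  filter_upwards [ae_all_iff.2 hball] with z hz
  rw [locallyIntegrable_iff]
  intro k hk
  obtain ⟨C, hC⟩ := hk.isBounded.exists_norm_le
  obtain ⟨N, hN⟩ := exists_nat_ge (max C ‖z‖)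
  exact (hz N (by simpa using (le_max_right _ _).trans hN)).mono_set fun s hs => by
    simpa using (hC s hs).trans ((le_max_left _ _).trans hN)

end Lines

section OrthogonalSplitting

variable {E F : Type*} [NormedAddCommGroup E] [InnerProductSpace ℝ E] [NormedAddCommGroup F]
  {v : E}

lemma inner_add_smul_self (hv : ‖v‖ = 1) (x : E) (s : ℝ) : ⟪x + s • v, v⟫ = ⟪x, v⟫ + s := by
  simp [inner_add_left, inner_smul_left, hv]

/-- The orthogonal projection of `x` to the hyperplane `v^⊥`. -/
def perpProj (v : E) : E →L[ℝ] (ℝ ∙ v)ᗮ := (ℝ ∙ v)ᗮ.orthogonalProjectionOnto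

lemma coe_perpProj (hv : ‖v‖ = 1) (x : E) : (perpProj v x : E) = x - ⟪x, v⟫ • v := by
  rw [perpProj, Submodule.coe_orthogonalProjectionOnto_apply,
    Submodule.starProjection_orthogonal_val, Submodule.starProjection_unit_singleton ℝ hv,
    real_inner_comm]

lemma norm_perpProj_le (v x : E) : ‖perpProj v x‖ ≤ ‖x‖ :=
  Submodule.norm_orthogonalProjectionOnto_apply_le _ _

lemma inner_coe_perp (y : (ℝ ∙ v)ᗮ) : ⟪(y : E), v⟫ = 0 := by
  rw [real_inner_comm]
  exact Submodule.mem_orthogonal_singleton_iff_inner_right.1 y.2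

lemma perpProj_coe_add_smul (hv : ‖v‖ = 1) (y : (ℝ ∙ v)ᗮ) (s : ℝ) :
    perpProj v ((y : E) + s • v) = y := by
  ext
  rw [coe_perpProj hv, inner_add_smul_self hv, inner_coe_perp, zero_add, add_sub_cancel_right]

lemma perpProj_add_smul (hv : ‖v‖ = 1) (x : E) (s : ℝ) :
    perpProj v (x + s • v) = perpProj v x := by
  ext
  rw [coe_perpProj hv, coe_perpProj hv, inner_add_smul_self hv]
  module

/-- The orthogonal splitting of `E` into `v^⊥` and the line spanned by the unit vector `v`. -/
def perpLineHomeomorph (hv : ‖v‖ = 1) : (ℝ ∙ v)ᗮ × ℝ ≃ₜ E where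
  toFun q := q.1 + q.2 • v
  invFun x := (perpProj v x, ⟪x, v⟫)
  left_inv q := by simp [perpProj_coe_add_smul hv, inner_add_smul_self hv, inner_coe_perp]
  right_inv x := by simp [coe_perpProj hv]

variable [FiniteDimensional ℝ E] [MeasurableSpace E] [BorelSpace E] {g : E → F}

lemma measurePreserving_perpLineHomeomorph (hv : ‖v‖ = 1) :
    MeasurePreserving (perpLineHomeomorph hv) (volume.prod volume) volume := by
  have hline := ((MeasurePreserving.id (volume : Measure (ℝ ∙ v)ᗮ)).prod
    (LinearIsometryEquiv.toSpanUnitSingleton v hv).measurePreserving)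
  have hsplit := (ℝ ∙ v).orthogonalDecomposition.symm.measurePreserving.comp
    ((WithLp.volume_preserving_toLp (ℝ ∙ v) (ℝ ∙ v)ᗮ).comp
      (Measure.measurePreserving_swap.comp hline))
  have hcomp : ⇑(perpLineHomeomorph hv) = (ℝ ∙ v).orthogonalDecomposition.symm ∘ WithLp.toLp 2 ∘
      Prod.swap ∘ Prod.map id (LinearIsometryEquiv.toSpanUnitSingleton v hv) := by
    funext q
    simp [perpLineHomeomorph, add_comm]
  exact hcomp ▸ hsplit

lemma quasiMeasurePreserving_perpProj (hv : ‖v‖ = 1) :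
    Measure.QuasiMeasurePreserving (perpProj v) := by
  have h := (measurePreserving_perpLineHomeomorph hv).symm
    (perpLineHomeomorph hv).toMeasurableEquiv
  exact (Measure.quasiMeasurePreserving_fst.comp h.quasiMeasurePreserving :)

lemma ae_integrable_add_smul (hv : ‖v‖ = 1) (hg : Integrable g) :
    ∀ᵐ z : E, Integrable (fun s : ℝ => g (z + s • v)) := by
  have hint := (measurePreserving_perpLineHomeomorph hv).integrable_comp_of_integrable hg
  filter_upwards [(quasiMeasurePreserving_perpProj hv).ae hint.prod_right_ae] with z hz
  refine (hz.comp_add_left ⟪z, v⟫).congr (Eventually.of_forall fun s => ?_)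
  simp [perpLineHomeomorph, coe_perpProj hv, add_smul, ← add_assoc]

lemma ae_integral_prod_eq_zero {F : Type*} [NormedAddCommGroup F] [NormedSpace ℝ F]
    [FiniteDimensional ℝ F] [MeasurableSpace F] [BorelSpace F] {μ : Measure F} [SFinite μ]
    {h : F × ℝ → ℝ} (hh : ∀ k, IsCompact k → IntegrableOn h (k ×ˢ univ) (μ.prod volume))
    (hθ : ∀ θ : F → ℝ, ContDiff ℝ 1 θ → HasCompactSupport θ →
      ∫ q, h q * θ q.1 ∂μ.prod volume = 0) :
    ∀ᵐ y ∂μ, ∫ s, h (y, s) = 0 := by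
  have hmarg : LocallyIntegrable (fun y => ∫ s, h (y, s)) μ :=
    locallyIntegrable_iff.2 fun k hk => by
      have hint := hh k hk
      rw [IntegrableOn, ← Measure.prod_restrict, Measure.restrict_univ] at hint
      exact hint.integral_prod_left
  refine ae_eq_zero_of_integral_contDiff_smul_eq_zero hmarg fun θ hθs hθc => ?_
  obtain ⟨C, hC⟩ := hθs.continuous.norm.bddAbove_range_of_hasCompactSupport hθc.norm
  have hprod : Integrable (fun q : F × ℝ => θ q.1 * h q) (μ.prod volume) := by
    rw [← integrableOn_iff_integrable_of_support_subset (s := tsupport θ ×ˢ univ) fun q hq =>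
      ⟨subset_tsupport _ (left_ne_zero_of_mul hq), mem_univ _⟩]
    exact (hh _ hθc).bdd_mul (c := C)
      (hθs.continuous.comp continuous_fst).aestronglyMeasurable
      (Eventually.of_forall fun q => hC ⟨q.1, rfl⟩)
  calc ∫ y, θ y • (∫ s, h (y, s)) ∂μ = ∫ y, (∫ s, θ y * h (y, s)) ∂μ := by
        simp only [smul_eq_mul, integral_const_mul]
    _ = ∫ q : F × ℝ, h q * θ q.1 ∂μ.prod volume := by
        rw [← integral_prod _ hprod]
        simp only [mul_comm]
    _ = 0 := hθ θ (hθs.of_le (by exact_mod_cast le_top)) hθc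

lemma ae_integral_add_smul_eq_zero (hv : ‖v‖ = 1) {h : E → ℝ} (hh : LocallyIntegrable h)
    {A B : ℝ} (hslab : ∀ x, ⟪x, v⟫ ∉ Icc A B → h x = 0)
    (hθ : ∀ θ : (ℝ ∙ v)ᗮ → ℝ, ContDiff ℝ 1 θ → HasCompactSupport θ →
      ∫ x, h x * θ (perpProj v x) = 0) :
    ∀ᵐ z : E, ∫ s : ℝ, h (z + s • v) = 0 := by
  set e := perpLineHomeomorph hv
  have he := measurePreserving_perpLineHomeomorph hv
  have he_inner (q : (ℝ ∙ v)ᗮ × ℝ) : ⟪e q, v⟫ = q.2 := congrArg Prod.snd (e.symm_apply_apply q)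
  have he_perp (q : (ℝ ∙ v)ᗮ × ℝ) : perpProj v (e q) = q.1 :=
    congrArg Prod.fst (e.symm_apply_apply q)
  have hloc (k : Set (ℝ ∙ v)ᗮ) (hk : IsCompact k) :
      IntegrableOn (h ∘ e) (k ×ˢ univ) (volume.prod volume) := by
    have hK : IsCompact (e '' (k ×ˢ Icc A B)) := (hk.prod isCompact_Icc).image e.continuous
    have hint := (he.integrableOn_comp_preimage e.measurableEmbedding).2
      (hh.integrableOn_isCompact hK)
    rw [preimage_image_eq _ e.injective] at hint
    refine hint.of_forall_sdiff_eq_zero (hk.measurableSet.prod .univ) fun q hq => hslab _ ?_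
    rw [he_inner]
    exact fun hq' => hq.2 ⟨hq.1.1, hq'⟩
  have hzero : ∀ᵐ y : (ℝ ∙ v)ᗮ, ∫ s, h (e (y, s)) = 0 := by
    refine ae_integral_prod_eq_zero hloc fun θ hθs hθc => ?_
    refine .trans ?_ (hθ θ hθs hθc)
    simpa only [e, Function.comp_apply, he_perp] using
      he.integral_comp e.measurableEmbedding fun x => h x * θ (perpProj v x)
  filter_upwards [(quasiMeasurePreserving_perpProj hv).ae hzero] with z hz
  rw [← integral_add_left_eq_self _ ⟪z, v⟫] at hz
  rw [← hz]
  congr! 2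
  simp [e, perpLineHomeomorph, coe_perpProj hv, add_smul, ← add_assoc]

end OrthogonalSplitting

/-! ### Divergence and integration by parts -/

section Divergence

lemma integrable_inner_of_hasCompactSupport {X E : Type*} [TopologicalSpace X] [T2Space X]
    [SecondCountableTopology X] [MeasurableSpace X] [OpensMeasurableSpace X] {μ : Measure X}
    [NormedAddCommGroup E] [InnerProductSpace ℝ E] {g φ : X → E} (hg : LocallyIntegrable g μ)
    (hφ : Continuous φ) (hc : HasCompactSupport φ) : Integrable (fun x => ⟪φ x, g x⟫) μ := by
  refine (hg.integrable_smul_left_of_hasCompactSupport hφ.norm hc.norm).mono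
    (hφ.aestronglyMeasurable.inner hg.aestronglyMeasurable) (Eventually.of_forall fun x => ?_)
  simpa [norm_smul] using abs_real_inner_le_norm (φ x) (g x)

variable {n : ℕ} {f P : En n → ℝ} {f' φ : En n → En n}

lemma dvg_smul {x : En n} (hP : DifferentiableAt ℝ P x) (hφ : DifferentiableAt ℝ φ x) :
    dvg (fun x => P x • φ x) x = P x * dvg φ x + fderiv ℝ P x (φ x) := by
  have h : fderiv ℝ P x (φ x) = ∑ i, fderiv ℝ P x (EuclideanSpace.single i 1) * φ x i := by
    conv_lhs => rw [← (EuclideanSpace.basisFun (Fin n) ℝ).sum_repr (φ x)]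
    simp [mul_comm]
  simp only [dvg, fderiv_fun_smul hP hφ, h, Finset.mul_sum, ← Finset.sum_add_distrib]
  simp

lemma dvg_const (w x : En n) : dvg (fun _ => w) x = 0 := by
  simp [dvg]

lemma continuous_dvg (hφ : ContDiff ℝ 1 φ) : Continuous (dvg φ) := by
  unfold dvg
  have := hφ.continuous_fderiv (by simp)
  fun_prop

lemma hasCompactSupport_dvg (hc : HasCompactSupport φ) : HasCompactSupport (dvg φ) := by
  refine (hc.fderiv ℝ).mono fun x hx hx' => hx ?_
  simp [dvg, hx']

lemma integrable_mul_dvg (hf : LocallyIntegrable f) (hφ : ContDiff ℝ 1 φ)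
    (hc : HasCompactSupport φ) : Integrable (fun x => f x * dvg φ x) :=
  hf.integrable_smul_right_of_hasCompactSupport (continuous_dvg hφ) (hasCompactSupport_dvg hc)

lemma HasWeakGrad.integrable_inner (hf : HasWeakGrad f f') (hφ : Continuous φ)
    (hc : HasCompactSupport φ) : Integrable (fun x => ⟪φ x, f' x⟫) :=
  integrable_inner_of_hasCompactSupport hf.2.1 hφ hc

lemma HasWeakGrad.integral_mul_dvg_add_inner (hf : HasWeakGrad f f') (hP : ContDiff ℝ 1 P)
    (hφ : ContDiff ℝ 1 φ) (hc : HasCompactSupport φ) :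
    ∫ x, P x * (f x * dvg φ x + ⟪φ x, f' x⟫) = - ∫ x, f x * fderiv ℝ P x (φ x) := by
  have hPφ : ContDiff ℝ 1 (fun x => P x • φ x) := hP.smul hφ
  have hPc : HasCompactSupport (fun x => P x • φ x) := hc.mono fun x hx hx' => hx (by simp [hx'])
  have hD : Continuous (fun x => fderiv ℝ P x (φ x)) :=
    (hP.continuous_fderiv (by simp)).clm_apply hφ.continuous
  have hDc : HasCompactSupport (fun x => fderiv ℝ P x (φ x)) :=
    hc.mono fun x hx hx' => hx (by simp [hx'])
  have int_dvg : Integrable (fun x => f x * (P x * dvg φ x)) :=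
    hf.1.integrable_smul_right_of_hasCompactSupport (hP.continuous.mul (continuous_dvg hφ))
      (hasCompactSupport_dvg hc).mul_left
  have int_D : Integrable (fun x => f x * fderiv ℝ P x (φ x)) :=
    hf.1.integrable_smul_right_of_hasCompactSupport hD hDc
  have hdvg (x) : dvg (fun x => P x • φ x) x = P x * dvg φ x + fderiv ℝ P x (φ x) :=
    dvg_smul (hP.differentiable (by simp) x) (hφ.differentiable (by simp) x)
  have h := hf.2.2 _ hPφ hPc
  simp only [hdvg, mul_add] at h
  rw [integral_add int_dvg int_D] at h
  have hsplit (x) : P x * (f x * dvg φ x + ⟪φ x, f' x⟫)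
      = f x * (P x * dvg φ x) + ⟪P x • φ x, f' x⟫ := by
    rw [real_inner_smul_left]; ring
  simp only [hsplit]
  rw [integral_add int_dvg (hf.integrable_inner hPφ.continuous hPc)]
  linarith

lemma HasWeakGrad.integral_mul_fderiv (hf : HasWeakGrad f f') (w : En n) (hP : ContDiff ℝ 1 P)
    (hc : HasCompactSupport P) :
    ∫ x, f x * fderiv ℝ P x w = - ∫ x, P x * ⟪w, f' x⟫ := by
  have h := hf.2.2 (fun x => P x • w) (hP.smul contDiff_const) hc.smul_right
  have hdvg (x) : dvg (fun x => P x • w) x = fderiv ℝ P x w := by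
    rw [dvg_smul (hP.differentiable (by simp) x) (differentiableAt_const _), dvg_const]; simp
  simpa only [hdvg, real_inner_smul_left] using h

end Divergence

/-! ### Weak directional derivatives -/

section WeakDirDeriv

open scoped Convolution

variable {E : Type*} [NormedAddCommGroup E] [NormedSpace ℝ E] [MeasurableSpace E]
  {μ : Measure E} {w : E} {g g' : E → ℝ}

/-- `g'` is the weak derivative of `g` in direction `w`. -/
structure HasWeakDirDeriv (μ : Measure E) (w : E) (g g' : E → ℝ) : Prop where
  locallyIntegrable : LocallyIntegrable g μ
  locallyIntegrable_deriv : LocallyIntegrable g' μ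
  integral_mul_fderiv : ∀ ψ : E → ℝ, ContDiff ℝ 1 ψ → HasCompactSupport ψ →
    ∫ x, g x * fderiv ℝ ψ x w ∂μ = - ∫ x, ψ x * g' x ∂μ

lemma HasWeakDirDeriv.congr_deriv (hg : HasWeakDirDeriv μ w g g') {h : E → ℝ} (h' : g' =ᵐ[μ] h) :
    HasWeakDirDeriv μ w g h where
  locallyIntegrable := hg.locallyIntegrable
  locallyIntegrable_deriv := hg.locallyIntegrable_deriv.congr h'
  integral_mul_fderiv ψ hψ hc := by
    rw [hg.integral_mul_fderiv ψ hψ hc,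
      integral_congr_ae (h'.mono fun x hx => by simp only [hx] : _ =ᵐ[μ] fun x => ψ x * h x)]

lemma HasWeakGrad.hasWeakDirDeriv {n : ℕ} {f : En n → ℝ} {f' : En n → En n}
    (hf : HasWeakGrad f f') (w : En n) :
    HasWeakDirDeriv volume w f (fun x => ⟪w, f' x⟫) where
  locallyIntegrable := hf.1
  locallyIntegrable_deriv x :=
    let ⟨u, hu, hi⟩ := hf.2.1 x
    ⟨u, hu, hi.const_inner w⟩
  integral_mul_fderiv _ hψ hc := hf.integral_mul_fderiv w hψ hc

variable [BorelSpace E]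

lemma integral_integral_mul_add_smul [FiniteDimensional ℝ E] [μ.IsAddHaarMeasure]
    (hg : LocallyIntegrable g μ) (w : E) {φ : E → ℝ} (hφ : Continuous φ)
    (hc : HasCompactSupport φ) {h : ℝ} (hh : 0 ≤ h) :
    ∫ s in 0..h, ∫ x, φ x * g (x + s • w) ∂μ =
      ∫ x, φ x * (∫ s in 0..h, g (x + s • w)) ∂μ := by
  obtain ⟨C, hC⟩ := hφ.norm.bddAbove_range_of_hasCompactSupport hc.norm
  have hswap := integral_integral_swap (f := fun x (s : ℝ) => φ x * g (x + s • w))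
    ((integrable_restrict_prod_add_smul hg w hc (isCompact_Icc (a := (0 : ℝ)) (b := h))).bdd_mul
      (c := C) (hφ.comp continuous_fst).aestronglyMeasurable
      (Eventually.of_forall fun q => hC ⟨q.1, rfl⟩))
  have hsupp (u : E → ℝ) : ∫ x in tsupport φ, φ x * u x ∂μ = ∫ x, φ x * u x ∂μ :=
    setIntegral_eq_integral_of_forall_compl_eq_zero fun x hx => by
      rw [image_eq_zero_of_notMem_tsupport hx, zero_mul]
  simp only [integral_const_mul] at hswap
  simp only [intervalIntegral.integral_of_le hh, ← integral_Icc_eq_integral_Ioc]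
  simpa only [hsupp] using hswap.symm

namespace HasWeakDirDeriv

lemma mul_contDiff [LocallyCompactSpace E] (hg : HasWeakDirDeriv μ w g g') {P : E → ℝ}
    (hP : ContDiff ℝ 1 P) :
    HasWeakDirDeriv μ w (fun x => g x * P x) (fun x => g' x * P x + g x * fderiv ℝ P x w) := by
  have hDP : Continuous fun x => fderiv ℝ P x w :=
    (hP.continuous_fderiv (by simp)).clm_apply continuous_const
  have hgDP : LocallyIntegrable (fun x => g x * fderiv ℝ P x w) μ :=
    hg.locallyIntegrable.mul_continuous hDP
  have hg'P := hg.locallyIntegrable_deriv.mul_continuous hP.continuous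
  refine ⟨hg.locallyIntegrable.mul_continuous hP.continuous, hg'P.add hgDP, fun ψ hψ hc => ?_⟩
  have hDψ : Continuous fun x => fderiv ℝ ψ x w :=
    (hψ.continuous_fderiv (by simp)).clm_apply continuous_const
  have int_Dψ : Integrable (fun x => g x * (P x * fderiv ℝ ψ x w)) μ :=
    hg.locallyIntegrable.integrable_smul_right_of_hasCompactSupport
      (hP.continuous.mul hDψ) (hc.fderiv_apply ℝ w).mul_left
  have int_DP : Integrable (fun x => g x * (ψ x * fderiv ℝ P x w)) μ :=
    hg.locallyIntegrable.integrable_smul_right_of_hasCompactSupport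
      (hψ.continuous.mul hDP) hc.mul_right
  have int_g' : Integrable (fun x => g' x * (ψ x * P x)) μ :=
    hg.locallyIntegrable_deriv.integrable_smul_right_of_hasCompactSupport
      (hψ.continuous.mul hP.continuous) hc.mul_right
  have hprod (x : E) : fderiv ℝ (fun x => ψ x * P x) x w =
      P x * fderiv ℝ ψ x w + ψ x * fderiv ℝ P x w := by
    rw [fderiv_fun_mul (hψ.differentiable (by simp) x) (hP.differentiable (by simp) x)]
    simp [add_comm]
  have h := hg.integral_mul_fderiv (fun x => ψ x * P x) (hψ.mul hP) hc.mul_right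
  simp only [hprod, mul_add, integral_add int_Dψ int_DP] at h
  calc ∫ x, g x * P x * fderiv ℝ ψ x w ∂μ = ∫ x, g x * (P x * fderiv ℝ ψ x w) ∂μ := by
        simp only [mul_assoc]
    _ = -(∫ x, g' x * (ψ x * P x) ∂μ + ∫ x, g x * (ψ x * fderiv ℝ P x w) ∂μ) := by
        rw [eq_neg_iff_add_eq_zero, ← add_assoc, add_right_comm, h]
        simp only [mul_comm (g' _)]; ring
    _ = -∫ x, ψ x * (g' x * P x + g x * fderiv ℝ P x w) ∂μ := by
        rw [← integral_add int_g' int_DP]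
        congr! 3; ring

variable [FiniteDimensional ℝ E] [μ.IsAddHaarMeasure]

/-- The test function is `t ↦ ψ (x - t)`. -/
lemma fderiv_convolution (hg : HasWeakDirDeriv μ w g g') {ψ : E → ℝ} (hψ : ContDiff ℝ 1 ψ)
    (hc : HasCompactSupport ψ) (x : E) :
    fderiv ℝ (g ⋆[.mul ℝ ℝ, μ] ψ) x w = (g' ⋆[.mul ℝ ℝ, μ] ψ) x := by
  rw [(hc.hasFDerivAt_convolution_right (.mul ℝ ℝ) hg.locallyIntegrable hψ x).fderiv,
    convolution_precompR_apply _ hg.locallyIntegrable (hc.fderiv ℝ)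
      (hψ.continuous_fderiv (by simp))]
  have htest := hg.integral_mul_fderiv (fun t => ψ (x - t))
    (hψ.comp (contDiff_const.sub contDiff_id)) (hc.comp_homeomorph (Homeomorph.subLeft x))
  have hderiv (t : E) : fderiv ℝ (fun t => ψ (x - t)) t w = - fderiv ℝ ψ (x - t) w := by
    have := ((hψ.differentiable (by simp) (x - t)).hasFDerivAt.comp t
      ((hasFDerivAt_id t).const_sub x)).fderiv
    simpa [Function.comp_def] using congrArg (· w) this
  simp only [hderiv, mul_neg, integral_neg, neg_inj] at htest
  simpa only [convolution_def, ContinuousLinearMap.mul_apply', mul_comm (ψ _)] using htest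

lemma convolution_sub_eq_integral (hg : HasWeakDirDeriv μ w g g') {ψ : E → ℝ} (hψ : ContDiff ℝ 1 ψ)
    (hc : HasCompactSupport ψ) (x : E) (h : ℝ) :
    (g ⋆[.mul ℝ ℝ, μ] ψ) (x + h • w) - (g ⋆[.mul ℝ ℝ, μ] ψ) x =
      ∫ s in 0..h, (g' ⋆[.mul ℝ ℝ, μ] ψ) (x + s • w) := by
  have hderiv (s : ℝ) : HasDerivAt (fun s : ℝ => (g ⋆[.mul ℝ ℝ, μ] ψ) (x + s • w))
      ((g' ⋆[.mul ℝ ℝ, μ] ψ) (x + s • w)) s := by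
    have hline : HasDerivAt (fun s : ℝ => x + s • w) w s := by
      simpa using ((hasDerivAt_id s).smul_const w).const_add x
    rw [← hg.fderiv_convolution hψ hc]
    exact (hc.hasFDerivAt_convolution_right (.mul ℝ ℝ) hg.locallyIntegrable hψ
      _).differentiableAt.hasFDerivAt.comp_hasDerivAt s hline
  have hcont : Continuous (g' ⋆[.mul ℝ ℝ, μ] ψ) :=
    hc.continuous_convolution_right _ hg.locallyIntegrable_deriv hψ.continuous
  simpa using (intervalIntegral.integral_eq_sub_of_hasDerivAt (fun s _ => hderiv s)
    (Continuous.intervalIntegrable (by fun_prop) 0 h)).symm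

lemma ae_sub_eq_integral (hg : HasWeakDirDeriv μ w g g') {h : ℝ} (hh : 0 ≤ h) :
    ∀ᵐ x ∂μ, g (x + h • w) - g x = ∫ s in 0..h, g' (x + s • w) := by
  have hshift : LocallyIntegrable (fun x => g (x + h • w)) μ := by
    refine (locallyIntegrable_map_homeomorph (Homeomorph.addRight (h • w))).1 ?_
    exact (map_add_right_eq_self μ (h • w)).symm ▸ hg.locallyIntegrable
  have hI : LocallyIntegrable (fun x => ∫ s in 0..h, g' (x + s • w)) μ := by
    simp only [intervalIntegral.integral_of_le hh, ← integral_Icc_eq_integral_Ioc]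
    exact locallyIntegrable_iff.2 fun k hk => (integrable_restrict_prod_add_smul
      hg.locallyIntegrable_deriv w hk isCompact_Icc).integral_prod_left
  refine ae_eq_of_integral_contDiff_smul_eq (hshift.sub hg.locallyIntegrable) hI fun φ hφ hc => ?_
  have hφ1 : ContDiff ℝ 1 φ := hφ.of_le (by simp)
  have hconv := hg.convolution_sub_eq_integral (ψ := fun x => φ (-x)) (hφ1.comp contDiff_neg)
    (hc.comp_homeomorph (Homeomorph.neg E)) 0 h
  have hat (u : E → ℝ) (s : ℝ) :
      (u ⋆[.mul ℝ ℝ, μ] fun x => φ (-x)) (0 + s • w) = ∫ x, φ x * u (x + s • w) ∂μ := by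
    simp only [convolution_def, ContinuousLinearMap.mul_apply']
    rw [← integral_add_right_eq_self _ (s • w)]
    simp [mul_comm]
  have hzero := hat g 0
  simp only [zero_smul, add_zero] at hzero
  simp only [hat, hzero] at hconv
  have int_φ (u : E → ℝ) (hu : LocallyIntegrable u μ) :
      Integrable (fun x => φ x * u x) μ :=
    hu.integrable_smul_left_of_hasCompactSupport hφ1.continuous hc
  simp only [smul_eq_mul, mul_sub]
  rw [integral_sub (int_φ _ hshift) (int_φ _ hg.locallyIntegrable), hconv,
    integral_integral_mul_add_smul hg.locallyIntegrable_deriv w hφ1.continuous hc hh]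

lemma ae_nonneg_of_eq_zero (hg : HasWeakDirDeriv μ w g g') (hgm : Measurable g)
    (hgm' : Measurable g') (hg0 : ∀ x, 0 ≤ g x) : ∀ᵐ x ∂μ, g x = 0 → 0 ≤ g' x := by
  have hftc (k : ℕ) := hg.ae_sub_eq_integral (h := 1 / ((k : ℝ) + 1)) (by positivity)
  refine ae_of_ae_ae_add_smul w (.imp (measurableSet_eq_fun hgm measurable_const)
    (measurableSet_le measurable_const hgm')) ?_
  filter_upwards [ae_ae_add_smul w (ae_all_iff.2 hftc),
    ae_locallyIntegrable_add_smul hg.locallyIntegrable_deriv w] with z hz hloc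
  filter_upwards [hz, LocallyIntegrable.ae_hasDerivAt_integral hloc] with s hs hderiv hzero
  have hseq : Tendsto (fun k : ℕ => s + 1 / ((k : ℝ) + 1)) atTop (𝓝[≠] s) := by
    refine tendsto_nhdsWithin_iff.2 ⟨?_, Eventually.of_forall fun k => ?_⟩
    · simpa using (tendsto_one_div_add_atTop_nhds_zero_nat (𝕜 := ℝ)).const_add s
    · simpa using (Nat.cast_add_one_pos (α := ℝ) k).ne'
  refine ge_of_tendsto ((hderiv s).tendsto_slope.comp hseq) (Eventually.of_forall fun k => ?_)
  have hint : ∫ t in s..(s + 1 / ((k : ℝ) + 1)), g' (z + t • w) =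
      g (z + s • w + (1 / ((k : ℝ) + 1)) • w) := by
    rw [← sub_zero (g (_ + _)), ← hzero, hs k]
    simpa only [add_zero, add_smul, add_assoc] using
      (intervalIntegral.integral_comp_add_left (a := 0) (b := 1 / ((k : ℝ) + 1))
        (fun t => g' (z + t • w)) s).symm
  have hnonneg := hg0 (z + s • w + (1 / ((k : ℝ) + 1)) • w)
  simp only [Function.comp, slope_def_field, intervalIntegral.integral_same, hint, sub_zero,
    add_sub_cancel_left]
  positivity

lemma ae_eq_const (hg : ∀ w, HasWeakDirDeriv μ w g 0) (hgm : Measurable g) :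
    ∀ᵐ y ∂μ, ∀ᵐ x ∂μ, g x = g y := by
  have hinv (y : E) : ∀ᵐ x ∂μ, g (x + y) = g x := by
    filter_upwards [(hg y).ae_sub_eq_integral zero_le_one] with x hx
    simpa [sub_eq_zero] using hx
  have hswap : ∀ᵐ x ∂μ, ∀ᵐ y ∂μ, g (x + y) = g x := by
    rw [← Measure.ae_ae_comm (p := fun y x => g (x + y) = g x)]
    · exact Eventually.of_forall hinv
    · exact measurableSet_eq_fun (by fun_prop) (by fun_prop)
  filter_upwards [hswap] with x hx
  have hshift := (measurePreserving_add_left μ (-x)).quasiMeasurePreserving.ae hx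
  simpa using hshift

end HasWeakDirDeriv

lemma MemW.ae_inner_eq_zero {n : ℕ} {f : En n → ℝ} {f' : En n → En n} (hW : MemW f f')
    (hf : Measurable f) (hf' : Measurable f') (w : En n) :
    ∀ᵐ x, f x = 0 → ⟪w, f' x⟫ = 0 := by
  have hnonneg (w : En n) : ∀ᵐ x, f x = 0 → 0 ≤ ⟪w, f' x⟫ :=
    (hW.2.2.hasWeakDirDeriv w).ae_nonneg_of_eq_zero hf (by fun_prop) hW.1
  filter_upwards [hnonneg w, hnonneg (-w)] with x hw hneg hx
  have hneg := hneg hx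
  rw [inner_neg_left] at hneg
  linarith [hw hx]

end WeakDirDeriv

/-! ### Tails and the one-dimensional symmetrization -/

section Tail

variable {φ : ℝ → ℝ}

/-- The upper tail `∫_s^∞ φ`. A set `A` is symmetrized, with respect to the measure of density `φ`,
to the half-line on which the tail does not exceed the mass of `A`. -/
def tail (φ : ℝ → ℝ) (s : ℝ) : ℝ := ∫ u in Ioi s, φ u

lemma tail_sub_tail (hφ : Integrable φ) (a b : ℝ) : tail φ a - tail φ b = ∫ u in a..b, φ u :=
  sub_eq_of_eq_add
    (intervalIntegral.integral_interval_add_Ioi hφ.integrableOn hφ.integrableOn).symm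

lemma tail_antitone (hφ : Integrable φ) (hφ0 : ∀ s, 0 ≤ φ s) : Antitone (tail φ) := by
  intro a b hab
  rw [← sub_nonneg, tail_sub_tail hφ]
  exact intervalIntegral.integral_nonneg hab fun u _ => hφ0 u

lemma continuous_tail (hφ : Integrable φ) : Continuous (tail φ) := by
  have htail : tail φ = fun s => tail φ 0 - ∫ u in (0 : ℝ)..s, φ u := by
    ext s
    linarith [tail_sub_tail hφ 0 s]
  rw [htail]
  exact continuous_const.sub
    (intervalIntegral.continuous_primitive (fun a b => hφ.intervalIntegrable) 0)

/-- Where the tail is constant to the right of `s`, its derivative `-φ s` vanishes. -/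
lemma ae_tail_add_lt_tail (hφ : Integrable φ) (hφ0 : ∀ s, 0 ≤ φ s) :
    ∀ᵐ s, φ s ≠ 0 → ∀ h > 0, tail φ (s + h) < tail φ s := by
  filter_upwards [LocallyIntegrable.ae_hasDerivAt_integral hφ.locallyIntegrable]
    with s hderiv hne h hh
  by_contra! hle
  have hconst (u) (hu : u ∈ Icc s (s + h)) : ∫ t in s..u, φ t = ∫ t in s..s, φ t := by
    have hleft := tail_antitone hφ hφ0 hu.1
    have hright := tail_antitone hφ hφ0 hu.2
    rw [← tail_sub_tail hφ, ← tail_sub_tail hφ]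
    linarith
  have hzero : HasDerivWithinAt (fun x => ∫ t in s..x, φ t) 0 (Icc s (s + h)) s :=
    (hasDerivWithinAt_const s _ (∫ t in s..s, φ t)).congr hconst rfl
  have huniq := uniqueDiffOn_Icc (show s < s + h by linarith) s ⟨le_rfl, by linarith⟩
  exact hne (huniq.eq_deriv _ (hderiv s).hasDerivWithinAt hzero)

lemma tail_comp_const_add (φ : ℝ → ℝ) (s : ℝ) : tail (fun u => φ (s + u)) 0 = tail φ s := by
  unfold tail
  rw [← integral_indicator measurableSet_Ioi, ← integral_indicator measurableSet_Ioi,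
    ← integral_add_left_eq_self ((Ioi s).indicator _) s]
  simp only [indicator, mem_Ioi, lt_add_iff_pos_right]

lemma mem_ehrhard1D_iff (hφ : Integrable φ) (hφ0 : ∀ s, 0 ≤ φ s) {A : Set ℝ}
    (hA : MeasurableSet A) {y : ℝ} :
    y ∈ ehrhard1D (volume.withDensity fun t => ENNReal.ofReal (φ t)) 1 A ↔
      tail φ y ≤ ∫ u in A, φ u := by
  have hmass (B : Set ℝ) (hB : MeasurableSet B) :
      (volume.withDensity fun t => ENNReal.ofReal (φ t)) B = ENNReal.ofReal (∫ u in B, φ u) := by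
    rw [withDensity_apply _ hB, ofReal_integral_eq_lintegral_ofReal hφ.integrableOn
      (Eventually.of_forall hφ0)]
  have hmass_le (c : ℝ) : (volume.withDensity fun t => ENNReal.ofReal (φ t)) {y | c ≤ 1 * y} ≤
      (volume.withDensity fun t => ENNReal.ofReal (φ t)) A ↔ tail φ c ≤ ∫ u in A, φ u := by
    have hIci : {y : ℝ | c ≤ 1 * y} = Ici c := by ext; simp
    rw [hIci, hmass _ measurableSet_Ici, hmass _ hA, integral_Ici_eq_integral_Ioi,
      ENNReal.ofReal_le_ofReal_iff (integral_nonneg hφ0), tail]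
  simp only [ehrhard1D, mem_ofPred_eq, hmass_le]
  rw [one_mul]
  refine ⟨fun h => ?_, fun h b hb => hb y h⟩
  by_contra! hlt
  have hright : ∀ᶠ y' in 𝓝[>] y, ∫ u in A, φ u < tail φ y' :=
    ((continuous_tail hφ).continuousAt.eventually (lt_mem_nhds hlt)).filter_mono
      nhdsWithin_le_nhds
  obtain ⟨y', hy', hyy'⟩ := (hright.and self_mem_nhdsWithin).exists
  refine hyy'.not_ge (h y' fun c hc => ?_)
  by_contra! hcy
  exact (hy'.trans_le (tail_antitone hφ hφ0 hcy.le)).not_ge hc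

end Tail

section LineTail

variable {E : Type*} [NormedAddCommGroup E] [NormedSpace ℝ E]

/-- The mass that `f` puts on the half-line from `x` in direction `v`. -/
def lineTail (f : E → ℝ) (v x : E) : ℝ := tail (fun u => f (x + u • v)) 0

/-- The mass that `f` puts on the part of `S` in the line through `x` in direction `v`. -/
def lineMass (f : E → ℝ) (v : E) (S : Set E) (x : E) : ℝ := ∫ u : ℝ, S.indicator f (x + u • v)

lemma lineTail_add_smul (f : E → ℝ) (v x : E) (s : ℝ) :
    lineTail f v (x + s • v) = tail (fun u => f (x + u • v)) s := by
  rw [lineTail, ← tail_comp_const_add (fun u => f (x + u • v))]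
  simp only [add_smul, add_assoc]

lemma lineMass_add_smul (f : E → ℝ) (v : E) (S : Set E) (x : E) (s : ℝ) :
    lineMass f v S (x + s • v) = lineMass f v S x := by
  unfold lineMass
  rw [← integral_add_left_eq_self (fun u : ℝ => S.indicator f (x + u • v)) s]
  simp only [add_smul, add_assoc]

lemma measurable_lineTail [MeasurableSpace E] [BorelSpace E] [SecondCountableTopology E]
    {f : E → ℝ} (hf : Measurable f) (v : E) : Measurable (lineTail f v) := by
  have hline : StronglyMeasurable (fun q : E × ℝ => f (q.1 + q.2 • v)) :=
    (hf.comp (by fun_prop)).stronglyMeasurable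
  exact hline.integral_prod_right.measurable

end LineTail

lemma ae_lineTail_add_smul_lt {E : Type*} [NormedAddCommGroup E] [InnerProductSpace ℝ E]
    [FiniteDimensional ℝ E] [MeasurableSpace E] [BorelSpace E] {f : E → ℝ} {v : E}
    (hf : Measurable f) (hfi : Integrable f) (hf0 : ∀ x, 0 ≤ f x) (hv : ‖v‖ = 1) :
    ∀ᵐ x, f x ≠ 0 → ∀ h > (0 : ℝ), lineTail f v (x + h • v) < lineTail f v x := by
  have hT := measurable_lineTail hf v
  have hseq (k : ℕ) :
      ∀ᵐ x, f x ≠ 0 → lineTail f v (x + (1 / ((k : ℝ) + 1)) • v) < lineTail f v x := by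
    refine ae_of_ae_ae_add_smul v (.imp (measurableSet_eq_fun hf measurable_const).compl
      (measurableSet_lt (hT.comp (by fun_prop)) hT)) ?_
    filter_upwards [ae_integrable_add_smul hv hfi] with z hz
    filter_upwards [ae_tail_add_lt_tail hz (fun s => hf0 _)] with s hs hne
    rw [add_assoc, ← add_smul, lineTail_add_smul, lineTail_add_smul]
    exact hs hne _ Nat.one_div_pos_of_nat
  filter_upwards [ae_all_iff.2 hseq, ae_integrable_add_smul hv hfi] with x hx hi hne h hh
  obtain ⟨k, hk⟩ := exists_nat_one_div_lt (K := ℝ) hh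
  refine lt_of_le_of_lt ?_ (hx k hne)
  rw [lineTail_add_smul, lineTail_add_smul]
  exact tail_antitone hi (fun s => hf0 _) hk.le

lemma ehrhardSymm_ae_eq {n : ℕ} {f : En n → ℝ} {v : En n} {S : Set (En n)} (hfi : Integrable f)
    (hf0 : ∀ x, 0 ≤ f x) (hv : ‖v‖ = 1) (hS : MeasurableSet S) :
    ehrhardSymm f v S =ᵐ[volume] {x | lineTail f v x ≤ lineMass f v S x} := by
  filter_upwards [ae_integrable_add_smul hv hfi] with x hx
  obtain ⟨z, hz⟩ : ∃ z, z = x - ⟪x, v⟫ • v := ⟨_, rfl⟩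
  have hxz : x = z + ⟪x, v⟫ • v := by simp [hz]
  have hφ : Integrable (fun s : ℝ => f (z + s • v)) := by
    refine (hx.comp_sub_right ⟪x, v⟫).congr (Eventually.of_forall fun s => ?_)
    simp only [hz, sub_smul]
    congr 1
    abel
  have hA : MeasurableSet {t : ℝ | z + t • v ∈ S} :=
    (by fun_prop : Measurable fun t : ℝ => z + t • v) hS
  have hmass : lineMass f v S x = ∫ u in {t : ℝ | z + t • v ∈ S}, f (z + u • v) := by
    conv_lhs => rw [hxz, lineMass_add_smul, lineMass]
    rw [← integral_indicator hA]
    rfl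
  have htail : lineTail f v x = tail (fun s => f (z + s • v)) ⟪x, v⟫ := by
    conv_lhs => rw [hxz, lineTail_add_smul]
  refine propext ?_
  change ⟪x, v⟫ ∈ ehrhard1D (fiberMeasure f (x - ⟪x, v⟫ • v) v) 1
    {t | x - ⟪x, v⟫ • v + t • v ∈ S} ↔ lineTail f v x ≤ lineMass f v S x
  rw [← hz, fiberMeasure, mem_ehrhard1D_iff hφ (fun s => hf0 _) hA, htail, hmass]

/-! ### Perimeters of superlevel sets -/

section SmoothStep

/-- The derivative of the smooth step `x ↦ T ((k + 1) x)`, where `T` is the smooth transition. -/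
def stepDeriv (k : ℕ) (s : ℝ) : ℝ :=
  ((k : ℝ) + 1) * deriv Real.smoothTransition (((k : ℝ) + 1) * s)

lemma hasDerivAt_smoothStep (k : ℕ) (s : ℝ) :
    HasDerivAt (fun s => Real.smoothTransition (((k : ℝ) + 1) * s)) (stepDeriv k s) s := by
  have hT := (Real.smoothTransition.contDiff.differentiable one_ne_zero
    (((k : ℝ) + 1) * s)).hasDerivAt.comp s ((hasDerivAt_id s).const_mul ((k : ℝ) + 1))
  rwa [mul_one, mul_comm] at hT

lemma stepDeriv_nonneg (k : ℕ) (s : ℝ) : 0 ≤ stepDeriv k s :=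
  mul_nonneg (by positivity) Real.smoothTransition.monotone.deriv_nonneg

lemma continuous_stepDeriv (k : ℕ) : Continuous (stepDeriv k) := by
  have := (Real.smoothTransition.contDiff (n := 1)).continuous_deriv le_rfl
  unfold stepDeriv
  fun_prop

lemma smoothStep_of_nonpos (k : ℕ) {s : ℝ} (hs : s ≤ 0) :
    Real.smoothTransition (((k : ℝ) + 1) * s) = 0 :=
  Real.smoothTransition.zero_of_nonpos (mul_nonpos_of_nonneg_of_nonpos (by positivity) hs)

lemma smoothStep_of_one_le (k : ℕ) {s : ℝ} (hs : 1 ≤ s) :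
    Real.smoothTransition (((k : ℝ) + 1) * s) = 1 :=
  Real.smoothTransition.one_of_one_le (one_le_mul_of_one_le_of_one_le (by simp) hs)

lemma hasCompactSupport_stepDeriv (k : ℕ) : HasCompactSupport (stepDeriv k) := by
  refine .intro (isCompact_Icc (a := (0 : ℝ)) (b := 1)) fun s hs => ?_
  rw [← (hasDerivAt_smoothStep k s).deriv]
  rw [mem_Icc, not_and_or, not_le, not_le] at hs
  rcases hs with hs | hs
  · rw [(eventuallyEq_of_mem (Iio_mem_nhds hs)
      fun u hu => smoothStep_of_nonpos k (le_of_lt hu)).deriv_eq, deriv_const]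
  · rw [(eventuallyEq_of_mem (Ioi_mem_nhds hs)
      fun u hu => smoothStep_of_one_le k (le_of_lt hu)).deriv_eq, deriv_const]

lemma lintegral_stepDeriv (k : ℕ) (c : ℝ) :
    ∫⁻ r, ENNReal.ofReal (stepDeriv k (c - r)) = 1 := by
  have hi := (continuous_stepDeriv k).integrable_of_hasCompactSupport (μ := volume)
    (hasCompactSupport_stepDeriv k)
  have hbot : Tendsto (fun s => Real.smoothTransition (((k : ℝ) + 1) * s)) atBot (𝓝 0) :=
    tendsto_const_nhds.congr' <| (eventually_le_atBot 0).mono fun s hs =>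
      (smoothStep_of_nonpos k hs).symm
  have htop : Tendsto (fun s => Real.smoothTransition (((k : ℝ) + 1) * s)) atTop (𝓝 1) :=
    tendsto_const_nhds.congr' <| (eventually_ge_atTop 1).mono fun s hs =>
      (smoothStep_of_one_le k hs).symm
  rw [lintegral_sub_left_eq_self (fun r => ENNReal.ofReal (stepDeriv k r)) c,
    ← ofReal_integral_eq_lintegral_ofReal hi (Eventually.of_forall (stepDeriv_nonneg k)),
    integral_of_hasDerivAt_of_tendsto (hasDerivAt_smoothStep k) hi hbot htop]
  simp

lemma tendsto_smoothStep (s : ℝ) :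
    Tendsto (fun k : ℕ => Real.smoothTransition (((k : ℝ) + 1) * s)) atTop
      (𝓝 (if 0 < s then 1 else 0)) := by
  split_ifs with hs
  · have hlim : Tendsto (fun k : ℕ => ((k : ℝ) + 1) * s) atTop atTop :=
      (tendsto_atTop_add_const_right _ _ tendsto_natCast_atTop_atTop).atTop_mul_const hs
    exact tendsto_const_nhds.congr' <| (hlim.eventually_ge_atTop 1).mono fun k hk =>
      (Real.smoothTransition.one_of_one_le hk).symm
  · simp [smoothStep_of_nonpos _ (not_lt.1 hs)]

end SmoothStep

section Superlevel

variable {n : ℕ} {f : En n → ℝ} {f' φ : En n → En n} {U : En n → ℝ}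

/-- The integrand against which `μ`-variations test: the density of the divergence of `f φ`. -/
def weightedDvg (f : En n → ℝ) (f' φ : En n → En n) (x : En n) : ℝ := f x * dvg φ x + ⟪φ x, f' x⟫

lemma HasWeakGrad.integrable_weightedDvg (hf : HasWeakGrad f f') (hφ : ContDiff ℝ 1 φ)
    (hc : HasCompactSupport φ) : Integrable (weightedDvg f f' φ) :=
  (integrable_mul_dvg hf.1 hφ hc).add (hf.integrable_inner hφ.continuous hc)

lemma ofReal_integral_le_perim (hφ : IsTestField univ φ) (S : Set (En n)) :
    ENNReal.ofReal (∫ x, S.indicator (fun _ => (1 : ℝ)) x * weightedDvg f f' φ x) ≤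
      perim f f' univ S := by
  refine le_trans (le_of_eq ?_) (le_iSup₂ (f := fun (φ : En n → En n) (_ : IsTestField univ φ) =>
    ENNReal.ofReal (∫ x in univ, S.indicator (fun _ => (1 : ℝ)) x *
      (f x * dvg φ x + ⟪φ x, f' x⟫))) φ hφ)
  rw [setIntegral_univ]
  rfl

/-- Integrating by parts against the smooth step `T ((k + 1) (U - r))`. -/
lemma ofReal_integral_smoothStep_le (hW : MemW f f') (hU : ContDiff ℝ 1 U)
    (hφ : IsTestField univ φ) (k : ℕ) (r : ℝ) :
    ENNReal.ofReal (∫ x, Real.smoothTransition (((k : ℝ) + 1) * (U x - r)) *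
        weightedDvg f f' φ x) ≤
      ∫⁻ x, ENNReal.ofReal (f x * ‖fderiv ℝ U x‖) * ENNReal.ofReal (stepDeriv k (U x - r)) := by
  set P : En n → ℝ := fun x => Real.smoothTransition (((k : ℝ) + 1) * (U x - r))
  have hP : ContDiff ℝ 1 P :=
    Real.smoothTransition.contDiff.comp (contDiff_const.mul (hU.sub contDiff_const))
  have hDP (x : En n) : fderiv ℝ P x (φ x) = stepDeriv k (U x - r) * fderiv ℝ U x (φ x) := by
    have hchain := (hasDerivAt_smoothStep k (U x - r)).comp_hasFDerivAt x
      ((hU.differentiable one_ne_zero x).hasFDerivAt.sub_const r)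
    have hderiv : HasFDerivAt P (stepDeriv k (U x - r) • fderiv ℝ U x) x := hchain
    simp [hderiv.fderiv]
  calc ENNReal.ofReal (∫ x, P x * weightedDvg f f' φ x)
      = ENNReal.ofReal (∫ x, -(f x * fderiv ℝ P x (φ x))) := by
        rw [integral_neg, ← hW.2.2.integral_mul_dvg_add_inner hP hφ.1 hφ.2.1]
        rfl
    _ ≤ ∫⁻ x, ‖-(f x * fderiv ℝ P x (φ x))‖ₑ :=
        (ENNReal.ofReal_le_ofReal (le_abs_self _)).trans
          ((ofReal_norm _).le.trans (enorm_integral_le_lintegral_enorm _))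
    _ ≤ _ := lintegral_mono fun x => by
        rw [← ENNReal.ofReal_mul' (stepDeriv_nonneg _ _), ← ofReal_norm]
        refine ENNReal.ofReal_le_ofReal ?_
        have hDUx : ‖fderiv ℝ U x (φ x)‖ ≤ ‖fderiv ℝ U x‖ :=
          (fderiv ℝ U x).unit_le_opNorm _ (hφ.2.2.2 x)
        rw [norm_neg, hDP, norm_mul, norm_mul, Real.norm_of_nonneg (hW.1 x),
          Real.norm_of_nonneg (stepDeriv_nonneg _ _), mul_assoc, mul_comm (stepDeriv _ _)]
        exact mul_le_mul_of_nonneg_left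
          (mul_le_mul_of_nonneg_right hDUx (stepDeriv_nonneg _ _)) (hW.1 x)

lemma perim_superlevel_le (hW : MemW f f') (hU : ContDiff ℝ 1 U) (r : ℝ) :
    perim f f' univ {x | r < U x} ≤ liminf (fun k : ℕ => ∫⁻ x,
      ENNReal.ofReal (f x * ‖fderiv ℝ U x‖) * ENNReal.ofReal (stepDeriv k (U x - r))) atTop := by
  refine iSup₂_le fun φ hφ => ?_
  rw [setIntegral_univ]
  have hint := hW.2.2.integrable_weightedDvg hφ.1 hφ.2.1
  have hlim : Tendsto (fun k : ℕ => ∫ x, Real.smoothTransition (((k : ℝ) + 1) * (U x - r)) *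
      weightedDvg f f' φ x) atTop
      (𝓝 (∫ x, ({x | r < U x} : Set (En n)).indicator (fun _ => (1 : ℝ)) x *
        weightedDvg f f' φ x)) := by
    refine tendsto_integral_of_dominated_convergence (fun x => ‖weightedDvg f f' φ x‖)
      (fun k => ?_) hint.norm (fun k => Eventually.of_forall fun x => ?_)
      (Eventually.of_forall fun x => Tendsto.mul_const _ ?_)
    · exact (Real.smoothTransition.continuous.comp (continuous_const.mul
        (hU.continuous.sub continuous_const))).aestronglyMeasurable.mul hint.aestronglyMeasurable
    · rw [norm_mul, Real.norm_of_nonneg (Real.smoothTransition.nonneg _)]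
      exact mul_le_of_le_one_left (norm_nonneg _) (Real.smoothTransition.le_one _)
    · simpa [indicator] using tendsto_smoothStep (U x - r)
  refine ((ENNReal.continuous_ofReal.tendsto _).comp hlim).liminf_eq.ge.trans ?_
  exact liminf_le_liminf
    (Eventually.of_forall fun k => ofReal_integral_smoothStep_le hW hU hφ k r)

/-- Fatou's lemma applied to the smooth steps, whose derivatives have integral `1`. -/
lemma lintegral_perim_superlevel_le (hf : Measurable f) (hW : MemW f f') (hU : ContDiff ℝ 1 U) :
    ∫⁻ r, perim f f' univ {x | r < U x} ≤ ∫⁻ x, ENNReal.ofReal (f x * ‖fderiv ℝ U x‖) := by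
  have hmeas (k : ℕ) : Measurable (fun q : ℝ × En n =>
      ENNReal.ofReal (f q.2 * ‖fderiv ℝ U q.2‖) * ENNReal.ofReal (stepDeriv k (U q.2 - q.1))) := by
    have hstep := (continuous_stepDeriv k).measurable
    have hUm := hU.continuous.measurable
    fun_prop
  calc ∫⁻ r, perim f f' univ {x | r < U x}
      ≤ ∫⁻ r, liminf (fun k : ℕ => ∫⁻ x, ENNReal.ofReal (f x * ‖fderiv ℝ U x‖) *
          ENNReal.ofReal (stepDeriv k (U x - r))) atTop :=
        lintegral_mono fun r => perim_superlevel_le hW hU r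
    _ ≤ liminf (fun k : ℕ => ∫⁻ r, ∫⁻ x, ENNReal.ofReal (f x * ‖fderiv ℝ U x‖) *
          ENNReal.ofReal (stepDeriv k (U x - r))) atTop :=
        lintegral_liminf_le fun k => (hmeas k).lintegral_prod_right
    _ = liminf (fun _ : ℕ => ∫⁻ x, ENNReal.ofReal (f x * ‖fderiv ℝ U x‖)) atTop := by
        congr! 2 with k
        rw [lintegral_lintegral_swap (hmeas k).aemeasurable]
        refine lintegral_congr fun x => ?_
        rw [lintegral_const_mul' _ _ ENNReal.ofReal_ne_top, lintegral_stepDeriv, mul_one]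
    _ = ∫⁻ x, ENNReal.ofReal (f x * ‖fderiv ℝ U x‖) := liminf_const _

lemma ofReal_integral_le_lintegral_ofReal {X : Type*} [MeasurableSpace X] {μ : Measure X}
    {g : X → ℝ} (hg : Integrable g μ) :
    ENNReal.ofReal (∫ x, g x ∂μ) ≤ ∫⁻ x, ENNReal.ofReal (g x) ∂μ := by
  calc ENNReal.ofReal (∫ x, g x ∂μ) ≤ ENNReal.ofReal (∫ x, max (g x) 0 ∂μ) :=
        ENNReal.ofReal_le_ofReal (integral_mono hg hg.pos_part fun x => le_max_left _ _)
    _ = ∫⁻ x, ENNReal.ofReal (max (g x) 0) ∂μ :=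
        ofReal_integral_eq_lintegral_ofReal hg.pos_part
          (Eventually.of_forall fun x => le_max_right _ _)
    _ = ∫⁻ x, ENNReal.ofReal (g x) ∂μ := by simp

lemma integral_layers_mul_le (hf : Measurable f) (hW : MemW f f') (hU : ContDiff ℝ 1 U)
    (hUi : Integrable (fun x => f x * ‖fderiv ℝ U x‖)) {S : Set (En n × ℝ)} (hS : MeasurableSet S)
    (hperim : ∀ r, perim f f' univ {x | (x, r) ∈ S} ≤ perim f f' univ {x | r < U x})
    (hφ : IsTestField univ φ) (M : ℝ) :
    ∫ x, (∫ r in Ioc (-M) M, S.indicator (fun _ => (1 : ℝ)) (x, r)) * weightedDvg f f' φ x ≤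
      ∫ x, f x * ‖fderiv ℝ U x‖ := by
  have hint : Integrable (fun q : En n × ℝ =>
      S.indicator (fun _ => (1 : ℝ)) (q.1, q.2) * weightedDvg f f' φ q.1)
      (volume.prod (volume.restrict (Ioc (-M) M))) := by
    refine ((hW.2.2.integrable_weightedDvg hφ.1 hφ.2.1).comp_fst _).bdd_mul (c := 1)
      (measurable_const.indicator hS).aestronglyMeasurable (Eventually.of_forall fun q => ?_)
    exact (norm_indicator_le_norm_self _ _).trans (by simp)
  have hfU (x : En n) : 0 ≤ f x * ‖fderiv ℝ U x‖ :=
    mul_nonneg (hW.1 x) (norm_nonneg _)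
  have hswap := integral_integral_swap
    (f := fun x r => S.indicator (fun _ => (1 : ℝ)) (x, r) * weightedDvg f f' φ x) hint
  simp only [integral_mul_const] at hswap
  rw [hswap, ← ENNReal.ofReal_le_ofReal_iff (integral_nonneg hfU),
    ofReal_integral_eq_lintegral_ofReal hUi (Eventually.of_forall hfU)]
  calc _ ≤ ∫⁻ r in Ioc (-M) M,
        ENNReal.ofReal (∫ x, S.indicator (fun _ => (1 : ℝ)) (x, r) * weightedDvg f f' φ x) :=
        ofReal_integral_le_lintegral_ofReal hint.integral_prod_right
    _ ≤ ∫⁻ r in Ioc (-M) M, perim f f' univ {x | r < U x} :=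
        lintegral_mono fun r =>
          (ofReal_integral_le_perim hφ {x | (x, r) ∈ S}).trans (hperim r)
    _ ≤ ∫⁻ r, perim f f' univ {x | r < U x} := setLIntegral_le_lintegral _ _
    _ ≤ _ := lintegral_perim_superlevel_le hf hW hU

end Superlevel

/-! ### Rearrangement of a function by symmetrizing its superlevel sets -/

section Rearrangement

variable {φ g : ℝ → ℝ} {s r : ℝ}

/-- The mass of the superlevel set `{r < g}` for the density `φ`. -/
def superMass (φ g : ℝ → ℝ) (r : ℝ) : ℝ := ∫ u, {u | r < g u}.indicator φ u

/-- The indicator, at the point `s`, of the symmetrized superlevel set `{r < g}`. -/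
def layer (φ g : ℝ → ℝ) (s r : ℝ) : ℝ := if tail φ s ≤ superMass φ g r then 1 else 0

/-- The difference at `s` between the monotone rearrangement of `g`, obtained by symmetrizing each
of its superlevel sets, and `g` itself. Only the levels in `[0, 1]` are taken into account, as `g`
is meant to take its values there. -/
def rearrDefect (φ g : ℝ → ℝ) (s : ℝ) : ℝ := (∫ r in (0 : ℝ)..1, layer φ g s r) - g s

/-- A `C¹` function `g : ℝ → [0, 1]` which vanishes below `A` and equals `1` above `B`. -/
structure Profile (g : ℝ → ℝ) (A B : ℝ) : Prop where
  contDiff : ContDiff ℝ 1 g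
  nonneg : ∀ y, 0 ≤ g y
  le_one : ∀ y, g y ≤ 1
  eq_zero : ∀ y, y ≤ A → g y = 0
  eq_one : ∀ y, B ≤ y → g y = 1

lemma Profile.comp_const_add {A B : ℝ} (hg : Profile g A B) (c : ℝ) :
    Profile (fun u => g (c + u)) (A - c) (B - c) where
  contDiff := hg.contDiff.comp (contDiff_const.add contDiff_id)
  nonneg _ := hg.nonneg _
  le_one _ := hg.le_one _
  eq_zero _ hy := hg.eq_zero _ (by linarith)
  eq_one _ hy := hg.eq_one _ (by linarith)

lemma layer_nonneg (φ g : ℝ → ℝ) (s r : ℝ) : 0 ≤ layer φ g s r := by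
  unfold layer
  split_ifs <;> simp

lemma layer_le_one (φ g : ℝ → ℝ) (s r : ℝ) : layer φ g s r ≤ 1 := by
  unfold layer
  split_ifs <;> simp

lemma layer_comp_const_add (φ g : ℝ → ℝ) (s r : ℝ) :
    layer (fun u => φ (s + u)) (fun u => g (s + u)) 0 r = layer φ g s r := by
  unfold layer superMass
  rw [tail_comp_const_add, ← integral_add_left_eq_self ({u | r < g u}.indicator φ) s]
  rfl

lemma rearrDefect_comp_const_add (φ g : ℝ → ℝ) (s : ℝ) :
    rearrDefect (fun u => φ (s + u)) (fun u => g (s + u)) 0 = rearrDefect φ g s := by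
  simp only [rearrDefect, layer_comp_const_add, add_zero]

lemma abs_rearrDefect_le_one (φ : ℝ → ℝ) (hg0 : ∀ u, 0 ≤ g u) (hg1 : ∀ u, g u ≤ 1) (s : ℝ) :
    |rearrDefect φ g s| ≤ 1 := by
  have hnonneg : 0 ≤ ∫ r in (0 : ℝ)..1, layer φ g s r :=
    intervalIntegral.integral_nonneg zero_le_one fun r _ => layer_nonneg _ _ _ _
  have hnorm := intervalIntegral.norm_integral_le_of_norm_le_const (a := 0) (b := 1) (C := 1)
    (f := layer φ g s) fun r _ => by
      rw [Real.norm_of_nonneg (layer_nonneg _ _ _ _)]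
      exact layer_le_one _ _ _ _
  rw [Real.norm_of_nonneg hnonneg, sub_zero, abs_one, mul_one] at hnorm
  rw [rearrDefect, abs_le]
  constructor <;> linarith [hg0 s, hg1 s]

variable (hφ : Integrable φ) (hφ0 : ∀ s, 0 ≤ φ s) (hg : Measurable g)

include hφ hφ0 hg

lemma superMass_antitone : Antitone (superMass φ g) := fun _ _ hrr' =>
  integral_mono (hφ.indicator (measurableSet_lt measurable_const hg))
    (hφ.indicator (measurableSet_lt measurable_const hg))
    (indicator_le_indicator_of_subset (fun _ hu => hrr'.trans_lt hu) hφ0)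

lemma tail_le_superMass (h : ∀ u > s, r < g u) : tail φ s ≤ superMass φ g r := by
  rw [tail, ← integral_indicator measurableSet_Ioi]
  exact integral_mono (hφ.indicator measurableSet_Ioi)
    (hφ.indicator (measurableSet_lt measurable_const hg))
    (indicator_le_indicator_of_subset h hφ0)

lemma superMass_le_tail (h : ∀ u, r < g u → s < u) : superMass φ g r ≤ tail φ s := by
  rw [tail, ← integral_indicator measurableSet_Ioi]
  exact integral_mono (hφ.indicator (measurableSet_lt measurable_const hg))
    (hφ.indicator measurableSet_Ioi) (indicator_le_indicator_of_subset h hφ0)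

lemma layer_antitone (s : ℝ) : Antitone (layer φ g s) := by
  intro r r' hrr'
  by_cases h : tail φ s ≤ superMass φ g r'
  · rw [layer, layer, if_pos h, if_pos (h.trans (superMass_antitone hφ hφ0 hg hrr'))]
  · rw [layer, if_neg h]
    exact layer_nonneg _ _ _ _

lemma measurable_rearrDefect : Measurable (rearrDefect φ g) := by
  have hset : MeasurableSet {q : ℝ × ℝ | tail φ q.1 ≤ superMass φ g q.2} :=
    measurableSet_le ((continuous_tail hφ).measurable.comp measurable_fst)
      ((superMass_antitone hφ hφ0 hg).measurable.comp measurable_snd)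
  have hlayer : StronglyMeasurable (fun q : ℝ × ℝ => layer φ g q.1 q.2) :=
    (Measurable.ite hset measurable_const measurable_const).stronglyMeasurable
  unfold rearrDefect
  simp only [intervalIntegral.integral_of_le zero_le_one]
  exact (hlayer.integral_prod_right' (ν := volume.restrict (Ioc (0 : ℝ) 1))).measurable.sub hg

lemma layer_eq_one (h : ∀ u > s, r < g u) : layer φ g s r = 1 :=
  if_pos (tail_le_superMass hφ hφ0 hg h)

lemma layer_eq_zero (hs : ∀ h > 0, tail φ (s + h) < tail φ s) {h : ℝ} (hh : 0 < h)
    (hr : ∀ u, r < g u → s + h < u) : layer φ g s r = 0 :=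
  if_neg ((superMass_le_tail hφ hφ0 hg hr).trans_lt (hs h hh)).not_ge

omit hg in
lemma Profile.rearrDefect_eq_zero {A B : ℝ} (hg : Profile g A B)
    (hs : ∀ h > 0, tail φ (s + h) < tail φ s) (hsAB : s ∉ Icc A B) : rearrDefect φ g s = 0 := by
  have hgm := hg.contDiff.continuous.measurable
  rw [rearrDefect, intervalIntegral.integral_of_le zero_le_one, integral_Ioc_eq_integral_Ioo]
  rw [mem_Icc, not_and_or, not_le, not_le] at hsAB
  rcases hsAB with hsA | hBs
  · have hlayer (r) (hr : r ∈ Ioo (0 : ℝ) 1) : layer φ g s r = 0 := by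
      refine layer_eq_zero hφ hφ0 hgm hs (sub_pos.2 hsA) fun u hu => ?_
      by_contra! hle
      rw [hg.eq_zero u (by linarith)] at hu
      exact hu.not_gt hr.1
    simp [setIntegral_congr_fun measurableSet_Ioo hlayer, hg.eq_zero s hsA.le]
  · have hlayer (r) (hr : r ∈ Ioo (0 : ℝ) 1) : layer φ g s r = 1 := by
      refine layer_eq_one hφ hφ0 hgm fun u hu => ?_
      rw [hg.eq_one u (hBs.trans hu).le]
      exact hr.2
    simp [setIntegral_congr_fun measurableSet_Ioo hlayer, hg.eq_one s hBs.le]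

/-- The superlevel sets of `t + c g` are those of `g` for levels in `(t, t + c)`, everything below
and nothing above. -/
lemma integral_layer_affine (hg0 : ∀ u, 0 ≤ g u) (hg1 : ∀ u, g u ≤ 1)
    (hs : ∀ h > 0, tail φ (s + h) < tail φ s) {c t M : ℝ} (hc : 0 ≤ c) (htM : -M ≤ t)
    (hMt : t + c ≤ M) :
    ∫ r in (-M)..M, layer φ (fun u => t + c * g u) s r =
      c * rearrDefect φ g s + (t + c * g s + M) := by
  have hGm : Measurable (fun u => t + c * g u) := by fun_prop
  have hint (a b : ℝ) : IntervalIntegrable (layer φ (fun u => t + c * g u) s) volume a b :=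
    (layer_antitone hφ hφ0 hGm s).intervalIntegrable
  have hbelow : ∫ r in (-M)..t, layer φ (fun u => t + c * g u) s r = t + M := by
    rw [intervalIntegral.integral_of_le htM, integral_Ioc_eq_integral_Ioo,
      setIntegral_congr_fun (g := fun _ => (1 : ℝ)) measurableSet_Ioo fun r hr =>
        layer_eq_one hφ hφ0 hGm fun u _ =>
          lt_add_of_lt_of_nonneg hr.2 (mul_nonneg hc (hg0 u))]
    simp [show 0 ≤ t + M by linarith]
  have habove : ∫ r in (t + c)..M, layer φ (fun u => t + c * g u) s r = 0 := by
    rw [intervalIntegral.integral_of_le hMt]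
    refine setIntegral_eq_zero_of_forall_eq_zero fun r hr =>
      layer_eq_zero hφ hφ0 hGm hs one_pos fun u hu => ?_
    linarith [hr.1, mul_le_of_le_one_right hc (hg1 u)]
  have hmiddle : ∫ r in t..(t + c), layer φ (fun u => t + c * g u) s r =
      c * ∫ r in (0 : ℝ)..1, layer φ g s r := by
    rcases hc.eq_or_lt with rfl | hc
    · simp
    have hsubst := intervalIntegral.smul_integral_comp_add_mul (a := 0) (b := 1)
      (layer φ (fun u => t + c * g u) s) c t
    rw [mul_zero, add_zero, mul_one, smul_eq_mul] at hsubst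
    rw [← hsubst]
    simp only [layer, superMass, add_lt_add_iff_left, mul_lt_mul_iff_right₀ hc]
    rfl
  rw [← intervalIntegral.integral_add_adjacent_intervals (hint (-M) t) (hint t M),
    ← intervalIntegral.integral_add_adjacent_intervals (hint t (t + c)) (hint _ M),
    hbelow, hmiddle, habove, rearrDefect]
  ring

end Rearrangement

section LineRearrangement

variable {E : Type*} [NormedAddCommGroup E] [InnerProductSpace ℝ E]

/-- `rearrDefect` for the function `x ↦ g ⟪x, v⟫` on each line in direction `v`, weighted by `f`. -/
def lineDefect (f : E → ℝ) (v : E) (g : ℝ → ℝ) (x : E) : ℝ :=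
  rearrDefect (fun u => f (x + u • v)) (fun u => g (⟪x, v⟫ + u)) 0

lemma lineDefect_add_smul {v : E} (hv : ‖v‖ = 1) (f : E → ℝ) (g : ℝ → ℝ) (x : E) (s : ℝ) :
    lineDefect f v g (x + s • v) =
      rearrDefect (fun u => f (x + u • v)) (fun u => g (⟪x, v⟫ + u)) s := by
  rw [← rearrDefect_comp_const_add]
  simp only [lineDefect, inner_add_smul_self hv, add_smul, add_assoc]

lemma Profile.abs_lineDefect_le_one {g : ℝ → ℝ} {A B : ℝ} (hg : Profile g A B) (f : E → ℝ)
    (v x : E) : |lineDefect f v g x| ≤ 1 :=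
  abs_rearrDefect_le_one _ (fun _ => hg.nonneg _) (fun _ => hg.le_one _) 0

/-- The set whose section at level `r` is the symmetrization of `{r < U}` along `v`. -/
def symmSubgraph (f : E → ℝ) (v : E) (U : E → ℝ) : Set (E × ℝ) :=
  {q | lineTail f v q.1 ≤ lineMass f v {x | q.2 < U x} q.1}

lemma indicator_symmSubgraph (f : E → ℝ) (v : E) (U : E → ℝ) (x : E) (r : ℝ) :
    (symmSubgraph f v U).indicator (fun _ => (1 : ℝ)) (x, r) =
      layer (fun u => f (x + u • v)) (fun u => U (x + u • v)) 0 r := by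
  classical
  rw [indicator_apply]
  rfl

variable [MeasurableSpace E] [BorelSpace E] [SecondCountableTopology E]

lemma measurableSet_symmSubgraph {f U : E → ℝ} (hf : Measurable f) (v : E) (hU : Measurable U) :
    MeasurableSet (symmSubgraph f v U) := by
  have hset : MeasurableSet {p : (E × ℝ) × ℝ | p.1.2 < U (p.1.1 + p.2 • v)} :=
    measurableSet_lt (by fun_prop) (hU.comp (by fun_prop))
  have hline : Measurable (fun p : (E × ℝ) × ℝ => f (p.1.1 + p.2 • v)) := hf.comp (by fun_prop)
  have hmass : Measurable (fun q : E × ℝ => lineMass f v {x | q.2 < U x} q.1) :=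
    (hline.indicator hset).stronglyMeasurable.integral_prod_right'.measurable
  exact measurableSet_le ((measurable_lineTail hf v).comp measurable_fst) hmass

lemma measurable_lineDefect {f : E → ℝ} {g : ℝ → ℝ} (hf : Measurable f) {v : E} (hv : ‖v‖ = 1)
    (hg : Measurable g) : Measurable (lineDefect f v g) := by
  have hU : Measurable (fun x : E => g ⟪x, v⟫) := hg.comp (by fun_prop)
  have hlayer := (measurable_const (a := (1 : ℝ)).indicator
    (measurableSet_symmSubgraph hf v hU)).stronglyMeasurable
  have hdefect : lineDefect f v g = fun x =>
      (∫ r in Ioc (0 : ℝ) 1, (symmSubgraph f v fun x => g ⟪x, v⟫).indicator (fun _ => (1 : ℝ))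
        (x, r)) - g ⟪x, v⟫ := by
    ext x
    simp only [lineDefect, rearrDefect, indicator_symmSubgraph, inner_add_smul_self hv, add_zero,
      intervalIntegral.integral_of_le zero_le_one]
  rw [hdefect]
  exact (hlayer.integral_prod_right' (ν := volume.restrict (Ioc (0 : ℝ) 1))).measurable.sub hU

end LineRearrangement

/-! ### First variation -/

section Ridge

variable {E : Type*} [NormedAddCommGroup E] [InnerProductSpace ℝ E] {v w : E}

lemma norm_innerSL_add_le [CompleteSpace E] (hw : ‖w‖ = 1) {L : E →L[ℝ] ℝ} (hL : ‖L‖ ≤ 1 / 2) :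
    ‖innerSL ℝ w + L‖ ≤ 1 + L w + ‖L‖ ^ 2 := by
  obtain ⟨p, rfl⟩ := (InnerProductSpace.toDual ℝ E).surjective L
  have hwp : innerSL ℝ w + InnerProductSpace.toDual ℝ E p =
      InnerProductSpace.toDual ℝ E (w + p) := by
    ext y
    simp
  rw [hwp]
  simp only [LinearIsometryEquiv.norm_map, InnerProductSpace.toDual_apply_apply] at hL ⊢
  have hpw := (abs_real_inner_le_norm p w).trans_eq (by rw [hw, mul_one])
  have hlow : 1 / 2 ≤ 1 + ⟪p, w⟫ := by linarith [neg_le_of_abs_le hpw]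
  refine le_of_sq_le_sq ?_ (by positivity)
  rw [norm_add_sq_real, hw, real_inner_comm p w]
  nlinarith [sq_nonneg ⟪p, w⟫, sq_nonneg ‖p‖, sq_nonneg (‖p‖ ^ 2)]

/-- The linear function `⟪·, w⟫` perturbed by `ε Θ`; its superlevel sets are perturbed
half-spaces. -/
def tilt (w : E) (ε : ℝ) (Θ : E → ℝ) (x : E) : ℝ := ⟪x, w⟫ + ε * Θ x

lemma contDiff_tilt {Θ : E → ℝ} (hΘ : ContDiff ℝ 1 Θ) (w : E) (ε : ℝ) :
    ContDiff ℝ 1 (tilt w ε Θ) :=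
  (contDiff_id.inner ℝ contDiff_const).add (contDiff_const.mul hΘ)

lemma fderiv_tilt {Θ : E → ℝ} (hΘ : ContDiff ℝ 1 Θ) (w : E) (ε : ℝ) (x : E) :
    fderiv ℝ (tilt w ε Θ) x = innerSL ℝ w + ε • fderiv ℝ Θ x := by
  have h := (innerSL ℝ w).hasFDerivAt.add
    ((hΘ.differentiable one_ne_zero x).hasFDerivAt.const_mul ε)
  have htilt : tilt w ε Θ = ⇑(innerSL ℝ w) + fun y => ε * Θ y := by
    ext y
    simp [tilt, real_inner_comm]
  rw [htilt, h.fderiv]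

lemma Profile.exists_lipschitzWith {g : ℝ → ℝ} {A B : ℝ} (hg : Profile g A B) :
    ∃ K, LipschitzWith K g := by
  have hsupp : HasCompactSupport (fderiv ℝ g) := by
    refine HasCompactSupport.intro (K := Icc A B) isCompact_Icc fun s hs => ?_
    rw [mem_Icc, not_and_or, not_le, not_le] at hs
    rcases hs with hsA | hBs
    · have hloc : g =ᶠ[𝓝 s] fun _ => 0 := by
        filter_upwards [Iio_mem_nhds hsA] with u hu using hg.eq_zero u (le_of_lt hu)
      rw [hloc.fderiv_eq, fderiv_fun_const, Pi.zero_apply]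
    · have hloc : g =ᶠ[𝓝 s] fun _ => 1 := by
        filter_upwards [Ioi_mem_nhds hBs] with u hu using hg.eq_one u (le_of_lt hu)
      rw [hloc.fderiv_eq, fderiv_fun_const, Pi.zero_apply]
  obtain ⟨C, hC⟩ :=
    (hg.contDiff.continuous_fderiv one_ne_zero).bounded_above_of_compact_support hsupp
  exact ⟨C.toNNReal, lipschitzWith_of_nnnorm_fderiv_le
    (hg.contDiff.differentiable one_ne_zero) fun x => NNReal.coe_le_coe.1 <| by
      rw [coe_nnnorm, Real.coe_toNNReal _ ((norm_nonneg _).trans (hC x))]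
      exact hC x⟩

/-- The transition `g` across the hyperplanes orthogonal to `v`, localized by `θ` to the lines
over a bounded set of `v^⊥`. -/
def ridge (θ : (ℝ ∙ v)ᗮ → ℝ) (g : ℝ → ℝ) (x : E) : ℝ := θ (perpProj v x) * g ⟪x, v⟫

/-- The defect, to first order in `ε`, between `tilt w ε (ridge θ g)` and its symmetrization. -/
def ridgeDefect (f : E → ℝ) (θ : (ℝ ∙ v)ᗮ → ℝ) (g : ℝ → ℝ) (x : E) : ℝ :=
  θ (perpProj v x) * lineDefect f v g x

variable {f : E → ℝ} {θ : (ℝ ∙ v)ᗮ → ℝ} {g : ℝ → ℝ} {A B : ℝ}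

lemma Profile.contDiff_ridge (hg : Profile g A B) (hθ : ContDiff ℝ 1 θ) :
    ContDiff ℝ 1 (ridge θ g) :=
  (hθ.comp (perpProj v).contDiff).mul
    (hg.contDiff.comp (contDiff_id.inner ℝ contDiff_const))

lemma Profile.exists_norm_fderiv_ridge_le (hg : Profile g A B) (hv : ‖v‖ = 1)
    (hθ : ContDiff ℝ 1 θ) (hc : HasCompactSupport θ) :
    ∃ K : ℝ, ∀ x, ‖fderiv ℝ (ridge θ g) x‖ ≤ K := by
  obtain ⟨Kg, hKg⟩ := hg.exists_lipschitzWith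
  obtain ⟨Kθ, hKθ⟩ := hθ.lipschitzWith_of_hasCompactSupport hc one_ne_zero
  obtain ⟨T, hT⟩ := hθ.continuous.bounded_above_of_compact_support hc
  have hT0 : 0 ≤ T := (norm_nonneg _).trans (hT 0)
  have hlip : LipschitzWith (Kθ + T.toNNReal * Kg) (ridge θ g) := by
    refine LipschitzWith.of_dist_le_mul fun x y => ?_
    have hθxy : |θ (perpProj v x) - θ (perpProj v y)| ≤ Kθ * ‖x - y‖ := by
      refine (hKθ.norm_sub_le _ _).trans ?_
      rw [← map_sub]
      gcongr
      exact norm_perpProj_le _ _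
    have hgxy : |g ⟪x, v⟫ - g ⟪y, v⟫| ≤ Kg * ‖x - y‖ := by
      refine (hKg.norm_sub_le _ _).trans ?_
      rw [← inner_sub_left]
      gcongr
      simpa [hv] using norm_inner_le_norm (𝕜 := ℝ) (x - y) v
    have hgx : |g ⟪x, v⟫| ≤ 1 := by
      rw [abs_of_nonneg (hg.nonneg _)]
      exact hg.le_one _
    rw [Real.dist_eq, dist_eq_norm, NNReal.coe_add, NNReal.coe_mul, Real.coe_toNNReal T hT0]
    calc |ridge θ g x - ridge θ g y|
        = |(θ (perpProj v x) - θ (perpProj v y)) * g ⟪x, v⟫ +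
            θ (perpProj v y) * (g ⟪x, v⟫ - g ⟪y, v⟫)| := by
          unfold ridge
          ring_nf
      _ ≤ |θ (perpProj v x) - θ (perpProj v y)| * |g ⟪x, v⟫| +
            |θ (perpProj v y)| * |g ⟪x, v⟫ - g ⟪y, v⟫| := by
          rw [← abs_mul, ← abs_mul]
          exact abs_add_le _ _
      _ ≤ Kθ * ‖x - y‖ * 1 + T * (Kg * ‖x - y‖) := by
          gcongr
          exact hT _
      _ = (Kθ + T * Kg) * ‖x - y‖ := by ring
  exact ⟨_, fun x => norm_fderiv_le_of_lipschitz ℝ hlip⟩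

lemma Profile.inner_mem_Icc_of_lineDefect_ne_zero (hg : Profile g A B) {x : E}
    (hline : Integrable fun s : ℝ => f (x + s • v)) (hf0 : ∀ x, 0 ≤ f x)
    (hlt : ∀ h > (0 : ℝ), lineTail f v (x + h • v) < lineTail f v x) (hx : lineDefect f v g x ≠ 0) :
    ⟪x, v⟫ ∈ Icc A B := by
  by_contra hAB
  refine hx ((hg.comp_const_add ⟪x, v⟫).rearrDefect_eq_zero hline (fun _ => hf0 _)
    (fun h hh => ?_) ?_)
  · rw [zero_add, ← lineTail_add_smul]
    exact hlt h hh
  · simpa [mem_Icc, sub_nonpos] using hAB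

lemma exists_norm_le_of_perpProj_of_inner (hv : ‖v‖ = 1) (hc : HasCompactSupport θ) (A B : ℝ) :
    ∃ R, ∀ x : E, θ (perpProj v x) ≠ 0 → ⟪x, v⟫ ∈ Icc A B → ‖x‖ ≤ R := by
  obtain ⟨C, hC⟩ := hc.isCompact.isBounded.exists_norm_le
  refine ⟨C + max |A| |B|, fun x hθx hx => ?_⟩
  have hsplit : x = (perpProj v x : E) + ⟪x, v⟫ • v := by rw [coe_perpProj hv, sub_add_cancel]
  calc ‖x‖ ≤ ‖(perpProj v x : E)‖ + ‖⟪x, v⟫ • v‖ := by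
        conv_lhs => rw [hsplit]
        exact norm_add_le _ _
    _ ≤ C + max |A| |B| := by
        rw [norm_smul, hv, mul_one]
        exact add_le_add (hC _ (subset_tsupport _ hθx)) (abs_le_max_abs_abs hx.1 hx.2)

lemma Profile.integral_symmSubgraph_tilt (hg : Profile g A B) (hv : ‖v‖ = 1) (hvw : ⟪v, w⟫ = 0)
    (hθ0 : ∀ y, 0 ≤ θ y) {ε : ℝ} (hε : 0 ≤ ε) {x : E}
    (hline : Integrable fun s : ℝ => f (x + s • v)) (hf0 : ∀ x, 0 ≤ f x)
    (hlt : ∀ h > (0 : ℝ), lineTail f v (x + h • v) < lineTail f v x) {M : ℝ} (hMx : -M ≤ ⟪x, w⟫)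
    (hxM : ⟪x, w⟫ + ε * θ (perpProj v x) ≤ M) :
    ∫ r in Ioc (-M) M, (symmSubgraph f v (tilt w ε (ridge θ g))).indicator (fun _ => (1 : ℝ)) (x, r)
      = tilt w ε (ridge θ g) x + M + ε * ridgeDefect f θ g x := by
  have hUline (u : ℝ) : tilt w ε (ridge θ g) (x + u • v) =
      ⟪x, w⟫ + ε * θ (perpProj v x) * g (⟪x, v⟫ + u) := by
    rw [tilt, ridge, perpProj_add_smul hv, inner_add_smul_self hv, inner_add_left,
      real_inner_smul_left, hvw, mul_zero, add_zero, mul_assoc]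
  have hεθ : 0 ≤ ε * θ (perpProj v x) := mul_nonneg hε (hθ0 _)
  have hmeas : Measurable fun u => g (⟪x, v⟫ + u) :=
    (hg.comp_const_add _).contDiff.continuous.measurable
  have htail (h : ℝ) (hh : 0 < h) :
      tail (fun u => f (x + u • v)) (0 + h) < tail (fun u => f (x + u • v)) 0 := by
    rw [zero_add, ← lineTail_add_smul]
    exact hlt h hh
  have hlayer := integral_layer_affine (s := 0) hline (fun _ => hf0 _) hmeas (fun _ => hg.nonneg _)
    (fun _ => hg.le_one _) htail hεθ hMx hxM
  simp only [indicator_symmSubgraph, hUline]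
  rw [← intervalIntegral.integral_of_le (by linarith), hlayer, tilt, ridge, ridgeDefect, lineDefect,
    add_zero]
  ring

end Ridge

section Cutoff

lemma exists_contDiffBump_integral_le {E : Type*} [NormedAddCommGroup E] [NormedSpace ℝ E]
    [FiniteDimensional ℝ E] [HasContDiffBump E] [MeasurableSpace E] [BorelSpace E] {μ : Measure E}
    {f : E → ℝ} (hf : Integrable f μ) (R : ℝ) {η : ℝ} (hη : 0 < η) :
    ∃ Ψ : ContDiffBump (0 : E), R < Ψ.rIn ∧ ∫ x, f x * (1 - Ψ x) ∂μ ≤ η := by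
  let Ψ (N : ℕ) : ContDiffBump (0 : E) := ⟨N + 1, N + 2, by positivity, by linarith⟩
  have hlim : Tendsto (fun N => ∫ x, f x * (1 - Ψ N x) ∂μ) atTop (𝓝 (∫ _, 0 ∂μ)) := by
    refine tendsto_integral_of_dominated_convergence (fun x => ‖f x‖)
      (fun N => hf.1.mul (continuous_const.sub (Ψ N).continuous).aestronglyMeasurable) hf.norm
      (fun N => Eventually.of_forall fun x => ?_) (Eventually.of_forall fun x => ?_)
    · rw [norm_mul, Real.norm_of_nonneg (sub_nonneg.2 (Ψ N).le_one)]
      exact mul_le_of_le_one_right (norm_nonneg _) (by linarith [(Ψ N).nonneg (x := x)])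
    · refine tendsto_const_nhds.congr' ?_
      filter_upwards [tendsto_natCast_atTop_atTop.eventually_ge_atTop ‖x‖] with N hN
      rw [(Ψ N).one_of_mem_closedBall (by simp [Ψ]; linarith), sub_self, mul_zero]
  rw [integral_zero] at hlim
  obtain ⟨N, hN, hRN⟩ := ((hlim.eventually (ge_mem_nhds hη)).and
    (tendsto_natCast_atTop_atTop.eventually_gt_atTop R)).exists
  exact ⟨Ψ N, by simp only [Ψ]; linarith, hN⟩

variable {n : ℕ} {f : En n → ℝ} {f' : En n → En n} {w : En n} (Ψ : ContDiffBump (0 : En n))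

/-- The test field `-Ψ w`, which detects the perimeter of sets close to `{⟪·, w⟫ > r}`. -/
def cutoffField (w x : En n) : En n := -Ψ x • w

lemma isTestField_cutoffField (hw : ‖w‖ = 1) : IsTestField univ (cutoffField Ψ w) := by
  refine ⟨Ψ.contDiff.neg.smul contDiff_const, Ψ.hasCompactSupport.neg.smul_right, subset_univ _,
    fun x => ?_⟩
  rw [cutoffField, norm_smul, hw, mul_one, norm_neg, Real.norm_of_nonneg Ψ.nonneg]
  exact Ψ.le_one

lemma weightedDvg_cutoffField (f : En n → ℝ) (f' : En n → En n) (w x : En n) :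
    weightedDvg f f' (cutoffField Ψ w) x = -(f x * fderiv ℝ Ψ x w + Ψ x * ⟪w, f' x⟫) := by
  have hΨ : DifferentiableAt ℝ Ψ x := (Ψ.contDiff (n := 1)).differentiable one_ne_zero x
  have hdvg : dvg (cutoffField Ψ w) x = -fderiv ℝ Ψ x w := by
    refine (dvg_smul hΨ.fun_neg (differentiableAt_const w)).trans ?_
    rw [dvg_const, fderiv_fun_neg]
    simp
  rw [weightedDvg, hdvg, cutoffField, real_inner_smul_left]
  ring

lemma weightedDvg_cutoffField_of_norm_lt {x : En n} (hx : ‖x‖ < Ψ.rIn) :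
    weightedDvg f f' (cutoffField Ψ w) x = -⟪w, f' x⟫ := by
  have hloc : Ψ =ᶠ[𝓝 x] fun _ => 1 := Ψ.eventuallyEq_one_of_mem_ball (by simpa using hx)
  rw [weightedDvg_cutoffField, hloc.fderiv_eq, hloc.eq_of_nhds]
  simp

lemma weightedDvg_cutoffField_of_lt_norm {x : En n} (hx : Ψ.rOut < ‖x‖) :
    weightedDvg f f' (cutoffField Ψ w) x = 0 := by
  have hx' : x ∉ tsupport Ψ := by simpa [Ψ.tsupport_eq] using hx
  rw [weightedDvg_cutoffField, image_eq_zero_of_notMem_tsupport hx',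
    image_eq_zero_of_notMem_tsupport fun h => hx' (tsupport_fderiv_subset ℝ h)]
  simp

lemma integral_mul_weightedDvg_cutoffField {U : En n → ℝ} (hf : HasWeakGrad f f')
    (hU : ContDiff ℝ 1 U) (hw : ‖w‖ = 1) (M : ℝ) :
    ∫ x, (U x + M) * weightedDvg f f' (cutoffField Ψ w) x =
      ∫ x, f x * (Ψ x * fderiv ℝ U x w) := by
  have hΨ := isTestField_cutoffField Ψ hw
  refine (hf.integral_mul_dvg_add_inner (hU.add contDiff_const) hΨ.1 hΨ.2.1).trans ?_
  rw [← integral_neg]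
  congr! 2 with x
  simp [cutoffField]

end Cutoff

section FirstVariation

variable {n : ℕ} {f U : En n → ℝ} {f' : En n → En n} {v w : En n}

lemma perim_congr_set {S S' : Set (En n)} (h : S =ᵐ[volume] S') :
    perim f f' univ S = perim f f' univ S' := by
  refine iSup_congr fun φ => iSup_congr fun _ => congrArg ENNReal.ofReal ?_
  rw [setIntegral_univ, setIntegral_univ]
  refine integral_congr_ae ?_
  filter_upwards [indicator_ae_eq_of_ae_eq_set (f := fun _ => (1 : ℝ)) h] with x hx
  rw [hx]

lemma perim_symmSubgraph_le (hW : MemW f f') (hPS : IsPSMeasure f f') (hv : ‖v‖ = 1)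
    (hU : Measurable U) (r : ℝ) :
    perim f f' univ {x | (x, r) ∈ symmSubgraph f v U} ≤ perim f f' univ {x | r < U x} := by
  have hS : MeasurableSet {x | r < U x} := measurableSet_lt measurable_const hU
  rcases eq_top_or_lt_top (perim f f' univ {x | r < U x}) with htop | hfin
  · rw [htop]
    exact le_top
  · exact (perim_congr_set (ehrhardSymm_ae_eq hW.2.1 hW.1 hv hS)).ge.trans
      (hPS v hv _ hS.nullMeasurableSet hfin)

variable {g : ℝ → ℝ} {A B ε : ℝ} {θ : (ℝ ∙ v)ᗮ → ℝ}

lemma integrable_symmSubgraph_mul {G : En n → ℝ} (hf : Measurable f) (hU : Measurable U)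
    (hG : Integrable G) (v : En n) (M : ℝ) :
    Integrable fun x => (∫ r in Ioc (-M) M,
      (symmSubgraph f v U).indicator (fun _ => (1 : ℝ)) (x, r)) * G x := by
  refine hG.bdd_mul (c := (volume : Measure ℝ).real (Ioc (-M) M)) ?_
    (Eventually.of_forall fun x => ?_)
  · exact ((measurable_const.indicator (measurableSet_symmSubgraph hf v hU)).stronglyMeasurable
      |>.integral_prod_right' (ν := volume.restrict (Ioc (-M) M))).aestronglyMeasurable
  · refine (norm_setIntegral_le_of_norm_le_const measure_Ioc_lt_top fun r _ => ?_).trans_eq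
      (one_mul _)
    exact (norm_indicator_le_norm_self _ _).trans_eq norm_one

lemma integrable_add_mul_cutoffField (hf : HasWeakGrad f f') (hU : Continuous U)
    (Ψ : ContDiffBump (0 : En n)) (hw : ‖w‖ = 1) (M : ℝ) :
    Integrable fun x => (U x + M) * weightedDvg f f' (cutoffField Ψ w) x := by
  have hΨ := isTestField_cutoffField Ψ hw
  obtain ⟨C, hC⟩ := (isCompact_closedBall (0 : En n) Ψ.rOut).exists_bound_of_continuousOn
    (hU.add_const M).continuousOn
  have hG := hf.integrable_weightedDvg hΨ.1 hΨ.2.1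
  refine (hG.norm.const_mul C).mono' ((hU.add_const M).aestronglyMeasurable.mul hG.1)
    (Eventually.of_forall fun x => ?_)
  rcases le_or_gt ‖x‖ Ψ.rOut with hx | hx
  · rw [norm_mul]
    gcongr
    exact hC x (by simpa using hx)
  · rw [weightedDvg_cutoffField_of_lt_norm Ψ hx]
    simp

lemma integrable_density_mul_cutoff (hf : Integrable f) (Ψ : ContDiffBump (0 : En n))
    {H : En n → ℝ} (hH : Continuous H) : Integrable fun x => f x * (Ψ x * H x) := by
  obtain ⟨C, hC⟩ := (Ψ.continuous.mul hH).bounded_above_of_compact_support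
    Ψ.hasCompactSupport.mul_right
  exact hf.mul_bdd (Ψ.continuous.mul hH).aestronglyMeasurable (Eventually.of_forall hC)

/-- Where the rearrangement moves anything the field equals `-w`, so that pairing it with the
symmetrized layers picks out `⟪w, f'⟫`. -/
lemma Profile.ae_layers_mul_cutoffField (hg : Profile g A B) (hf : Measurable f)
    (hf' : Measurable f') (hW : MemW f f') (hv : ‖v‖ = 1) (hw : ‖w‖ = 1) (hvw : ⟪v, w⟫ = 0)
    (hθ0 : ∀ y, 0 ≤ θ y) {T : ℝ} (hT : ∀ y, θ y ≤ T) (hε : 0 ≤ ε) (Ψ : ContDiffBump (0 : En n))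
    (hwindow : ∀ x, θ (perpProj v x) ≠ 0 → ⟪x, v⟫ ∈ Icc A B → ‖x‖ < Ψ.rIn) {M : ℝ}
    (hM : Ψ.rOut + ε * T ≤ M) :
    ∀ᵐ x, (∫ r in Ioc (-M) M,
        (symmSubgraph f v (tilt w ε (ridge θ g))).indicator (fun _ => (1 : ℝ)) (x, r)) *
          weightedDvg f f' (cutoffField Ψ w) x =
      (tilt w ε (ridge θ g) x + M) * weightedDvg f f' (cutoffField Ψ w) x -
        ε * (⟪w, f' x⟫ * ridgeDefect f θ g x) := by
  filter_upwards [hW.ae_inner_eq_zero hf hf' w, ae_lineTail_add_smul_lt hf hW.2.1 hW.1 hv,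
    ae_integrable_add_smul hv hW.2.1] with x hzero hlt hline
  by_cases hfx : f x = 0
  · rw [weightedDvg_cutoffField, hzero hfx, hfx]
    simp
  have hsupp (hD : ridgeDefect f θ g x ≠ 0) : ‖x‖ < Ψ.rIn :=
    hwindow x (left_ne_zero_of_mul hD) <|
      hg.inner_mem_Icc_of_lineDefect_ne_zero hline hW.1 (hlt hfx) (right_ne_zero_of_mul hD)
  rcases le_or_gt ‖x‖ Ψ.rOut with hx | hx
  · have hxw : |⟪x, w⟫| ≤ Ψ.rOut :=
      (abs_real_inner_le_norm x w).trans (by rwa [hw, mul_one])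
    have hεθ : ε * θ (perpProj v x) ≤ ε * T := mul_le_mul_of_nonneg_left (hT _) hε
    have hεθ0 : 0 ≤ ε * θ (perpProj v x) := mul_nonneg hε (hθ0 _)
    rw [hg.integral_symmSubgraph_tilt hv hvw hθ0 hε hline hW.1 (hlt hfx)
      (by linarith [neg_le_of_abs_le hxw]) (by linarith [le_of_abs_le hxw])]
    by_cases hD : ridgeDefect f θ g x = 0
    · rw [hD]
      ring
    · rw [weightedDvg_cutoffField_of_norm_lt Ψ (hsupp hD)]
      ring
  · have hD : ridgeDefect f θ g x = 0 := by
      by_contra hD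
      linarith [hsupp hD, Ψ.rIn_lt_rOut]
    rw [weightedDvg_cutoffField_of_lt_norm Ψ hx, hD]
    simp

lemma neg_mul_integral_ridgeDefect_le (hf : Measurable f) (hf' : Measurable f')
    (hW : MemW f f') (hPS : IsPSMeasure f f') (hv : ‖v‖ = 1) (hw : ‖w‖ = 1) (hvw : ⟪v, w⟫ = 0)
    (hg : Profile g A B) (hθ : ContDiff ℝ 1 θ) (hθ0 : ∀ y, 0 ≤ θ y) {T : ℝ} (hT : ∀ y, θ y ≤ T)
    (hε : 0 ≤ ε) (Ψ : ContDiffBump (0 : En n))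
    (hwindow : ∀ x, θ (perpProj v x) ≠ 0 → ⟪x, v⟫ ∈ Icc A B → ‖x‖ < Ψ.rIn)
    (hint : Integrable fun x => f x * ‖fderiv ℝ (tilt w ε (ridge θ g)) x‖) :
    -(ε * ∫ x, ⟪w, f' x⟫ * ridgeDefect f θ g x) ≤
      (∫ x, f x * ‖fderiv ℝ (tilt w ε (ridge θ g)) x‖) -
        ∫ x, f x * (Ψ x * fderiv ℝ (tilt w ε (ridge θ g)) x w) := by
  set U := tilt w ε (ridge θ g)
  have hU : ContDiff ℝ 1 U := contDiff_tilt (hg.contDiff_ridge hθ) w ε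
  have hUm : Measurable U := hU.continuous.measurable
  have hΨ := isTestField_cutoffField Ψ hw
  have hlayers := integral_layers_mul_le hf hW hU hint (measurableSet_symmSubgraph hf v hUm)
    (perim_symmSubgraph_le hW hPS hv hUm) hΨ (Ψ.rOut + ε * T)
  have hdefect : (∫ x, (∫ r in Ioc (-(Ψ.rOut + ε * T)) (Ψ.rOut + ε * T),
        (symmSubgraph f v U).indicator (fun _ => (1 : ℝ)) (x, r)) *
          weightedDvg f f' (cutoffField Ψ w) x) -
      ∫ x, (U x + (Ψ.rOut + ε * T)) * weightedDvg f f' (cutoffField Ψ w) x =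
      -(ε * ∫ x, ⟪w, f' x⟫ * ridgeDefect f θ g x) := by
    rw [← integral_sub (integrable_symmSubgraph_mul hf hUm
        (hW.2.2.integrable_weightedDvg hΨ.1 hΨ.2.1) v _)
      (integrable_add_mul_cutoffField hW.2.2 hU.continuous Ψ hw _),
      ← integral_const_mul, ← integral_neg]
    refine integral_congr_ae ?_
    filter_upwards [hg.ae_layers_mul_cutoffField hf hf' hW hv hw hvw hθ0 hT hε Ψ hwindow le_rfl]
      with x hx
    rw [hx]
    ring
  rw [integral_mul_weightedDvg_cutoffField Ψ hW.2.2 hU hw] at hdefect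
  linarith

lemma mul_norm_fderiv_tilt_sub_le {Θ : En n → ℝ} (hΘ : ContDiff ℝ 1 Θ) (hw : ‖w‖ = 1)
    {K : ℝ} (hK : ∀ x, ‖fderiv ℝ Θ x‖ ≤ K) (hε : 0 ≤ ε) (hεK : ε * K ≤ 1 / 2)
    (Ψ : ContDiffBump (0 : En n)) {c : ℝ} (hc : 0 ≤ c) (x : En n) :
    c * ‖fderiv ℝ (tilt w ε Θ) x‖ - c * (Ψ x * fderiv ℝ (tilt w ε Θ) x w) ≤
      2 * (c * (1 - Ψ x)) + ε ^ 2 * K ^ 2 * c := by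
  have hL : ‖ε • fderiv ℝ Θ x‖ ≤ ε * K := by
    rw [norm_smul, Real.norm_of_nonneg hε]
    exact mul_le_mul_of_nonneg_left (hK x) hε
  have hLw : (ε • fderiv ℝ Θ x) w ≤ 1 / 2 :=
    (le_abs_self _).trans <| ((ε • fderiv ℝ Θ x).unit_le_opNorm w hw.le).trans (hL.trans hεK)
  have hL2 : ‖ε • fderiv ℝ Θ x‖ ^ 2 ≤ ε ^ 2 * K ^ 2 := by
    rw [← mul_pow]
    gcongr
  have hnorm := norm_innerSL_add_le hw (hL.trans hεK)
  have hUw : (innerSL ℝ w + ε • fderiv ℝ Θ x) w = 1 + (ε • fderiv ℝ Θ x) w := by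
    simp [hw]
  rw [fderiv_tilt hΘ, hUw, ← mul_sub]
  have hgap : 0 ≤ 1 - Ψ x := sub_nonneg.2 Ψ.le_one
  calc c * (‖innerSL ℝ w + ε • fderiv ℝ Θ x‖ - Ψ x * (1 + (ε • fderiv ℝ Θ x) w))
      ≤ c * (2 * (1 - Ψ x) + ε ^ 2 * K ^ 2) :=
        mul_le_mul_of_nonneg_left (by nlinarith) hc
    _ = 2 * (c * (1 - Ψ x)) + ε ^ 2 * K ^ 2 * c := by ring

lemma neg_mul_integral_ridgeDefect_le_sq (hf : Measurable f) (hf' : Measurable f')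
    (hW : MemW f f') (hPS : IsPSMeasure f f') (hv : ‖v‖ = 1) (hw : ‖w‖ = 1) (hvw : ⟪v, w⟫ = 0)
    (hg : Profile g A B) (hθ : ContDiff ℝ 1 θ) (hc : HasCompactSupport θ) (hθ0 : ∀ y, 0 ≤ θ y)
    {K : ℝ} (hK : ∀ x, ‖fderiv ℝ (ridge θ g) x‖ ≤ K) (hε : 0 < ε) (hεK : ε * K ≤ 1 / 2) :
    -(ε * ∫ x, ⟪w, f' x⟫ * ridgeDefect f θ g x) ≤ ε ^ 2 * (2 + K ^ 2 * ∫ x, f x) := by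
  obtain ⟨R, hR⟩ := exists_norm_le_of_perpProj_of_inner hv hc A B
  obtain ⟨T, hT⟩ := hθ.continuous.bounded_above_of_compact_support hc
  obtain ⟨Ψ, hRΨ, hΨ⟩ := exists_contDiffBump_integral_le hW.2.1 R (pow_pos hε 2)
  have hΘ := hg.contDiff_ridge hθ
  have hDU := (contDiff_tilt hΘ w ε).continuous_fderiv one_ne_zero
  have hDU_le (x) : ‖‖fderiv ℝ (tilt w ε (ridge θ g)) x‖‖ ≤ 1 + ε * K := by
    rw [norm_norm, fderiv_tilt hΘ]
    refine (norm_add_le _ _).trans (add_le_add (by simp [hw]) ?_)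
    rw [norm_smul, Real.norm_of_nonneg hε.le]
    exact mul_le_mul_of_nonneg_left (hK x) hε.le
  have hint : Integrable fun x => f x * ‖fderiv ℝ (tilt w ε (ridge θ g)) x‖ :=
    hW.2.1.mul_bdd hDU.norm.aestronglyMeasurable (Eventually.of_forall hDU_le)
  have hint' := integrable_density_mul_cutoff hW.2.1 Ψ (hDU.clm_apply (continuous_const (y := w)))
  have hgap : Integrable fun x => f x * (1 - Ψ x) := by
    have := integrable_density_mul_cutoff hW.2.1 Ψ (continuous_const (y := (1 : ℝ)))
    simpa [mul_sub, Pi.sub_def] using hW.2.1.sub this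
  calc -(ε * ∫ x, ⟪w, f' x⟫ * ridgeDefect f θ g x)
      ≤ (∫ x, f x * ‖fderiv ℝ (tilt w ε (ridge θ g)) x‖) -
          ∫ x, f x * (Ψ x * fderiv ℝ (tilt w ε (ridge θ g)) x w) :=
        neg_mul_integral_ridgeDefect_le hf hf' hW hPS hv hw hvw hg hθ hθ0
          (fun y => (le_abs_self _).trans (hT y)) hε.le Ψ
          (fun x hθx hx => (hR x hθx hx).trans_lt hRΨ) hint
    _ ≤ ∫ x, (2 * (f x * (1 - Ψ x)) + ε ^ 2 * K ^ 2 * f x) := by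
        rw [← integral_sub hint hint']
        exact integral_mono (hint.sub hint') ((hgap.const_mul 2).add (hW.2.1.const_mul _))
          fun x => mul_norm_fderiv_tilt_sub_le hΘ hw hK hε.le hεK Ψ (hW.1 x) x
    _ = 2 * (∫ x, f x * (1 - Ψ x)) + ε ^ 2 * K ^ 2 * ∫ x, f x := by
        rw [integral_add (hgap.const_mul 2) (hW.2.1.const_mul _), integral_const_mul,
          integral_const_mul]
    _ ≤ ε ^ 2 * (2 + K ^ 2 * ∫ x, f x) := by linarith

lemma integral_inner_mul_ridgeDefect_nonneg (hf : Measurable f) (hf' : Measurable f')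
    (hW : MemW f f') (hPS : IsPSMeasure f f') (hv : ‖v‖ = 1) (hw : ‖w‖ = 1) (hvw : ⟪v, w⟫ = 0)
    (hg : Profile g A B) (hθ : ContDiff ℝ 1 θ) (hc : HasCompactSupport θ) (hθ0 : ∀ y, 0 ≤ θ y) :
    0 ≤ ∫ x, ⟪w, f' x⟫ * ridgeDefect f θ g x := by
  obtain ⟨K, hK⟩ := hg.exists_norm_fderiv_ridge_le hv hθ hc
  set Q := ∫ x, ⟪w, f' x⟫ * ridgeDefect f θ g x
  have hsmall : ∀ᶠ ε : ℝ in 𝓝[>] 0, ε * K ≤ 1 / 2 := by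
    have hlim : Tendsto (fun ε : ℝ => ε * K) (𝓝[>] 0) (𝓝 (0 * K)) :=
      (tendsto_id.mono_left nhdsWithin_le_nhds).mul_const K
    exact hlim.eventually (ge_mem_nhds (by norm_num))
  have hlower : ∀ᶠ ε : ℝ in 𝓝[>] 0, -(ε * (2 + K ^ 2 * ∫ x, f x)) ≤ Q := by
    filter_upwards [hsmall, self_mem_nhdsWithin] with ε hεK hε
    have hsq := neg_mul_integral_ridgeDefect_le_sq hf hf' hW hPS hv hw hvw hg hθ hc hθ0 hK hε hεK
    refine le_of_mul_le_mul_left ?_ (hε : 0 < ε)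
    linarith
  have hlim : Tendsto (fun ε : ℝ => -(ε * (2 + K ^ 2 * ∫ x, f x))) (𝓝[>] 0) (𝓝 (-(0 * _))) :=
    ((tendsto_id.mono_left nhdsWithin_le_nhds).mul_const _).neg
  simpa using le_of_tendsto hlim hlower

end FirstVariation

section FibreVariation

lemma exists_nonneg_contDiff_sub {F : Type*} [NormedAddCommGroup F] [InnerProductSpace ℝ F]
    [FiniteDimensional ℝ F] {θ : F → ℝ} (hθ : ContDiff ℝ 1 θ) (hc : HasCompactSupport θ) :
    ∃ θ₁ θ₂ : F → ℝ, ContDiff ℝ 1 θ₁ ∧ HasCompactSupport θ₁ ∧ (∀ y, 0 ≤ θ₁ y) ∧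
      ContDiff ℝ 1 θ₂ ∧ HasCompactSupport θ₂ ∧ (∀ y, 0 ≤ θ₂ y) ∧ θ = θ₁ - θ₂ := by
  obtain ⟨R, hR⟩ := hc.isCompact.isBounded.exists_norm_le
  obtain ⟨C, hC⟩ := hθ.continuous.bounded_above_of_compact_support hc
  have hC0 : 0 ≤ C := (norm_nonneg _).trans (hC 0)
  let β : ContDiffBump (0 : F) := ⟨|R| + 1, |R| + 2, by positivity, by linarith⟩
  have hCβ : ContDiff ℝ 1 fun y => C * β y := contDiff_const.mul β.contDiff
  have hCβc : HasCompactSupport fun y => C * β y := β.hasCompactSupport.mul_left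
  refine ⟨fun y => θ y + C * β y, fun y => C * β y, hθ.add hCβ, hc.add hCβc, fun y => ?_, hCβ,
    hCβc, fun y => mul_nonneg hC0 β.nonneg, by ext y; simp⟩
  by_cases hy : θ y = 0
  · simpa only [hy, zero_add] using mul_nonneg hC0 β.nonneg
  · have hβy : β y = 1 := β.one_of_mem_closedBall <| by
      rw [mem_closedBall_zero_iff]
      exact (hR y (subset_tsupport _ hy)).trans (by simp only [β]; linarith [le_abs_self R])
    simp only [hβy]
    linarith [(abs_le.1 (hC y)).1]

lemma integrable_mul_comp_perpProj {E : Type*} [NormedAddCommGroup E] [InnerProductSpace ℝ E]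
    [FiniteDimensional ℝ E] [MeasurableSpace E] [BorelSpace E] {v : E} (hv : ‖v‖ = 1)
    {h : E → ℝ} (hh : LocallyIntegrable h) {A B : ℝ} (hslab : ∀ x, ⟪x, v⟫ ∉ Icc A B → h x = 0)
    {θ : (ℝ ∙ v)ᗮ → ℝ} (hθ : Continuous θ) (hc : HasCompactSupport θ) :
    Integrable fun x => h x * θ (perpProj v x) := by
  obtain ⟨R, hR⟩ := exists_norm_le_of_perpProj_of_inner hv hc A B
  obtain ⟨C, hC⟩ := hθ.bounded_above_of_compact_support hc
  rw [← integrableOn_iff_integrable_of_support_subset (s := Metric.closedBall (0 : E) R)]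
  · exact (hh.integrableOn_isCompact (isCompact_closedBall _ _)).mul_bdd
      (hθ.comp (perpProj v).continuous).aestronglyMeasurable (Eventually.of_forall fun x => hC _)
  · intro x hx
    rw [mem_closedBall_zero_iff]
    refine hR x (right_ne_zero_of_mul hx) ?_
    by_contra hxAB
    exact left_ne_zero_of_mul hx (hslab x hxAB)

variable {n : ℕ} {f : En n → ℝ} {f' : En n → En n} {v w : En n} {g : ℝ → ℝ} {A B : ℝ}

lemma integral_inner_mul_ridgeDefect_eq_zero (hf : Measurable f) (hf' : Measurable f')
    (hW : MemW f f') (hPS : IsPSMeasure f f') (hv : ‖v‖ = 1) (hw : ‖w‖ = 1) (hvw : ⟪v, w⟫ = 0)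
    (hg : Profile g A B) {θ : (ℝ ∙ v)ᗮ → ℝ} (hθ : ContDiff ℝ 1 θ) (hc : HasCompactSupport θ)
    (hθ0 : ∀ y, 0 ≤ θ y) :
    ∫ x, ⟪w, f' x⟫ * ridgeDefect f θ g x = 0 := by
  have hpos := integral_inner_mul_ridgeDefect_nonneg hf hf' hW hPS hv hw hvw hg hθ hc hθ0
  have hneg := integral_inner_mul_ridgeDefect_nonneg (w := -w) hf hf' hW hPS hv
    (by rwa [norm_neg]) (by rw [inner_neg_right, hvw, neg_zero]) hg hθ hc hθ0
  simp only [inner_neg_left, neg_mul, integral_neg] at hneg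
  linarith

lemma Profile.ae_inner_mul_lineDefect_eq_zero (hg : Profile g A B) (hf : Measurable f)
    (hf' : Measurable f') (hW : MemW f f') (hv : ‖v‖ = 1) (w : En n) :
    ∀ᵐ x, ⟪x, v⟫ ∉ Icc A B → ⟪w, f' x⟫ * lineDefect f v g x = 0 := by
  filter_upwards [hW.ae_inner_eq_zero hf hf' w, ae_lineTail_add_smul_lt hf hW.2.1 hW.1 hv,
    ae_integrable_add_smul hv hW.2.1] with x hzero hlt hline hx
  by_cases hfx : f x = 0
  · rw [hzero hfx, zero_mul]
  · rw [mul_eq_zero]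
    refine .inr (by_contra fun hne => hx ?_)
    exact hg.inner_mem_Icc_of_lineDefect_ne_zero hline hW.1 (hlt hfx) hne

lemma IsPSMeasure.ae_integral_inner_mul_rearrDefect_eq_zero (hPS : IsPSMeasure f f')
    (hf : Measurable f) (hf' : Measurable f') (hW : MemW f f') (hv : ‖v‖ = 1) (hw : ‖w‖ = 1)
    (hvw : ⟪v, w⟫ = 0) (hg : Profile g A B) :
    ∀ᵐ z : En n, ∫ s : ℝ, ⟪w, f' (z + s • v)⟫ *
      rearrDefect (fun u => f (z + u • v)) (fun u => g (⟪z, v⟫ + u)) s = 0 := by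
  set h : En n → ℝ := {x | ⟪x, v⟫ ∈ Icc A B}.indicator fun x => ⟪w, f' x⟫ * lineDefect f v g x
    with hh
  have hslab (x : En n) (hx : ⟪x, v⟫ ∉ Icc A B) : h x = 0 :=
    indicator_of_notMem (s := {x | ⟪x, v⟫ ∈ Icc A B}) hx _
  have hae : h =ᵐ[volume] fun x => ⟪w, f' x⟫ * lineDefect f v g x := by
    filter_upwards [hg.ae_inner_mul_lineDefect_eq_zero hf hf' hW hv w] with x hx
    rw [hh, indicator_apply_eq_self]
    exact hx
  have hloc : LocallyIntegrable h := by
    have hmeas : Measurable h := (Measurable.mul (by fun_prop)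
      (measurable_lineDefect hf hv hg.contDiff.continuous.measurable)).indicator
        (measurableSet_Icc.preimage (by fun_prop))
    refine (hW.2.2.hasWeakDirDeriv w).locallyIntegrable_deriv.mono hmeas.aestronglyMeasurable
      (Eventually.of_forall fun x => (norm_indicator_le_norm_self _ _).trans ?_)
    rw [norm_mul]
    exact mul_le_of_le_one_right (norm_nonneg _) (hg.abs_lineDefect_le_one f v x)
  have hnonneg (θ : (ℝ ∙ v)ᗮ → ℝ) (hθ : ContDiff ℝ 1 θ) (hc : HasCompactSupport θ)
      (hθ0 : ∀ y, 0 ≤ θ y) : ∫ x, h x * θ (perpProj v x) = 0 := by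
    rw [← integral_inner_mul_ridgeDefect_eq_zero hf hf' hW hPS hv hw hvw hg hθ hc hθ0]
    refine integral_congr_ae ?_
    filter_upwards [hae] with x hx
    rw [hx, ridgeDefect]
    ring
  have hzero := ae_integral_add_smul_eq_zero hv hloc hslab fun θ hθ hc => by
    obtain ⟨θ₁, θ₂, hθ₁, hc₁, hθ₁0, hθ₂, hc₂, hθ₂0, rfl⟩ := exists_nonneg_contDiff_sub hθ hc
    simp only [Pi.sub_apply, mul_sub]
    rw [integral_sub (integrable_mul_comp_perpProj hv hloc hslab hθ₁.continuous hc₁)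
      (integrable_mul_comp_perpProj hv hloc hslab hθ₂.continuous hc₂), hnonneg θ₁ hθ₁ hc₁ hθ₁0,
      hnonneg θ₂ hθ₂ hc₂ hθ₂0, sub_zero]
  filter_upwards [hzero, ae_ae_add_smul v hae] with z hz hline
  rw [← hz]
  refine integral_congr_ae (hline.mono fun s hs => ?_)
  simp only [hs, lineDefect_add_smul hv]

end FibreVariation

/-! ### Mass transport on a line -/

section Limit

variable {φ ψ g : ℝ → ℝ} {gk : ℕ → ℝ → ℝ} {s : ℝ}

lemma Profile.mono {g : ℝ → ℝ} {A A' B B' : ℝ} (hg : Profile g A B) (hA : A' ≤ A) (hB : B ≤ B') :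
    Profile g A' B' where
  contDiff := hg.contDiff
  nonneg := hg.nonneg
  le_one := hg.le_one
  eq_zero y hy := hg.eq_zero y (hy.trans hA)
  eq_one y hy := hg.eq_one y (hB.trans hy)

lemma tendsto_superMass (hφ : Integrable φ) (hgk : ∀ k, Measurable (gk k))
    (hlim : ∀ᵐ u, ∀ᶠ k in atTop, gk k u = g u) (r : ℝ) :
    Tendsto (fun k => superMass φ (gk k) r) atTop (𝓝 (superMass φ g r)) := by
  refine tendsto_integral_of_dominated_convergence (fun u => ‖φ u‖)
    (fun k => hφ.1.indicator (measurableSet_lt measurable_const (hgk k))) hφ.norm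
    (fun k => Eventually.of_forall fun u => norm_indicator_le_norm_self _ _) ?_
  filter_upwards [hlim] with u hu
  refine tendsto_const_nhds.congr' (hu.mono fun k hk => ?_)
  simp only [indicator, mem_ofPred_eq, hk]

lemma tendsto_rearrDefect (hφ : Integrable φ) (hφ0 : ∀ s, 0 ≤ φ s) (hgk : ∀ k, Measurable (gk k))
    (hlim : ∀ᵐ u, ∀ᶠ k in atTop, gk k u = g u) (hs : ∀ᶠ k in atTop, gk k s = g s)
    (hlevel : ∀ᵐ r, r ∈ Ioc (0 : ℝ) 1 → tail φ s ≠ superMass φ g r) :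
    Tendsto (fun k => rearrDefect φ (gk k) s) atTop (𝓝 (rearrDefect φ g s)) := by
  refine Tendsto.sub ?_ (tendsto_const_nhds.congr' (hs.mono fun k hk => hk.symm))
  refine intervalIntegral.tendsto_integral_filter_of_dominated_convergence (fun _ => 1)
    (Eventually.of_forall fun k =>
      (layer_antitone hφ hφ0 (hgk k) s).measurable.aestronglyMeasurable)
    (Eventually.of_forall fun k => Eventually.of_forall fun r _ => ?_)
    intervalIntegrable_const ?_
  · rw [Real.norm_of_nonneg (layer_nonneg _ _ _ _)]
    exact layer_le_one _ _ _ _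
  · rw [uIoc_of_le zero_le_one]
    filter_upwards [hlevel] with r hr hr01
    have hmass := tendsto_superMass hφ hgk hlim r
    refine tendsto_const_nhds.congr' ?_
    unfold layer
    rcases (hr hr01).lt_or_gt with hlt | hgt
    · filter_upwards [hmass.eventually_const_lt hlt] with k hk
      rw [if_pos hlt.le, if_pos hk.le]
    · filter_upwards [hmass.eventually_lt_const hgt] with k hk
      rw [if_neg hgt.not_ge, if_neg hk.not_ge]

lemma tendsto_integral_mul_rearrDefect (hφ : Integrable φ) (hφ0 : ∀ s, 0 ≤ φ s)
    (hψ : LocallyIntegrable ψ) (hψφ : ∀ᵐ s, φ s = 0 → ψ s = 0) (hgk : ∀ k, Measurable (gk k))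
    {A B : ℝ} (hprof : ∀ᶠ k in atTop, Profile (gk k) A B)
    (hlim : ∀ᵐ u, ∀ᶠ k in atTop, gk k u = g u)
    (hlevel : ∀ᵐ s, φ s ≠ 0 → ∀ᵐ r, r ∈ Ioc (0 : ℝ) 1 → tail φ s ≠ superMass φ g r) :
    Tendsto (fun k => ∫ s, ψ s * rearrDefect φ (gk k) s) atTop
      (𝓝 (∫ s, ψ s * rearrDefect φ g s)) := by
  refine tendsto_integral_filter_of_dominated_convergence
    ((Icc A B).indicator fun s => ‖ψ s‖)
    (Eventually.of_forall fun k => hψ.aestronglyMeasurable.mul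
      (measurable_rearrDefect hφ hφ0 (hgk k)).aestronglyMeasurable) ?_ ?_ ?_
  · filter_upwards [hprof] with k hk
    filter_upwards [hψφ, ae_tail_add_lt_tail hφ hφ0] with s hs htail
    by_cases hsAB : s ∈ Icc A B
    · rw [indicator_of_mem hsAB, norm_mul]
      exact mul_le_of_le_one_right (norm_nonneg _)
        (abs_rearrDefect_le_one φ hk.nonneg hk.le_one s)
    · rw [indicator_of_notMem hsAB, norm_le_zero_iff, mul_eq_zero, or_iff_not_imp_left]
      exact fun hne => hk.rearrDefect_eq_zero hφ hφ0 (htail (mt hs hne)) hsAB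
  · rw [integrable_indicator_iff measurableSet_Icc]
    exact (hψ.integrableOn_isCompact isCompact_Icc).norm
  · filter_upwards [hψφ, hlevel, hlim] with s hs hsr hsk
    by_cases hψs : ψ s = 0
    · simp [hψs]
    · exact (tendsto_rearrDefect hφ hφ0 hgk hlim hsk (hsr (mt hs hψs))).const_mul _

lemma ae_tail_ne (hφ : Integrable φ) (hφ0 : ∀ s, 0 ≤ φ s) (m : ℝ) :
    ∀ᵐ s, φ s ≠ 0 → tail φ s ≠ m := by
  have hsub : {s | tail φ s = m ∧ ∀ h > (0 : ℝ), tail φ (s + h) < tail φ s}.Subsingleton := by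
    intro s ⟨hs, hlt⟩ t ⟨ht, hlt'⟩
    by_contra hst
    rcases lt_or_gt_of_ne hst with h | h
    · simpa [hs, ht] using hlt (t - s) (sub_pos.2 h)
    · simpa [hs, ht] using hlt' (s - t) (sub_pos.2 h)
  filter_upwards [ae_tail_add_lt_tail hφ hφ0, measure_eq_zero_iff_ae_notMem.1
    (hsub.measure_zero volume)] with s hlt hs hne hm
  exact hs ⟨hm, hlt hne⟩

end Limit

section Gap

/-- The indicator of `(a, b) ∪ (d, ∞)`, the prototype of a set that is not a half-line. -/
def gapStep (a b d : ℝ) : ℝ → ℝ := (Ioo a b ∪ Ioi d).indicator fun _ => 1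

/-- A smooth function which approximates `gapStep a b d` as `k → ∞`. -/
def smoothGapStep (a b d : ℝ) (k : ℕ) (y : ℝ) : ℝ :=
  Real.smoothTransition (((k : ℝ) + 1) * (y - a)) *
      Real.smoothTransition (((k : ℝ) + 1) * (b - y)) +
    Real.smoothTransition (((k : ℝ) + 1) * (y - d))

variable {φ ψ : ℝ → ℝ} {a b d : ℝ}

lemma smoothGapStep_const_add (a b d c : ℝ) (k : ℕ) (u : ℝ) :
    smoothGapStep a b d k (c + u) = smoothGapStep (a - c) (b - c) (d - c) k u := by
  unfold smoothGapStep
  ring_nf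

lemma contDiff_smoothGapStep (a b d : ℝ) (k : ℕ) : ContDiff ℝ 1 (smoothGapStep a b d k) := by
  have hT : ContDiff ℝ 1 Real.smoothTransition := Real.smoothTransition.contDiff
  exact ((hT.comp (by fun_prop)).mul (hT.comp (by fun_prop))).add (hT.comp (by fun_prop))

lemma profile_smoothGapStep (hbd : b < d) (hab : a < b) (k : ℕ) :
    Profile (smoothGapStep a b d k) a (d + 1) where
  contDiff := contDiff_smoothGapStep a b d k
  nonneg y := add_nonneg (mul_nonneg (Real.smoothTransition.nonneg _)
    (Real.smoothTransition.nonneg _)) (Real.smoothTransition.nonneg _)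
  le_one y := by
    unfold smoothGapStep
    rcases le_total y d with h | h
    · rw [smoothStep_of_nonpos k (sub_nonpos.2 h), add_zero]
      exact mul_le_one₀ (Real.smoothTransition.le_one _) (Real.smoothTransition.nonneg _)
        (Real.smoothTransition.le_one _)
    · rw [smoothStep_of_nonpos k (sub_nonpos.2 (hbd.le.trans h)), mul_zero, zero_add]
      exact Real.smoothTransition.le_one _
  eq_zero y hy := by
    rw [smoothGapStep, smoothStep_of_nonpos k (sub_nonpos.2 hy),
      smoothStep_of_nonpos k (by linarith : y - d ≤ 0), zero_mul, add_zero]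
  eq_one y hy := by
    rw [smoothGapStep, smoothStep_of_nonpos k (by linarith : b - y ≤ 0),
      smoothStep_of_one_le k (by linarith : 1 ≤ y - d), mul_zero, zero_add]

lemma eventually_smoothStep_eq {x : ℝ} {xk : ℕ → ℝ} (hxk : Tendsto xk atTop (𝓝 x)) (hx : x ≠ 0) :
    ∀ᶠ k : ℕ in atTop,
      Real.smoothTransition (((k : ℝ) + 1) * xk k) = if 0 < x then 1 else 0 := by
  split_ifs with h
  · have htop : Tendsto (fun k : ℕ => ((k : ℝ) + 1) * xk k) atTop atTop :=
      (tendsto_atTop_add_const_right _ _ tendsto_natCast_atTop_atTop).atTop_mul_pos h hxk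
    filter_upwards [htop.eventually_ge_atTop 1] with k hk
    exact Real.smoothTransition.one_of_one_le hk
  · filter_upwards [hxk.eventually_lt_const ((not_lt.1 h).lt_of_ne hx)] with k hk
    exact smoothStep_of_nonpos k hk.le

lemma ae_eventually_smoothGapStep_eq {ak bk dk : ℕ → ℝ} (hak : Tendsto ak atTop (𝓝 a))
    (hbk : Tendsto bk atTop (𝓝 b)) (hdk : Tendsto dk atTop (𝓝 d)) (hbd : b < d) :
    ∀ᵐ y, ∀ᶠ k in atTop, smoothGapStep (ak k) (bk k) (dk k) k y = gapStep a b d y := by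
  filter_upwards [Measure.ae_ne volume a, Measure.ae_ne volume b, Measure.ae_ne volume d]
    with y hya hyb hyd
  filter_upwards [eventually_smoothStep_eq (tendsto_const_nhds.sub hak) (sub_ne_zero.2 hya),
    eventually_smoothStep_eq (hbk.sub tendsto_const_nhds) (sub_ne_zero.2 hyb.symm),
    eventually_smoothStep_eq (tendsto_const_nhds.sub hdk) (sub_ne_zero.2 hyd)] with k hka hkb hkd
  rw [smoothGapStep, hka, hkb, hkd]
  simp only [gapStep, indicator, mem_union, mem_Ioo, mem_Ioi, sub_pos]
  grind

lemma superMass_gapStep (hφ : Integrable φ) (hab : a < b) (hbd : b < d) {r : ℝ} (hr0 : 0 ≤ r)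
    (hr1 : r < 1) : superMass φ (gapStep a b d) r = tail φ a - tail φ b + tail φ d := by
  have hlevel : {u | r < gapStep a b d u} = Ioo a b ∪ Ioi d := by
    ext u
    by_cases hu : u ∈ Ioo a b ∪ Ioi d
    · simp [gapStep, hu, hr1]
    · simp only [gapStep, mem_ofPred_eq, indicator_of_notMem hu, hu, hr0.not_gt]
  have hdisj : Disjoint (Ioo a b) (Ioi d) :=
    Set.disjoint_left.2 fun x hx hdx => (hx.2.trans hbd).not_gt hdx
  rw [superMass, hlevel, integral_indicator (measurableSet_Ioo.union measurableSet_Ioi),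
    setIntegral_union hdisj measurableSet_Ioi hφ.integrableOn hφ.integrableOn, tail_sub_tail hφ,
    intervalIntegral.integral_of_le hab.le, integral_Ioc_eq_integral_Ioo, tail]

lemma integral_mul_rearrDefect_gapStep (hφ : Integrable φ) (hφ0 : ∀ s, 0 ≤ φ s)
    (hψ : LocallyIntegrable ψ) (hψφ : ∀ᵐ s, φ s = 0 → ψ s = 0) (hab : a < b) (hbd : b < d)
    {ak bk dk : ℕ → ℝ} (hak : Tendsto ak atTop (𝓝 a)) (hbk : Tendsto bk atTop (𝓝 b))
    (hdk : Tendsto dk atTop (𝓝 d))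
    (hzero : ∀ᶠ k in atTop,
      ∫ s, ψ s * rearrDefect φ (smoothGapStep (ak k) (bk k) (dk k) k) s = 0) :
    ∫ s, ψ s * rearrDefect φ (gapStep a b d) s = 0 := by
  refine tendsto_nhds_unique_of_eventuallyEq (tendsto_integral_mul_rearrDefect hφ hφ0 hψ hψφ
    (fun k => (contDiff_smoothGapStep _ _ _ k).continuous.measurable) (A := a - 1) (B := d + 2) ?_
    (ae_eventually_smoothGapStep_eq hak hbk hdk hbd) ?_) tendsto_const_nhds hzero
  · filter_upwards [hak.eventually_lt hbk hab, hbk.eventually_lt hdk hbd,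
      hak.eventually_const_lt (sub_one_lt a), hdk.eventually_lt_const (lt_add_one d)]
      with k hkab hkbd hka hkd
    exact (profile_smoothGapStep hkbd hkab k).mono hka.le (by linarith)
  · filter_upwards [ae_tail_ne hφ hφ0 (tail φ a - tail φ b + tail φ d)] with s hs hφs
    filter_upwards [Measure.ae_ne volume 1] with r hr1 hr
    rw [superMass_gapStep hφ hab hbd hr.1.le (hr.2.lt_of_ne hr1)]
    exact hs hφs

lemma rearrDefect_gapStep (hφ : Integrable φ) (hφ0 : ∀ s, 0 ≤ φ s) (hab : a < b) (hbd : b < d)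
    {c s : ℝ} (hc : tail φ c = tail φ a - tail φ b + tail φ d)
    (hs : ∀ h > 0, tail φ (s + h) < tail φ s) :
    rearrDefect φ (gapStep a b d) s = (Ici c).indicator 1 s - gapStep a b d s := by
  have hlayer (r : ℝ) (hr : r ∈ Ioo (0 : ℝ) 1) :
      layer φ (gapStep a b d) s r = (Ici c).indicator 1 s := by
    rw [layer, superMass_gapStep hφ hab hbd hr.1.le hr.2, ← hc]
    by_cases hcs : c ≤ s
    · rw [if_pos (tail_antitone hφ hφ0 hcs), indicator_of_mem (mem_Ici.2 hcs), Pi.one_apply]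
    · have hlt := hs (c - s) (by linarith)
      rw [add_sub_cancel] at hlt
      rw [if_neg hlt.not_ge, indicator_of_notMem (mt mem_Ici.1 hcs)]
  rw [rearrDefect, intervalIntegral.integral_of_le zero_le_one, integral_Ioc_eq_integral_Ioo,
    setIntegral_congr_fun measurableSet_Ioo hlayer]
  simp

/-- Rearranging `(a, b) ∪ (d, ∞)` transports the mass of `(a, b)` to an interval `(c, d)`. -/
lemma exists_transport (hφ : Integrable φ) (hφ0 : ∀ s, 0 ≤ φ s) (hψ : LocallyIntegrable ψ)
    (hψφ : ∀ᵐ s, φ s = 0 → ψ s = 0) (hab : a < b) (hbd : b < d)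
    (hzero : ∫ s, ψ s * rearrDefect φ (gapStep a b d) s = 0) :
    ∃ c ∈ Icc a d, tail φ c - tail φ d = tail φ a - tail φ b ∧
      ∫ s in c..d, ψ s = ∫ s in a..b, ψ s := by
  have hanti := tail_antitone hφ hφ0
  have hmem : tail φ a - tail φ b + tail φ d ∈ Icc (tail φ d) (tail φ a) :=
    ⟨by linarith [hanti hab.le], by linarith [hanti hbd.le]⟩
  obtain ⟨c, hc, hcm⟩ := intermediate_value_Icc' (hab.trans hbd).le
    (continuous_tail hφ).continuousOn hmem
  refine ⟨c, hc, by linarith, ?_⟩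
  have hψi (x y : ℝ) : Integrable ((Ioc x y).indicator ψ) :=
    (integrable_indicator_iff measurableSet_Ioc).2
      ((hψ.integrableOn_isCompact isCompact_Icc).mono_set Ioc_subset_Icc_self)
  have hdiff : (fun s => ψ s * rearrDefect φ (gapStep a b d) s) =ᵐ[volume]
      fun s => (Ioc c d).indicator ψ s - (Ioc a b).indicator ψ s := by
    filter_upwards [hψφ, ae_tail_add_lt_tail hφ hφ0, Measure.ae_ne volume b,
      Measure.ae_ne volume c] with s hs htail hsb hsc
    by_cases hψs : ψ s = 0
    · simp [indicator, hψs]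
    rw [rearrDefect_gapStep hφ hφ0 hab hbd hcm (htail (mt hs hψs))]
    have hcd := hc.2
    simp only [gapStep, indicator, mem_union, mem_Ici, mem_Ioi, mem_Ioo, mem_Ioc, Pi.one_apply]
    grind
  rw [integral_congr_ae hdiff, integral_sub (hψi c d) (hψi a b),
    integral_indicator measurableSet_Ioc, integral_indicator measurableSet_Ioc,
    ← intervalIntegral.integral_of_le hc.2, ← intervalIntegral.integral_of_le hab.le] at hzero
  linarith

end Gap

section Transport

lemma tendsto_sub_div_sub_of_hasDerivAt {ι : Type*} {l : Filter ι} {P T : ℝ → ℝ} {P' T' d : ℝ}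
    (hP : HasDerivAt P P' d) (hT : HasDerivAt T T' d) (hT' : T' ≠ 0) {c : ι → ℝ}
    (hc : Tendsto c l (𝓝[≠] d)) :
    Tendsto (fun i => (P (c i) - P d) / (T (c i) - T d)) l (𝓝 (P' / T')) := by
  refine ((hP.tendsto_slope.comp hc).div (hT.tendsto_slope.comp hc) hT').congr' ?_
  filter_upwards [hc.eventually eventually_mem_nhdsWithin] with i hi
  simp only [Pi.div_apply, Function.comp_apply, slope, vsub_eq_sub, smul_eq_mul]
  exact mul_div_mul_left _ _ (inv_ne_zero (sub_ne_zero.2 hi))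

lemma lt_of_antitone_of_hasDerivAt_ne_zero {T : ℝ → ℝ} (hT : Antitone T) {T' d x : ℝ}
    (hd : HasDerivAt T T' d) (hT' : T' ≠ 0) (hx : x < d) : T d < T x := by
  have hne : ∀ᶠ y in 𝓝[<] d, T y ≠ T d :=
    (hd.eventually_ne hT').filter_mono (nhdsWithin_mono _ fun y hy => ne_of_lt hy)
  obtain ⟨y, hyne, hxy, hyd⟩ := (hne.and (Ioo_mem_nhdsLT hx)).exists
  exact ((hT hyd.le).lt_of_ne hyne.symm).trans_le (hT hxy.le)

lemma tendsto_transport {T : ℝ → ℝ} (hT : Antitone T) {a d T' : ℝ} (ha : ContinuousAt T a)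
    (hd : HasDerivAt T T' d) (hT' : T' ≠ 0) {c : ℝ → ℝ}
    (hcd : ∀ᶠ h in 𝓝[>] (0 : ℝ), c h ≤ d)
    (hc : ∀ᶠ h in 𝓝[>] (0 : ℝ), T (c h) - T d = T a - T (a + h)) :
    Tendsto c (𝓝[>] 0) (𝓝 d) := by
  have hmass : Tendsto (fun h => T d + (T a - T (a + h))) (𝓝[>] 0) (𝓝 (T d)) := by
    have hah : Tendsto (fun h : ℝ => a + h) (𝓝[>] 0) (𝓝 a) :=
      ((continuous_const_add a).tendsto' 0 a (add_zero a)).mono_left nhdsWithin_le_nhds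
    simpa using ((tendsto_const_nhds (x := T a)).sub (ha.tendsto.comp hah)).const_add (T d)
  refine tendsto_order.2 ⟨fun x hx => ?_, fun x hx => hcd.mono fun h hh => hh.trans_lt hx⟩
  filter_upwards [hc, hmass.eventually_lt_const (lt_of_antitone_of_hasDerivAt_ne_zero hT hd hT' hx)]
    with h hh hlt
  rw [← hh, add_sub_cancel] at hlt
  exact lt_of_not_ge fun hle => hlt.not_ge (hT hle)

lemma div_eq_div_of_transport {T P : ℝ → ℝ} (hT : Antitone T) {a d Ta Td Pa Pd : ℝ} (had : a < d)
    (htrans : ∀ b, a < b → b < d → ∃ c ≤ d, T c - T d = T a - T b ∧ P c - P d = P a - P b)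
    (hTa : HasDerivAt T Ta a) (hTd : HasDerivAt T Td d) (hTa' : Ta ≠ 0) (hTd' : Td ≠ 0)
    (hPa : HasDerivAt P Pa a) (hPd : HasDerivAt P Pd d) : Pa / Ta = Pd / Td := by
  have hah : Tendsto (fun h : ℝ => a + h) (𝓝[>] 0) (𝓝[≠] a) := by
    refine tendsto_nhdsWithin_iff.2
      ⟨((continuous_const_add a).tendsto' 0 a (add_zero a)).mono_left nhdsWithin_le_nhds, ?_⟩
    filter_upwards [self_mem_nhdsWithin] with h hh using by simpa using hh.ne'
  have htrans' (h : ℝ) : ∃ c, 0 < h → h < d - a →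
      c ≤ d ∧ T c - T d = T a - T (a + h) ∧ P c - P d = P a - P (a + h) := by
    by_cases hh : 0 < h ∧ h < d - a
    · obtain ⟨c, hc⟩ := htrans (a + h) (by linarith) (by linarith)
      exact ⟨c, fun _ _ => hc⟩
    · exact ⟨d, fun h0 hd => absurd ⟨h0, hd⟩ hh⟩
  choose c hc using htrans'
  have hev : ∀ᶠ h in 𝓝[>] (0 : ℝ),
      c h ≤ d ∧ T (c h) - T d = T a - T (a + h) ∧ P (c h) - P d = P a - P (a + h) := by
    filter_upwards [Ioo_mem_nhdsGT (sub_pos.2 had)] with h hh using hc h hh.1 hh.2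
  have hcd : Tendsto c (𝓝[>] 0) (𝓝[≠] d) := by
    refine tendsto_nhdsWithin_iff.2 ⟨tendsto_transport hT hTa.continuousAt hTd hTd'
      (hev.mono fun h hh => hh.1) (hev.mono fun h hh => hh.2.1), ?_⟩
    filter_upwards [hev, hah.eventually (hTa.eventually_ne hTa')] with h hh hne hcd
    rw [mem_singleton_iff.1 hcd, sub_self, eq_comm, sub_eq_zero] at hh
    exact hne hh.2.1.symm
  refine tendsto_nhds_unique (tendsto_sub_div_sub_of_hasDerivAt hPa hTa hTa' hah)
    ((tendsto_sub_div_sub_of_hasDerivAt hPd hTd hTd' hcd).congr' ?_)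
  filter_upwards [hev] with h hh
  rw [hh.2.1, hh.2.2, ← neg_sub (P _) (P a), ← neg_sub (T _) (T a), neg_div_neg_eq]

lemma ae_hasDerivAt_tail {φ : ℝ → ℝ} (hφ : Integrable φ) :
    ∀ᵐ s, HasDerivAt (tail φ) (-φ s) s := by
  filter_upwards [LocallyIntegrable.ae_hasDerivAt_integral hφ.locallyIntegrable] with s hs
  have htail : tail φ = fun s => tail φ 0 - ∫ u in (0 : ℝ)..s, φ u := by
    ext s
    rw [← tail_sub_tail hφ, sub_sub_cancel]
  rw [htail]
  exact (hs 0).const_sub _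

lemma ae_ae_mul_eq_mul_of_transport {φ ψ : ℝ → ℝ} (hφ : Integrable φ) (hφ0 : ∀ s, 0 ≤ φ s)
    (hψ : LocallyIntegrable ψ) (hψφ : ∀ᵐ s, φ s = 0 → ψ s = 0)
    (htrans : ∀ a b d : ℝ, a < b → b < d → ∃ c ≤ d, tail φ c - tail φ d = tail φ a - tail φ b ∧
      ∫ s in c..d, ψ s = ∫ s in a..b, ψ s) :
    ∀ᵐ a, ∀ᵐ d, φ a * ψ d = φ d * ψ a := by
  have hψi (x y : ℝ) : IntervalIntegrable ψ volume x y :=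
    (hψ.integrableOn_isCompact isCompact_uIcc).intervalIntegrable
  have hprim (x y : ℝ) : (∫ u in (0 : ℝ)..x, ψ u) - ∫ u in (0 : ℝ)..y, ψ u = -∫ u in x..y, ψ u := by
    rw [intervalIntegral.integral_interval_sub_left (hψi _ _) (hψi _ _),
      intervalIntegral.integral_symm]
  have hmul : ∀ a d, a < d → (φ a = 0 → ψ a = 0) → (φ d = 0 → ψ d = 0) →
      HasDerivAt (tail φ) (-φ a) a → HasDerivAt (tail φ) (-φ d) d →
      HasDerivAt (fun s => ∫ u in (0 : ℝ)..s, ψ u) (ψ a) a →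
      HasDerivAt (fun s => ∫ u in (0 : ℝ)..s, ψ u) (ψ d) d → φ a * ψ d = φ d * ψ a := by
    intro a d had hza hzd hTa hTd hPa hPd
    by_cases hφa : φ a = 0
    · simp [hφa, hza hφa]
    by_cases hφd : φ d = 0
    · simp [hφd, hzd hφd]
    have hdiv := div_eq_div_of_transport (tail_antitone hφ hφ0) had (fun b hab hbd => by
      obtain ⟨c, hc, hT, hP⟩ := htrans a b d hab hbd
      exact ⟨c, hc, hT, by rw [hprim, hprim, hP]⟩)
      hTa hTd (neg_ne_zero.2 hφa) (neg_ne_zero.2 hφd) hPa hPd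
    rw [div_eq_div_iff (neg_ne_zero.2 hφa) (neg_ne_zero.2 hφd)] at hdiv
    linarith
  have hgood := (ae_hasDerivAt_tail hφ).and
    ((LocallyIntegrable.ae_hasDerivAt_integral hψ).and hψφ)
  filter_upwards [hgood] with a ⟨hTa, hPa, hza⟩
  filter_upwards [hgood] with d ⟨hTd, hPd, hzd⟩
  rcases lt_trichotomy a d with had | rfl | hda
  · exact hmul a d had hza hzd hTa hTd (hPa 0) (hPd 0)
  · rfl
  · exact (hmul d a hda hzd hza hTd hTa (hPd 0) (hPa 0)).symm

lemma ae_ae_mul_eq_mul_of_integral_rearrDefect_eq_zero {φ ψ : ℝ → ℝ} (hφ : Integrable φ)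
    (hφ0 : ∀ s, 0 ≤ φ s) (hψ : LocallyIntegrable ψ) (hψφ : ∀ᵐ s, φ s = 0 → ψ s = 0) (c : ℝ)
    (hzero : ∀ a b d : ℚ, a < b → b < d → ∀ k : ℕ,
      ∫ s, ψ s * rearrDefect φ (fun u => smoothGapStep a b d k (c + u)) s = 0) :
    ∀ᵐ a, ∀ᵐ d, φ a * ψ d = φ d * ψ a := by
  have hseq (x : ℝ) : ∃ q : ℕ → ℚ, Tendsto (fun k => (q k : ℝ) - c) atTop (𝓝 x) := by
    obtain ⟨q, -, -, hq⟩ := Real.exists_seq_rat_strictMono_tendsto (x + c)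
    exact ⟨q, by simpa using hq.sub_const c⟩
  refine ae_ae_mul_eq_mul_of_transport hφ hφ0 hψ hψφ fun a b d hab hbd => ?_
  obtain ⟨ak, hak⟩ := hseq a
  obtain ⟨bk, hbk⟩ := hseq b
  obtain ⟨dk, hdk⟩ := hseq d
  obtain ⟨e, he, htail, hint⟩ := exists_transport hφ hφ0 hψ hψφ hab hbd <|
    integral_mul_rearrDefect_gapStep hφ hφ0 hψ hψφ hab hbd hak hbk hdk <| by
      filter_upwards [hak.eventually_lt hbk hab, hbk.eventually_lt hdk hbd] with k hkab hkbd
      have hk := hzero (ak k) (bk k) (dk k) (by exact_mod_cast (sub_lt_sub_iff_right c).1 hkab)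
        (by exact_mod_cast (sub_lt_sub_iff_right c).1 hkbd) k
      simpa only [smoothGapStep_const_add] using hk
  exact ⟨e, he.2, htail, hint⟩

end Transport

/-! ### The logarithmic gradient -/

section ParallelGradient

lemma measurableSet_ae {α β : Type*} [MeasurableSpace α] [MeasurableSpace β] {ν : Measure β}
    [SFinite ν] {P : α → β → Prop} (hP : MeasurableSet {q : α × β | P q.1 q.2}) :
    MeasurableSet {x | ∀ᵐ y ∂ν, P x y} :=
  measurable_measure_prodMk_left hP.compl (measurableSet_singleton 0)

lemma measurableSet_mem_span_singleton {α E : Type*} [MeasurableSpace α] [NormedAddCommGroup E]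
    [InnerProductSpace ℝ E] [SecondCountableTopology E] [MeasurableSpace E] [BorelSpace E]
    {u z : α → E} (hu : Measurable u) (hz : Measurable z) :
    MeasurableSet {x | u x ∈ ℝ ∙ z x} := by
  have hproj (x : α) : u x ∈ ℝ ∙ z x ↔
      (z x = 0 → u x = 0) ∧ ⟪z x, z x⟫ • u x = ⟪z x, u x⟫ • z x := by
    rw [Submodule.mem_span_singleton]
    refine ⟨?_, fun ⟨hzero, hx⟩ => ?_⟩
    · rintro ⟨t, ht⟩
      rw [← ht, real_inner_smul_right, smul_smul, mul_comm]
      exact ⟨fun h => by rw [h, smul_zero], rfl⟩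
    · by_cases hzx : z x = 0
      · exact ⟨0, by rw [zero_smul, hzero hzx]⟩
      · refine ⟨⟪z x, z x⟫⁻¹ * ⟪z x, u x⟫, ?_⟩
        rw [mul_smul, ← hx, inv_smul_smul₀ (inner_self_ne_zero.2 hzx)]
  simp only [hproj]
  exact .inter (.imp (hz (measurableSet_singleton 0)) (hu (measurableSet_singleton 0)))
    (measurableSet_eq_fun ((hz.inner hz).smul hu) ((hz.inner hu).smul hz))

lemma ae_ae_of_forall_ae_ae_smul {α E : Type*} [MeasurableSpace α] [NormedAddCommGroup E]
    [NormedSpace ℝ E] [FiniteDimensional ℝ E] [MeasurableSpace E] [BorelSpace E] {μ : Measure α}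
    [SFinite μ] {ν : Measure E} [ν.IsAddHaarMeasure] {P : α → E → Prop}
    (hP : MeasurableSet {q : α × E | P q.1 q.2}) (h : ∀ z, ∀ᵐ x ∂μ, ∀ᵐ s : ℝ, P x (s • z)) :
    ∀ᵐ x ∂μ, ∀ᵐ z ∂ν, P x z := by
  have hQ : MeasurableSet {z | ∀ᵐ x ∂μ, P x z} := measurableSet_ae (measurable_swap hP)
  have hline (z : E) : ∀ᵐ s : ℝ, ∀ᵐ x ∂μ, P x (s • z) := by
    rw [← Measure.ae_ae_comm]
    · exact h z
    · exact (by fun_prop : Measurable fun q : α × ℝ => (q.1, q.2 • z)) hP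
  have hscale : ∀ᵐ s : ℝ, ∀ᵐ z ∂ν, ∀ᵐ x ∂μ, P x (s • z) := by
    rw [← Measure.ae_ae_comm]
    · exact Eventually.of_forall hline
    · exact (by fun_prop : Measurable fun q : E × ℝ => q.2 • q.1) hQ
  obtain ⟨s, hs, hs0⟩ := (hscale.and (Measure.ae_ne volume 0)).exists
  rw [Measure.ae_ae_comm hP]
  filter_upwards [(Measure.quasiMeasurePreserving_smul ν (inv_ne_zero hs0)).ae hs] with z hz
  simpa [hs0] using hz

variable {n : ℕ} {f : En n → ℝ} {f' : En n → En n}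

lemma IsPSMeasure.ae_ae_mul_inner_eq (hPS : IsPSMeasure f f') (hf : Measurable f)
    (hf' : Measurable f') (hW : MemW f f') {v w : En n} (hv : ‖v‖ = 1) (hw : ‖w‖ = 1)
    (hvw : ⟪v, w⟫ = 0) :
    ∀ᵐ x : En n, ∀ᵐ s : ℝ, f x * ⟪w, f' (x + s • v)⟫ = f (x + s • v) * ⟪w, f' x⟫ := by
  have hmeas : MeasurableSet {q : En n × ℝ |
      f q.1 * ⟪w, f' (q.1 + q.2 • v)⟫ = f (q.1 + q.2 • v) * ⟪w, f' q.1⟫} :=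
    measurableSet_eq_fun (by fun_prop) (by fun_prop)
  refine ae_of_ae_ae_add_smul v (measurableSet_ae hmeas) ?_
  have hdefect : ∀ᵐ z : En n, ∀ a b d : ℚ, a < b → b < d → ∀ k : ℕ,
      ∫ s : ℝ, ⟪w, f' (z + s • v)⟫ * rearrDefect (fun u => f (z + u • v))
        (fun u => smoothGapStep a b d k (⟪z, v⟫ + u)) s = 0 := by
    simp only [ae_all_iff]
    intro a b d hab hbd k
    exact hPS.ae_integral_inner_mul_rearrDefect_eq_zero hf hf' hW hv hw hvw
      (profile_smoothGapStep (by exact_mod_cast hbd) (by exact_mod_cast hab) k)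
  filter_upwards [hdefect, ae_integrable_add_smul hv hW.2.1,
    ae_locallyIntegrable_add_smul (hW.2.2.hasWeakDirDeriv w).locallyIntegrable_deriv v,
    ae_ae_add_smul v (hW.ae_inner_eq_zero hf hf' w)] with z hz hint hloc hzero
  filter_upwards [ae_ae_mul_eq_mul_of_integral_rearrDefect_eq_zero hint (fun _ => hW.1 _) hloc
    hzero ⟪z, v⟫ hz] with a ha
  filter_upwards [(measurePreserving_add_left volume a).quasiMeasurePreserving.ae ha] with s hs
  simpa only [add_smul, add_assoc] using hs

/-- The `2 × 2` minor of the pairs `(f, f')` at `x` and `y`. It is `f x * f y` times the increment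
of the logarithmic gradient `f' / f`, but needs no division. -/
def gradMinor (f : En n → ℝ) (f' : En n → En n) (x y : En n) : En n := f x • f' y - f y • f' x

lemma IsPSMeasure.ae_ae_gradMinor_add_smul_mem_span (hPS : IsPSMeasure f f') (hf : Measurable f)
    (hf' : Measurable f') (hW : MemW f f') {v : En n} (hv : ‖v‖ = 1) :
    ∀ᵐ x : En n, ∀ᵐ s : ℝ, gradMinor f f' x (x + s • v) ∈ ℝ ∙ v := by
  let B := (stdOrthonormalBasis ℝ (ℝ ∙ v)ᗮ).toBasis
  have hbasis : ∀ᵐ x : En n, ∀ i, ∀ᵐ s : ℝ,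
      f x * ⟪(B i : En n), f' (x + s • v)⟫ = f (x + s • v) * ⟪(B i : En n), f' x⟫ := by
    refine ae_all_iff.2 fun i => hPS.ae_ae_mul_inner_eq hf hf' hW hv ?_
      (Submodule.mem_orthogonal_singleton_iff_inner_right.1 (B i).2)
    simp [B, ← Submodule.coe_norm]
  filter_upwards [hbasis] with x hx
  filter_upwards [ae_all_iff.2 hx] with s hs
  have hker : (⊤ : Submodule ℝ (ℝ ∙ v)ᗮ) ≤
      LinearMap.ker ((innerₛₗ ℝ (gradMinor f f' x (x + s • v))).comp (ℝ ∙ v)ᗮ.subtype) := by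
    rw [← B.span_eq, Submodule.span_le]
    rintro _ ⟨i, rfl⟩
    simp [gradMinor, real_inner_comm (B i : En n), hs i]
  rw [← Submodule.orthogonal_orthogonal (ℝ ∙ v), Submodule.mem_orthogonal']
  exact fun y hy => hker (mem_univ (⟨y, hy⟩ : (ℝ ∙ v)ᗮ))

lemma IsPSMeasure.ae_ae_gradMinor_mem_span (hPS : IsPSMeasure f f') (hf : Measurable f)
    (hf' : Measurable f') (hW : MemW f f') :
    ∀ᵐ x : En n, ∀ᵐ y : En n, gradMinor f f' x y ∈ ℝ ∙ (y - x) := by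
  have hmeas : MeasurableSet {q : En n × En n | gradMinor f f' q.1 (q.1 + q.2) ∈ ℝ ∙ q.2} :=
    measurableSet_mem_span_singleton (by unfold gradMinor; fun_prop) measurable_snd
  have hline (z : En n) : ∀ᵐ x : En n, ∀ᵐ s : ℝ, gradMinor f f' x (x + s • z) ∈ ℝ ∙ (s • z) := by
    rcases eq_or_ne z 0 with rfl | hz
    · simp [gradMinor]
    have hnorm : ‖z‖ ≠ 0 := norm_ne_zero_iff.2 hz
    filter_upwards [hPS.ae_ae_gradMinor_add_smul_mem_span hf hf' hW
      (v := ‖z‖⁻¹ • z) (by simp [norm_smul, hnorm])] with x hx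
    filter_upwards [(Measure.quasiMeasurePreserving_smul volume hnorm).ae hx,
      Measure.ae_ne volume 0] with s hs hs0
    rwa [smul_eq_mul, mul_comm, mul_smul, smul_inv_smul₀ hnorm,
      Submodule.span_singleton_smul_eq (inv_ne_zero hnorm).isUnit,
      ← Submodule.span_singleton_smul_eq hs0.isUnit] at hs
  have hinc : ∀ᵐ x : En n, ∀ᵐ z : En n, gradMinor f f' x (x + z) ∈ ℝ ∙ z :=
    ae_ae_of_forall_ae_ae_smul hmeas hline
  filter_upwards [hinc] with x hx
  filter_upwards [(measurePreserving_sub_right volume x).quasiMeasurePreserving.ae hx] with y hy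
  simpa using hy

end ParallelGradient

section AffineGradient

variable {n : ℕ} {f : En n → ℝ} {f' : En n → En n}

lemma exists_affine_of_gradMinor_mem_span {x₀ x₁ : En n} (hx₀ : f x₀ ≠ 0) (hx₁ : f x₁ ≠ 0)
    (h : gradMinor f f' x₀ x₁ ∈ ℝ ∙ (x₁ - x₀)) :
    ∃ (κ : ℝ) (b : En n), f' x₀ = f x₀ • (κ • x₀ + b) ∧ f' x₁ = f x₁ • (κ • x₁ + b) := by
  obtain ⟨γ, hγ⟩ := Submodule.mem_span_singleton.1 h
  set κ := γ / (f x₀ * f x₁) with hκ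
  refine ⟨κ, (f x₀)⁻¹ • f' x₀ - κ • x₀, ?_, ?_⟩
  · rw [add_sub_cancel, smul_inv_smul₀ hx₀]
  · refine smul_right_injective _ hx₀ ?_
    calc f x₀ • f' x₁ = (f x₀ * f x₁ * κ) • (x₁ - x₀) + f x₁ • f' x₀ := by
          rw [hκ, mul_div_cancel₀ _ (mul_ne_zero hx₀ hx₁), hγ, gradMinor, sub_add_cancel]
      _ = (f x₀ * f x₁ * κ) • (x₁ - x₀) + (f x₀ * f x₁ * (f x₀)⁻¹) • f' x₀ := by
          rw [mul_comm (f x₀) (f x₁), mul_inv_cancel_right₀ hx₀]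
      _ = f x₀ • f x₁ • (κ • x₁ + ((f x₀)⁻¹ • f' x₀ - κ • x₀)) := by module

lemma sub_affine_mem_span {x y b : En n} {κ : ℝ} (hx : f x ≠ 0)
    (hfx : f' x = f x • (κ • x + b)) (h : gradMinor f f' x y ∈ ℝ ∙ (y - x)) :
    f' y - f y • (κ • y + b) ∈ ℝ ∙ (y - x) := by
  rw [← Submodule.smul_mem_iff _ hx]
  convert! sub_mem h (Submodule.smul_mem _ (f x * f y * κ) (Submodule.mem_span_singleton_self _))
    using 1
  rw [gradMinor, hfx]
  module

lemma ae_disjoint_span_sub {E : Type*} [NormedAddCommGroup E] [NormedSpace ℝ E]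
    [FiniteDimensional ℝ E] [MeasurableSpace E] [BorelSpace E] {μ : Measure E}
    [μ.IsAddHaarMeasure] (hE : 1 < Module.finrank ℝ E) {x₀ x₁ : E} (hne : x₁ ≠ x₀) :
    ∀ᵐ y ∂μ, Disjoint (ℝ ∙ (y - x₀)) (ℝ ∙ (y - x₁)) := by
  have hnull : μ (ℝ ∙ (x₁ - x₀) : Submodule ℝ E) = 0 := by
    refine Measure.addHaar_submodule _ _ fun htop => hE.ne ?_
    rw [← finrank_span_singleton (K := ℝ) (sub_ne_zero.2 hne), htop, finrank_top]
  have hline : ∀ᵐ y ∂μ, y - x₀ ∉ ℝ ∙ (x₁ - x₀) :=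
    (measurePreserving_sub_right μ x₀).quasiMeasurePreserving.ae <|
      (measure_eq_zero_iff_ae_notMem.1 hnull)
  filter_upwards [hline] with y hy
  rw [Submodule.disjoint_span_singleton, Submodule.mem_span_singleton]
  rintro ⟨t, ht⟩
  have hrel : (1 - t) • (y - x₀) = x₁ - x₀ := by
    rw [sub_smul, ht]
    module
  have ht1 : 1 - t ≠ 0 := left_ne_zero_of_smul (hrel ▸ sub_ne_zero.2 hne)
  refine absurd ((Submodule.smul_mem_iff _ ht1).1 ?_) hy
  exact hrel ▸ Submodule.mem_span_singleton_self _

lemma exists_ae_eq_smul_affine (hn : 2 ≤ n)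
    (h : ∀ᵐ x : En n, ∀ᵐ y : En n, gradMinor f f' x y ∈ ℝ ∙ (y - x)) (hf : ¬ f =ᵐ[volume] 0) :
    ∃ (κ : ℝ) (b : En n), ∀ᵐ y, f' y = f y • (κ • y + b) := by
  have : Nontrivial (En n) := Module.nontrivial_of_finrank_pos (R := ℝ) (by simp; omega)
  have hfreq : ∃ᶠ x in ae (volume : Measure (En n)), f x ≠ 0 :=
    fun h => hf (h.mono fun x hx => not_not.1 hx)
  obtain ⟨x₀, hx₀, h₀⟩ := (hfreq.and_eventually h).exists
  obtain ⟨x₁, hx₁, h₁, h₀₁, hne⟩ :=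
    (hfreq.and_eventually (h.and (h₀.and (Measure.ae_ne volume x₀)))).exists
  obtain ⟨κ, b, hκ₀, hκ₁⟩ := exists_affine_of_gradMinor_mem_span hx₀ hx₁ h₀₁
  refine ⟨κ, b, ?_⟩
  filter_upwards [h₀, h₁, ae_disjoint_span_sub (by simp; omega) hne] with y hy₀ hy₁ hdisj
  exact sub_eq_zero.1 (Submodule.disjoint_def.1 hdisj _ (sub_affine_mem_span hx₀ hκ₀ hy₀)
    (sub_affine_mem_span hx₁ hκ₁ hy₁))

end AffineGradient

/-! ### Gaussian densities -/

section Gaussian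

variable {E : Type*} [NormedAddCommGroup E] [InnerProductSpace ℝ E]

/-- The quadratic exponent of a Gaussian density, normalized to have gradient `x ↦ κ • x + b`. -/
def quad (κ : ℝ) (b x : E) : ℝ := κ / 2 * ⟪x, x⟫ + ⟪b, x⟫

lemma contDiff_quad {m : WithTop ℕ∞} (κ : ℝ) (b : E) : ContDiff ℝ m (quad κ b) :=
  (contDiff_const.mul (contDiff_id.inner ℝ contDiff_id)).add (contDiff_const.inner ℝ contDiff_id)

lemma continuous_mul_exp_quad (C κ : ℝ) (b : E) :
    Continuous fun x => C * Real.exp (quad κ b x) :=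
  continuous_const.mul (contDiff_quad (m := 0) κ b).continuous.rexp

lemma fderiv_quad (κ : ℝ) (b x w : E) : fderiv ℝ (quad κ b) x w = ⟪w, κ • x + b⟫ := by
  have h : HasFDerivAt (quad κ b) _ x := (((hasFDerivAt_id x).inner ℝ (hasFDerivAt_id x)).const_mul
    (κ / 2)).add ((hasFDerivAt_const b x).inner ℝ (hasFDerivAt_id x))
  rw [h.fderiv]
  simp [inner_add_right, inner_smul_right, real_inner_comm x w, real_inner_comm b w]
  ring

lemma quad_eq_sum_inner {ι : Type*} [Fintype ι] (e : OrthonormalBasis ι ℝ E) (κ : ℝ) (b x : E) :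
    quad κ b x = ∑ i, quad κ ⟪b, e i⟫ ⟪x, e i⟫ := by
  simp only [quad, Finset.sum_add_distrib, ← Finset.mul_sum]
  rw [← e.sum_inner_mul_inner x x, ← e.sum_inner_mul_inner b x]
  simp [real_inner_comm x, ← sq, mul_comm]

variable [FiniteDimensional ℝ E] [MeasurableSpace E] [BorelSpace E] {κ : ℝ} {b : E}

lemma integrable_exp_quad (hκ : κ < 0) (b : E) : Integrable fun x => Real.exp (quad κ b x) := by
  have h := (GaussianFourier.integrable_cexp_neg_mul_sq_norm_add (b := ((-κ / 2 : ℝ) : ℂ))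
    (by rw [Complex.ofReal_re]; linarith) 1 b).re
  refine h.congr (Eventually.of_forall fun x => ?_)
  have hcast : -((-κ / 2 : ℝ) : ℂ) * (‖x‖ : ℂ) ^ 2 + 1 * (⟪b, x⟫ : ℂ) = (quad κ b x : ℂ) := by
    rw [quad, real_inner_self_eq_norm_sq]
    push_cast
    ring
  exact (congrArg (fun z => (Complex.exp z).re) hcast).trans (Complex.exp_ofReal_re _)

lemma neg_of_integrable_exp_quad [Nontrivial E] {μ : Measure E} [μ.IsAddHaarMeasure]
    (h : Integrable (fun x => Real.exp (quad κ b x)) μ) : κ < 0 := by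
  by_contra! hκ
  have hle (x : E) : 1 ≤ Real.exp (quad κ b x) + Real.exp (quad κ b (-x)) := by
    have hquad : 0 ≤ quad κ b x ∨ 0 ≤ quad κ b (-x) := by
      have hsum : 0 ≤ quad κ b x + quad κ b (-x) := by
        have := mul_nonneg hκ (real_inner_self_nonneg (x := x))
        simp only [quad, inner_neg_neg, inner_neg_right (𝕜 := ℝ) b x]
        linarith
      by_contra! hneg
      linarith
    rcases hquad with hx | hx
    · linarith [Real.one_le_exp hx, Real.exp_pos (quad κ b (-x))]
    · linarith [Real.one_le_exp hx, Real.exp_pos (quad κ b x)]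
  have hone : Integrable (fun _ : E => (1 : ℝ)) μ :=
    (h.add h.comp_neg).mono' aestronglyMeasurable_const <|
      Eventually.of_forall fun x => by simpa using hle x
  simp [integrable_const_iff, isFiniteMeasure_iff] at hone

end Gaussian

lemma MemW.exists_ae_eq_mul_exp_quad {n : ℕ} {f : En n → ℝ} {f' : En n → En n} (hW : MemW f f')
    (hf : Measurable f) (hf0 : ¬ f =ᵐ[volume] 0) {κ : ℝ} {b : En n}
    (hlog : ∀ᵐ y, f' y = f y • (κ • y + b)) :
    ∃ C : ℝ, 0 < C ∧ ∀ᵐ x, f x = C * Real.exp (quad κ b x) := by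
  have hP : ContDiff ℝ 1 fun x => Real.exp (-quad κ b x) := (contDiff_quad κ b).neg.exp
  have hzero (w : En n) : HasWeakDirDeriv volume w (fun x => f x * Real.exp (-quad κ b x)) 0 := by
    refine ((hW.2.2.hasWeakDirDeriv w).mul_contDiff hP).congr_deriv ?_
    filter_upwards [hlog] with x hx
    have hquad : DifferentiableAt ℝ (quad κ b) x :=
      (contDiff_quad (m := 1) κ b).differentiable one_ne_zero x
    rw [fderiv_exp hquad.fun_neg, fderiv_fun_neg, hx]
    simp only [neg_apply, smul_apply, fderiv_quad, real_inner_smul_right, smul_eq_mul,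
      Pi.zero_apply]
    ring
  have hfreq : ∃ᶠ x in ae (volume : Measure (En n)), f x ≠ 0 :=
    fun h => hf0 (h.mono fun x hx => not_not.1 hx)
  obtain ⟨y, hy, hconst⟩ := (hfreq.and_eventually (HasWeakDirDeriv.ae_eq_const hzero
    (hf.mul hP.continuous.measurable))).exists
  refine ⟨f y * Real.exp (-quad κ b y), by have := (hW.1 y).lt_of_ne' hy; positivity, ?_⟩
  filter_upwards [hconst] with x hx
  rw [← hx, mul_assoc, ← Real.exp_add, neg_add_cancel, Real.exp_zero, mul_one]

lemma hasWeakDeriv_deriv {g : ℝ → ℝ} (hg : ContDiff ℝ 1 g) : HasWeakDeriv g (deriv g) := by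
  have hd : Continuous (deriv g) := hg.continuous_deriv le_rfl
  refine ⟨hg.continuous.locallyIntegrable, hd.locallyIntegrable, fun φ hφ hc => ?_⟩
  simp only [mul_comm (φ _)]
  exact integral_mul_deriv_eq_deriv_mul_of_integrable
    (fun x _ => (hg.differentiable one_ne_zero x).hasDerivAt)
    (fun x _ => (hφ.differentiable one_ne_zero x).hasDerivAt)
    ((hg.continuous.mul (hφ.continuous_deriv le_rfl)).integrable_of_hasCompactSupport
      hc.deriv.mul_left)
    ((hd.mul hφ.continuous).integrable_of_hasCompactSupport hc.mul_left)
    ((hg.continuous.mul hφ.continuous).integrable_of_hasCompactSupport hc.mul_left)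

lemma exists_ae_eq_prod_of_ae_eq_mul_exp_quad {n : ℕ} (hn : n ≠ 0) {f : En n → ℝ} {C κ : ℝ}
    {b : En n} (hC : 0 < C) (hκ : κ < 0) (hf : ∀ᵐ x, f x = C * Real.exp (quad κ b x))
    (e : OrthonormalBasis (Fin n) ℝ (En n)) :
    ∃ F : Fin n → ℝ → ℝ,
      (∀ i, Integrable (F i) volume ∧ (∃ Fd : ℝ → ℝ, HasWeakDeriv (F i) Fd) ∧
        ∀ t : ℝ, 0 < F i t) ∧
      ∀ᵐ x, f x = ∏ i, F i ⟪x, e i⟫ := by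
  refine ⟨fun i t => C ^ (n : ℝ)⁻¹ * Real.exp (quad κ ⟪b, e i⟫ t),
    fun i => ⟨?_, ?_, ?_⟩, hf.mono fun x hx => ?_⟩
  · exact (integrable_exp_quad hκ _).const_mul _
  · exact ⟨_, hasWeakDeriv_deriv (contDiff_const.mul (contDiff_quad κ _).exp)⟩
  · exact fun t => by positivity
  · rw [hx, quad_eq_sum_inner e, Real.exp_sum, Finset.prod_mul_distrib, Finset.prod_const,
      Finset.card_univ, Fintype.card_fin, Real.rpow_inv_natCast_pow hC.le hn]

/-! ### Independence of representatives -/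

section Representatives

variable {n : ℕ} {f g : En n → ℝ} {f' g' : En n → En n}

lemma perim_congr_density (h : f =ᵐ[volume] g) (h' : f' =ᵐ[volume] g') (E : Set (En n)) :
    perim f f' univ E = perim g g' univ E := by
  refine iSup_congr fun φ => iSup_congr fun _ => congrArg ENNReal.ofReal ?_
  rw [setIntegral_univ, setIntegral_univ]
  refine integral_congr_ae ?_
  filter_upwards [h, h'] with x hx hx'
  rw [hx, hx']

lemma ehrhardSymm_congr_density (h : f =ᵐ[volume] g) (v : En n) (E : Set (En n)) :
    ehrhardSymm f v E =ᵐ[volume] ehrhardSymm g v E := by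
  filter_upwards [ae_ae_add_smul v h] with x hx
  have hfiber : fiberMeasure f (x - ⟪x, v⟫ • v) v = fiberMeasure g (x - ⟪x, v⟫ • v) v := by
    refine withDensity_congr_ae ?_
    filter_upwards [(measurePreserving_add_left volume (-⟪x, v⟫)).quasiMeasurePreserving.ae hx]
      with t ht
    rw [add_smul, neg_smul, ← add_assoc, ← sub_eq_add_neg] at ht
    rw [ht]
  refine propext ?_
  change _ ∈ ehrhard1D _ _ _ ↔ _ ∈ ehrhard1D _ _ _
  rw [hfiber]

lemma MemW.congr (hW : MemW f f') (h : f =ᵐ[volume] g) (h' : f' =ᵐ[volume] g')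
    (hg : ∀ x, 0 ≤ g x) : MemW g g' := by
  refine ⟨hg, hW.2.1.congr h, hW.2.2.1.congr h, hW.2.2.2.1.congr h', fun φ hφ hc => ?_⟩
  have hdvg : ∫ x, g x * dvg φ x = ∫ x, f x * dvg φ x :=
    integral_congr_ae (h.mono fun x hx => by simp only [hx])
  have hgrad : ∫ x, ⟪φ x, g' x⟫ = ∫ x, ⟪φ x, f' x⟫ :=
    integral_congr_ae (h'.mono fun x hx => by simp only [hx])
  rw [hdvg, hgrad, hW.2.2.2.2 φ hφ hc]

lemma IsPSMeasure.congr (hPS : IsPSMeasure f f') (h : f =ᵐ[volume] g) (h' : f' =ᵐ[volume] g') :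
    IsPSMeasure g g' := by
  intro v hv E hE hfin
  rw [← perim_congr_density h h'] at hfin
  simpa only [perim_congr_set (ehrhardSymm_congr_density h v E), perim_congr_density h h'] using
    hPS v hv E hE hfin

lemma MemW.exists_measurable_ae_eq (hW : MemW f f') :
    ∃ (g : En n → ℝ) (g' : En n → En n), Measurable g ∧ Measurable g' ∧ f =ᵐ[volume] g ∧
      f' =ᵐ[volume] g' ∧ ∀ x, 0 ≤ g x := by
  have hf : AEMeasurable f volume := hW.2.1.aemeasurable
  have hf' : AEMeasurable f' volume := hW.2.2.2.1.aestronglyMeasurable.aemeasurable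
  refine ⟨fun x => max (hf.mk f x) 0, hf'.mk f', hf.measurable_mk.max measurable_const,
    hf'.measurable_mk, ?_, hf'.ae_eq_mk, fun x => le_max_right _ _⟩
  filter_upwards [hf.ae_eq_mk] with x hx
  rw [← hx, max_eq_left (hW.1 x)]

end Representatives

theorem product_structure_all_directions_general {n : ℕ} (hn : 2 ≤ n)
    (f : En n → ℝ) (f' : En n → En n) (hW : MemW f f') (hPS : IsPSMeasure f f') :
    (f =ᵐ[volume] 0) ∨ ∃ (C κ : ℝ) (b : En n), 0 < C ∧ κ < 0 ∧
      ∀ᵐ x, f x = C * Real.exp (quad κ b x) := by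
  refine or_iff_not_imp_left.2 fun hf0 => ?_
  have : Nontrivial (En n) := Module.nontrivial_of_finrank_pos (R := ℝ) (by simp; omega)
  obtain ⟨g, g', hg, hg', hfg, hfg', hg0⟩ := hW.exists_measurable_ae_eq
  have hWg := hW.congr hfg hfg' hg0
  have hspan := (hPS.congr hfg hfg').ae_ae_gradMinor_mem_span hg hg' hWg
  obtain ⟨κ, b, hlog⟩ := exists_ae_eq_smul_affine hn hspan fun h => hf0 (hfg.trans h)
  obtain ⟨C, hC, hgexp⟩ := hWg.exists_ae_eq_mul_exp_quad hg (fun h => hf0 (hfg.trans h)) hlog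
  have hfexp : ∀ᵐ x, f x = C * Real.exp (quad κ b x) := hfg.trans hgexp
  have hint := (integrable_const_mul_iff hC.ne'.isUnit _).1 (hW.2.1.congr hfexp)
  exact ⟨C, κ, b, hC, neg_of_integrable_exp_quad hint, hfexp⟩

/-- **Product structure in all directions.** A PS measure `μ = f·Lⁿ ∈ 𝒲(ℝⁿ)`, `n ≥ 2`,
either has vanishing density or, in every orthonormal frame, its density splits as a
product of positive one-dimensional `L¹ ∩ W^{1,1}_loc` factors; in particular some
continuous strictly positive function represents `f` a.e. -/
theorem product_structure_all_directions {n : ℕ} (hn : 2 ≤ n)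
    (f : En n → ℝ) (f' : En n → En n) (hW : MemW f f') (hPS : IsPSMeasure f f') :
    (f =ᵐ[(volume : Measure (En n))] 0) ∨
      ((∀ b : OrthonormalBasis (Fin n) ℝ (En n), ∃ F : Fin n → ℝ → ℝ,
          (∀ i, Integrable (F i) volume ∧ (∃ Fd : ℝ → ℝ, HasWeakDeriv (F i) Fd) ∧
            ∀ t : ℝ, 0 < F i t) ∧
          ∀ᵐ x ∂(volume : Measure (En n)), f x = ∏ i, F i ⟪x, b i⟫) ∧
        ∃ g : En n → ℝ, Continuous g ∧ (∀ x, 0 < g x) ∧ f =ᵐ[(volume : Measure (En n))] g) := by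
  exact (product_structure_all_directions_general hn f f' hW hPS).imp_right
    fun ⟨C, κ, b, hC, hκ, hexp⟩ => ⟨exists_ae_eq_prod_of_ae_eq_mul_exp_quad (by omega) hC hκ hexp,
      _, continuous_mul_exp_quad C κ b, fun x => by positivity, hexp⟩

end
end

section
/- Let μ = f·L¹ on ℝ with the standard logistic density f(x) = 1/(e^{x/2} + e^{−x/2})². Then μ is a PS measure: for every v ∈ {−1, +1} and every measurable set E ⊆ ℝ of finite μ-perimeter, Per_μ(S_v(E)) ≤ Per_μ(E). Moreover, f is not of Gaussian form: there are no constants C ≥ 0, c > 0 and a ∈ ℝ with f(x) = C·e^{−c(x−a)²} for all x ∈ ℝ. -/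
/-!
Write `μ = f·L¹` for a probability measure with distribution function `F`, where `f = F (1 - F)`.

Every set `E` of mass `M = μ E` has perimeter at least `M (1 - M)`. To see this, take
`ψ x = ∫_{(-∞, x]} (χ_E - M) dμ`, for which `|ψ| ≤ F (1 - F) = f`. Then `ψ / f` is, up to cutoffs
and to replacing `χ_E` by continuous functions, an admissible test function, and it yields
`∫ χ_E ψ' = M - M²`. A half-line of mass `M` with endpoint `x` has perimeter at most
`f x = F x (1 - F x) = M (1 - M)`, so symmetrization does not increase the perimeter.

The logistic density is the derivative `σ' = σ (1 - σ)` of the sigmoid, so it is of this kind. It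
decays like `e^{-x}` at `+∞`, whereas a Gaussian decays faster.
-/

open MeasureTheory Set Filter
open scoped ENNReal Topology

noncomputable section

/-- The weighted variation `‖g‖_{BV_ν(ℝ)}` for `ν = f·L¹` with weak derivative `f'`. -/
noncomputable def bvVar1 (f f' : ℝ → ℝ) (g : ℝ → ℝ) : ℝ≥0∞ :=
  ⨆ (φ : ℝ → ℝ) (_ : ContDiff ℝ 1 φ ∧ HasCompactSupport φ ∧ ∀ x, |φ x| ≤ 1),
    ENNReal.ofReal (∫ x, g x * (f x * deriv φ x + φ x * f' x))

/-- The weighted perimeter `Per_ν(E)`. -/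
noncomputable def perim1 (f f' : ℝ → ℝ) (E : Set ℝ) : ℝ≥0∞ :=
  bvVar1 f f' (E.indicator fun _ => (1 : ℝ))

/-- The measure `ν = f·L¹`. -/
noncomputable def mu1 (f : ℝ → ℝ) : Measure ℝ :=
  volume.withDensity fun x => ENNReal.ofReal (f x)

/-- `ν = f·L¹` is a perimeter symmetrization (PS) measure on `ℝ`. -/
def IsPS1 (f f' : ℝ → ℝ) : Prop :=
  ∀ v : ℝ, (v = 1 ∨ v = -1) → ∀ E : Set ℝ, NullMeasurableSet E volume →
    perim1 f f' E < ⊤ →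
      perim1 f f' (ehrhard1D (mu1 f) v E) ≤ perim1 f f' E

open ProbabilityTheory

section Measure

variable {Ω : Type*} [MeasurableSpace Ω] {μ : Measure Ω}

lemma setIntegral_mem_Icc_zero_measureReal [IsFiniteMeasure μ] {h : Ω → ℝ}
    (hm : AEStronglyMeasurable h μ) (h01 : ∀ ω, h ω ∈ Icc 0 1) (A : Set Ω) :
    ∫ ω in A, h ω ∂μ ∈ Icc 0 (μ.real A) := by
  refine ⟨integral_nonneg fun ω => (h01 ω).1, ?_⟩
  have hi : Integrable h μ := .of_mem_Icc 0 1 hm.aemeasurable (.of_forall h01)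
  calc ∫ ω in A, h ω ∂μ ≤ ∫ _ in A, 1 ∂μ :=
        integral_mono hi.integrableOn (integrable_const 1) fun ω => (h01 ω).2
    _ = μ.real A := by simp

/-- The left side is `a * μ Aᶜ - b * μ A`, where `a ≤ μ A` and `b ≤ μ Aᶜ` are the integrals of `h`
over `A` and `Aᶜ`. -/
lemma abs_setIntegral_sub_integral_le [IsProbabilityMeasure μ] {h : Ω → ℝ}
    (hm : AEStronglyMeasurable h μ) (h01 : ∀ ω, h ω ∈ Icc 0 1) {A : Set Ω} (hA : MeasurableSet A) :
    |∫ ω in A, (h ω - ∫ ω', h ω' ∂μ) ∂μ| ≤ μ.real A * (1 - μ.real A) := by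
  have hi : Integrable h μ := .of_mem_Icc 0 1 hm.aemeasurable (.of_forall h01)
  obtain ⟨ha, ha'⟩ := setIntegral_mem_Icc_zero_measureReal hm h01 A
  obtain ⟨hb, hb'⟩ := setIntegral_mem_Icc_zero_measureReal hm h01 Aᶜ
  have hA1 : μ.real A ≤ 1 := measureReal_le_one
  rw [probReal_compl_eq_one_sub hA] at hb'
  rw [integral_sub hi.integrableOn (integrable_const _), setIntegral_const, smul_eq_mul,
    ← integral_add_compl hA hi, abs_le]
  constructor <;> nlinarith [measureReal_nonneg (μ := μ) (s := A)]

lemma variance_indicator_one [IsProbabilityMeasure μ] {A : Set Ω} (hA : NullMeasurableSet A μ) :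
    Var[A.indicator fun _ => (1 : ℝ); μ] = μ.real A * (1 - μ.real A) := by
  have hint : ∫ ω, A.indicator (fun _ => (1 : ℝ)) ω ∂μ = μ.real A := by
    simp [integral_indicator₀ hA]
  have hsq : (A.indicator fun _ => (1 : ℝ)) ^ 2 = A.indicator fun _ => 1 := by
    ext ω
    by_cases hω : ω ∈ A <;> simp [hω]
  have hL2 : MemLp (A.indicator fun _ => (1 : ℝ)) 2 μ :=
    memLp_of_bounded (a := 0) (b := 1)
      (.of_forall fun ω => by by_cases hω : ω ∈ A <;> simp [hω])
      (aestronglyMeasurable_const.indicator₀ hA) 2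
  rw [variance_eq_sub hL2, hsq, hint]
  ring

lemma covariance_eq_integral_mul_sub [IsProbabilityMeasure μ] {g h : Ω → ℝ}
    (hg : MemLp g 2 μ) (hh : MemLp h 2 μ) :
    cov[g, h; μ] = ∫ ω, g ω * (h ω - ∫ ω', h ω' ∂μ) ∂μ := by
  have hgh : Integrable (fun ω => g ω * h ω) μ := hg.integrable_mul hh
  simp_rw [covariance_eq_sub hg hh, mul_sub]
  rw [integral_sub hgh ((hg.integrable one_le_two).mul_const _), integral_mul_const]
  rfl

lemma exists_seq_continuous_tendsto_eLpNorm_sub {X : Type*} [TopologicalSpace X] [NormalSpace X]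
    [MeasurableSpace X] [BorelSpace X] {μ : Measure X} [IsFiniteMeasure μ] [μ.WeaklyRegular]
    {p : ℝ≥0∞} (hp : p ≠ ∞) {g : X → ℝ} (hm : AEStronglyMeasurable g μ)
    (g01 : ∀ x, g x ∈ Icc 0 1) :
    ∃ h : ℕ → X → ℝ, (∀ n, Continuous (h n)) ∧ (∀ n x, h n x ∈ Icc 0 1) ∧
      Tendsto (fun n => eLpNorm (h n - g) p μ) atTop (𝓝 0) := by
  have hg : MemLp g p μ := memLp_of_bounded (.of_forall g01) hm p
  choose k hk _ using fun n : ℕ =>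
    hg.exists_boundedContinuous_eLpNorm_sub_le hp (ENNReal.inv_ne_zero.2 (ENNReal.natCast_ne_top n))
  let h : ℕ → X → ℝ := fun n x => projIcc 0 1 zero_le_one (k n x)
  have hclamp : ∀ n x, ‖(h n - g) x‖ ≤ ‖(g - k n) x‖ := fun n x => by
    have := abs_projIcc_sub_projIcc (c := k n x) (d := g x) (zero_le_one' ℝ)
    rwa [projIcc_of_mem zero_le_one (g01 x), abs_sub_comm (k n x)] at this
  refine ⟨h, fun n => ?_, fun n x => (projIcc 0 1 zero_le_one (k n x)).2, ?_⟩
  · exact continuous_subtype_val.comp (continuous_projIcc.comp (k n).continuous)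
  · exact tendsto_of_tendsto_of_tendsto_of_le_of_le tendsto_const_nhds
      ENNReal.tendsto_inv_nat_nhds_zero (fun _ => zero_le)
      fun n => (eLpNorm_mono (hclamp n)).trans (hk n)

lemma tendsto_covariance_of_tendsto_eLpNorm [IsProbabilityMeasure μ] {g : Ω → ℝ}
    (hg : AEStronglyMeasurable g μ) (g01 : ∀ ω, g ω ∈ Icc 0 1) {h : ℕ → Ω → ℝ}
    (hm : ∀ n, AEStronglyMeasurable (h n) μ) (h01 : ∀ n ω, h n ω ∈ Icc 0 1)
    (hlim : Tendsto (fun n => eLpNorm (h n - g) 1 μ) atTop (𝓝 0)) :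
    Tendsto (fun n => cov[g, h n; μ]) atTop (𝓝 Var[g; μ]) := by
  have hgL2 : MemLp g 2 μ := memLp_of_bounded (.of_forall g01) hg 2
  have hhL2 : ∀ n, MemLp (h n) 2 μ := fun n => memLp_of_bounded (.of_forall (h01 n)) (hm n) 2
  have hmean : Tendsto (fun n => ∫ ω, h n ω ∂μ) atTop (𝓝 (∫ ω, g ω ∂μ)) :=
    tendsto_integral_of_L1' g hg
      (.of_forall fun n => (hhL2 n).integrable one_le_two) hlim
  have hprod : Tendsto (fun n => ∫ ω, (g * h n) ω ∂μ) atTop (𝓝 (∫ ω, (g * g) ω ∂μ)) := by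
    refine tendsto_integral_of_L1' _ (hg.mul hg)
      (.of_forall fun n => hgL2.integrable_mul (hhL2 n)) ?_
    refine tendsto_of_tendsto_of_tendsto_of_le_of_le tendsto_const_nhds hlim (fun _ => zero_le)
      fun n => eLpNorm_mono fun ω => ?_
    rw [← mul_sub, Pi.mul_apply, norm_mul]
    exact mul_le_of_le_one_left (norm_nonneg _) ((abs_of_nonneg (g01 ω).1).trans_le (g01 ω).2)
  rw [← covariance_self hg.aemeasurable, covariance_eq_sub hgL2 hgL2]
  simp_rw [fun n => covariance_eq_sub hgL2 (hhL2 n)]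
  exact hprod.sub (hmean.const_mul _)

lemma continuous_measure_setOf_le [IsFiniteMeasure μ] {u : Ω → ℝ} (hu : Measurable u)
    (hu0 : ∀ c, μ {ω | u ω = c} = 0) : Continuous fun c => μ {ω | c ≤ u ω} := by
  refine continuous_iff_continuousAt.2 fun c => ?_
  refine tendsto_measure_of_ae_tendsto_indicator_of_isFiniteMeasure _
    (measurableSet_le measurable_const hu) (fun _ => measurableSet_le measurable_const hu) ?_
  have hne : ∀ᵐ ω ∂μ, u ω ≠ c := by simpa [ae_iff] using hu0 c
  filter_upwards [hne] with ω hω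
  rcases hω.lt_or_gt with h | h
  · filter_upwards [lt_mem_nhds h] with b hb
    exact iff_of_false (not_le.2 hb) (not_le.2 h)
  · filter_upwards [gt_mem_nhds h] with b hb
    exact iff_of_true hb.le h.le

end Measure

section Variation

variable {f g ψ : ℝ → ℝ}

lemma bvVar1_deriv_le_ofReal (hf : ContDiff ℝ 1 f) {B : ℝ}
    (h : ∀ ψ : ℝ → ℝ, ContDiff ℝ 1 ψ → HasCompactSupport ψ → (∀ x, |ψ x| ≤ |f x|) →
      ∫ x, g x * deriv ψ x ≤ B) :
    bvVar1 f (deriv f) g ≤ ENNReal.ofReal B := by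
  refine iSup₂_le fun φ hφ => ENNReal.ofReal_le_ofReal ?_
  obtain ⟨hφ, hφs, hφ1⟩ := hφ
  have hderiv : ∀ x, f x * deriv φ x + φ x * deriv f x = deriv (f * φ) x := fun x => by
    rw [deriv_mul (hf.differentiable one_ne_zero x) (hφ.differentiable one_ne_zero x)]
    ring
  simp_rw [hderiv]
  refine h _ (hf.mul hφ) hφs.mul_left fun x => ?_
  rw [Pi.mul_apply, abs_mul]
  exact mul_le_of_le_one_right (abs_nonneg _) (hφ1 x)

lemma ofReal_integral_mul_deriv_le_bvVar1_of_hasCompactSupport (hf : ContDiff ℝ 1 f)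
    (hf0 : ∀ x, 0 < f x) (hψ : ContDiff ℝ 1 ψ) (hψs : HasCompactSupport ψ)
    (hψf : ∀ x, |ψ x| ≤ f x) :
    ENNReal.ofReal (∫ x, g x * deriv ψ x) ≤ bvVar1 f (deriv f) g := by
  have hφ : ContDiff ℝ 1 (ψ / f) := hψ.div hf fun x => (hf0 x).ne'
  have hφs : HasCompactSupport (ψ / f) := by
    rw [div_eq_mul_inv]
    exact hψs.mul_right
  have hφ1 : ∀ x, |(ψ / f) x| ≤ 1 := fun x => by
    rw [Pi.div_apply, abs_div, abs_of_pos (hf0 x)]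
    exact div_le_one_of_le₀ (hψf x) (hf0 x).le
  have hderiv : ∀ x, f x * deriv (ψ / f) x + (ψ / f) x * deriv f x = deriv ψ x := fun x => by
    rw [deriv_div (hψ.differentiable one_ne_zero x) (hf.differentiable one_ne_zero x)
      (hf0 x).ne', Pi.div_apply]
    field_simp [(hf0 x).ne']
    ring
  simp_rw [← hderiv]
  exact le_iSup₂ (f := fun (φ : ℝ → ℝ) (_ : ContDiff ℝ 1 φ ∧ HasCompactSupport φ ∧
    ∀ x, |φ x| ≤ 1) => ENNReal.ofReal (∫ x, g x * (f x * deriv φ x + φ x * deriv f x)))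
    (ψ / f) ⟨hφ, hφs, hφ1⟩

lemma exists_seq_cutoff : ∃ (χ : ℕ → ℝ → ℝ) (C : ℝ),
    (∀ n, ContDiff ℝ 1 (χ n)) ∧ (∀ n, HasCompactSupport (χ n)) ∧ (∀ n x, χ n x ∈ Icc 0 1) ∧
      (∀ n x, |deriv (χ n) x| ≤ C) ∧ ∀ x, ∀ᶠ n in atTop, χ n =ᶠ[𝓝 x] 1 := by
  let η : ContDiffBump (0 : ℝ) := ⟨1, 2, one_pos, one_lt_two⟩
  have hη : ContDiff ℝ 1 η := η.contDiff
  obtain ⟨C, hC⟩ :=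
    η.hasCompactSupport.deriv.exists_bound_of_continuous (hη.continuous_deriv le_rfl)
  let k : ℕ → ℝ := fun n => 1 / ((n : ℝ) + 1)
  have hk0 : ∀ n, 0 < k n := fun n => Nat.one_div_pos_of_nat
  have hk1 : ∀ n, k n ≤ 1 := fun n => div_le_one_of_le₀ (by simp) (by positivity)
  have hk : Tendsto k atTop (𝓝 0) := tendsto_one_div_add_atTop_nhds_zero_nat
  refine ⟨fun n x => η (k n * x), C, fun n => hη.comp (contDiff_const.mul contDiff_id),
    fun n => η.hasCompactSupport.comp_homeomorph (Homeomorph.mulLeft₀ (k n) (hk0 n).ne'),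
    fun n x => ⟨η.nonneg, η.le_one⟩, fun n x => ?_, fun x => ?_⟩
  · rw [deriv_comp_mul_left (k n) η x, smul_eq_mul, abs_mul, abs_of_pos (hk0 n)]
    exact (mul_le_of_le_one_left (abs_nonneg _) (hk1 n)).trans (hC _)
  · have hkx : Tendsto (fun n => k n * x) atTop (𝓝 0) := by simpa using hk.mul_const x
    filter_upwards [hkx (Metric.ball_mem_nhds 0 one_pos)] with n hn
    have hcont : Tendsto (fun y => k n * y) (𝓝 x) (𝓝 (k n * x)) :=
      (continuous_const_mul (k n)).tendsto x
    filter_upwards [hcont (Metric.isOpen_ball.mem_nhds hn)] with y hy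
    exact η.one_of_mem_closedBall (Metric.ball_subset_closedBall hy)

lemma exists_seq_hasCompactSupport_tendsto_integral_mul_deriv (hψ : ContDiff ℝ 1 ψ)
    (hψi : Integrable ψ) (hψ'i : Integrable (deriv ψ)) (hg : AEStronglyMeasurable g)
    {B : ℝ} (hgB : ∀ x, |g x| ≤ B) :
    ∃ Ψ : ℕ → ℝ → ℝ, (∀ n, ContDiff ℝ 1 (Ψ n)) ∧ (∀ n, HasCompactSupport (Ψ n)) ∧
      (∀ n x, |Ψ n x| ≤ |ψ x|) ∧
      Tendsto (fun n => ∫ x, g x * deriv (Ψ n) x) atTop (𝓝 (∫ x, g x * deriv ψ x)) := by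
  obtain ⟨χ, C, hχ, hχs, hχ01, hχC, hχ1⟩ := exists_seq_cutoff
  have habs : ∀ n x, |χ n x| ≤ 1 := fun n x => by
    rw [abs_of_nonneg (hχ01 n x).1]
    exact (hχ01 n x).2
  refine ⟨fun n => χ n * ψ, fun n => (hχ n).mul hψ, fun n => (hχs n).mul_right,
    fun n x => ?_, ?_⟩
  · exact (abs_mul _ _).trans_le (mul_le_of_le_one_left (abs_nonneg _) (habs n x))
  have hbound : ∀ n x, |deriv (χ n * ψ) x| ≤ C * |ψ x| + |deriv ψ x| := fun n x => by
    rw [deriv_mul ((hχ n).differentiable one_ne_zero x) (hψ.differentiable one_ne_zero x)]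
    refine (abs_add_le _ _).trans ?_
    rw [abs_mul, abs_mul]
    exact add_le_add (mul_le_mul_of_nonneg_right (hχC n x) (abs_nonneg _))
      (mul_le_of_le_one_left (abs_nonneg _) (habs n x))
  refine tendsto_integral_of_dominated_convergence (fun x => B * (C * |ψ x| + |deriv ψ x|))
    (fun n => hg.mul (((hχ n).mul hψ).continuous_deriv le_rfl).aestronglyMeasurable)
    (((hψi.abs.const_mul C).add hψ'i.abs).const_mul B)
    (fun n => .of_forall fun x => ?_) (.of_forall fun x => ?_)
  · rw [norm_mul]
    exact mul_le_mul (hgB x) (hbound n x) (norm_nonneg _) ((abs_nonneg _).trans (hgB x))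
  · refine tendsto_const_nhds.congr' ?_
    filter_upwards [hχ1 x] with n hn
    rw [(hn.mul (EventuallyEq.refl _ ψ)).deriv_eq, one_mul]

lemma ofReal_integral_mul_deriv_le_bvVar1 (hf : ContDiff ℝ 1 f) (hf0 : ∀ x, 0 < f x)
    (hψ : ContDiff ℝ 1 ψ) (hψi : Integrable ψ) (hψ'i : Integrable (deriv ψ))
    (hψf : ∀ x, |ψ x| ≤ f x) (hg : AEStronglyMeasurable g) {B : ℝ} (hgB : ∀ x, |g x| ≤ B) :
    ENNReal.ofReal (∫ x, g x * deriv ψ x) ≤ bvVar1 f (deriv f) g := by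
  obtain ⟨Ψ, hΨ, hΨs, hΨψ, hlim⟩ :=
    exists_seq_hasCompactSupport_tendsto_integral_mul_deriv hψ hψi hψ'i hg hgB
  exact le_of_tendsto' (ENNReal.tendsto_ofReal hlim) fun n =>
    ofReal_integral_mul_deriv_le_bvVar1_of_hasCompactSupport hf hf0 (hΨ n) (hΨs n)
      fun x => (hΨψ n x).trans (hψf x)

lemma perim1_Ici_le (hf : ContDiff ℝ 1 f) (c : ℝ) :
    perim1 f (deriv f) (Ici c) ≤ ENNReal.ofReal |f c| := by
  refine bvVar1_deriv_le_ofReal hf fun ψ hψ hψs hψf => ?_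
  calc ∫ x, (Ici c).indicator (fun _ => 1) x * deriv ψ x = ∫ x in Ici c, deriv ψ x := by
        simp_rw [← indicator_mul_left, one_mul]
        exact integral_indicator measurableSet_Ici
    _ = -ψ c := by rw [integral_Ici_eq_integral_Ioi, hψs.integral_Ioi_deriv_eq hψ]
    _ ≤ |f c| := (neg_le_abs _).trans (hψf c)

lemma perim1_Iic_le (hf : ContDiff ℝ 1 f) (c : ℝ) :
    perim1 f (deriv f) (Iic c) ≤ ENNReal.ofReal |f c| := by
  refine bvVar1_deriv_le_ofReal hf fun ψ hψ hψs hψf => ?_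
  calc ∫ x, (Iic c).indicator (fun _ => 1) x * deriv ψ x = ∫ x in Iic c, deriv ψ x := by
        simp_rw [← indicator_mul_left, one_mul]
        exact integral_indicator measurableSet_Iic
    _ = ψ c := hψs.integral_Iic_deriv_eq hψ c
    _ ≤ |f c| := (le_abs_self _).trans (hψf c)

lemma perim1_empty (f f' : ℝ → ℝ) : perim1 f f' ∅ = 0 := by
  simp [perim1, bvVar1]

lemma perim1_univ (hf : ContDiff ℝ 1 f) : perim1 f (deriv f) univ = 0 := by
  refine le_antisymm ?_ zero_le
  rw [← ENNReal.ofReal_zero]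
  refine bvVar1_deriv_le_ofReal hf fun ψ hψ hψs _ => le_of_eq ?_
  simp_rw [indicator_univ, one_mul]
  exact integral_eq_zero_of_hasDerivAt_of_integrable
    (fun x => (hψ.differentiable one_ne_zero x).hasDerivAt)
    ((hψ.continuous_deriv le_rfl).integrable_of_hasCompactSupport hψs.deriv)
    (hψ.continuous.integrable_of_hasCompactSupport hψs)

end Variation

section Density

variable {f : ℝ → ℝ}

lemma setIntegral_mu1 (hf : Measurable f) (hf0 : ∀ x, 0 ≤ f x) (u : ℝ → ℝ) (s : Set ℝ) :
    ∫ x in s, u x ∂mu1 f = ∫ x in s, f x * u x := by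
  rw [mu1, setIntegral_withDensity_eq_setIntegral_toReal_smul' s hf.ennreal_ofReal
    (.of_forall fun _ => ENNReal.ofReal_lt_top)]
  simp_rw [ENNReal.toReal_ofReal (hf0 _), smul_eq_mul]

lemma integral_mu1 (hf : Measurable f) (hf0 : ∀ x, 0 ≤ f x) (u : ℝ → ℝ) :
    ∫ x, u x ∂mu1 f = ∫ x, f x * u x := by
  simpa only [Measure.restrict_univ] using setIntegral_mu1 hf hf0 u univ

variable {u : ℝ → ℝ}

lemma integrable_mu1_iff (hf : Measurable f) (hf0 : ∀ x, 0 ≤ f x) :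
    Integrable u (mu1 f) ↔ Integrable fun x => f x * u x := by
  rw [mu1, integrable_withDensity_iff_integrable_smul' hf.ennreal_ofReal
    (.of_forall fun _ => ENNReal.ofReal_lt_top)]
  simp_rw [ENNReal.toReal_ofReal (hf0 _), smul_eq_mul]

lemma integrable_of_isFiniteMeasure_mu1 [IsFiniteMeasure (mu1 f)] (hf : Measurable f)
    (hf0 : ∀ x, 0 ≤ f x) : Integrable f := by
  simpa using (integrable_mu1_iff hf hf0).1 (integrable_const (1 : ℝ))

lemma mu1_absolutelyContinuous (f : ℝ → ℝ) : mu1 f ≪ volume :=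
  withDensity_absolutelyContinuous _ _

instance nullSingletonClass_mu1 (f : ℝ → ℝ) : NullSingletonClass (mu1 f) :=
  ⟨fun x => mu1_absolutelyContinuous f (measure_singleton x)⟩

lemma hasDerivAt_setIntegral_Iic_mu1 (hf : Continuous f) (hf0 : ∀ x, 0 ≤ f x) (hu : Continuous u)
    (hui : Integrable u (mu1 f)) (x : ℝ) :
    HasDerivAt (fun y => ∫ t in Iic y, u t ∂mu1 f) (f x * u x) x := by
  have hi : Integrable fun t => f t * u t := (integrable_mu1_iff hf.measurable hf0).1 hui
  have heq : ∀ y, ∫ t in Iic y, u t ∂mu1 f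
      = (∫ t in Iic 0, f t * u t) + ∫ t in (0 : ℝ)..y, f t * u t := fun y => by
    rw [setIntegral_mu1 hf.measurable hf0,
      ← intervalIntegral.integral_Iic_sub_Iic hi.integrableOn hi.integrableOn,
      add_sub_cancel]
  rw [funext heq]
  exact ((hf.mul hu).integral_hasStrictDerivAt 0 x).hasDerivAt.const_add _

lemma contDiff_setIntegral_Iic_mu1 (hf : Continuous f) (hf0 : ∀ x, 0 ≤ f x) (hu : Continuous u)
    (hui : Integrable u (mu1 f)) : ContDiff ℝ 1 fun y => ∫ t in Iic y, u t ∂mu1 f := by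
  have hderiv := hasDerivAt_setIntegral_Iic_mu1 hf hf0 hu hui
  refine contDiff_one_iff_deriv.2 ⟨fun x => (hderiv x).differentiableAt, ?_⟩
  rw [funext fun x => (hderiv x).deriv]
  exact hf.mul hu

variable {F : ℝ → ℝ}

lemma integrable_deriv_of_nonneg (hF : ContDiff ℝ 1 F) (hF0 : ∀ x, 0 ≤ deriv F x) {a b : ℝ}
    (hbot : Tendsto F atBot (𝓝 a)) (htop : Tendsto F atTop (𝓝 b)) : Integrable (deriv F) := by
  have hcont : Continuous (deriv F) := hF.continuous_deriv le_rfl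
  refine integrable_of_intervalIntegral_norm_tendsto (b - a) (fun i : ℝ => ?_)
    tendsto_neg_atTop_atBot tendsto_id ?_
  · exact (hcont.integrableOn_Icc).mono_set Ioc_subset_Icc_self
  · simp_rw [Real.norm_of_nonneg (hF0 _),
      intervalIntegral.integral_deriv_eq_sub (fun x _ => hF.differentiable one_ne_zero x)
        (hcont.intervalIntegrable _ _)]
    exact htop.sub (hbot.comp tendsto_neg_atTop_atBot)

lemma isProbabilityMeasure_mu1_deriv (hF : ContDiff ℝ 1 F) (hF0 : ∀ x, 0 ≤ deriv F x)
    (hbot : Tendsto F atBot (𝓝 0)) (htop : Tendsto F atTop (𝓝 1)) :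
    IsProbabilityMeasure (mu1 (deriv F)) := by
  have hi := integrable_deriv_of_nonneg hF hF0 hbot htop
  refine ⟨?_⟩
  rw [mu1, withDensity_apply _ .univ, Measure.restrict_univ,
    ← ofReal_integral_eq_lintegral_ofReal hi (.of_forall hF0),
    integral_of_hasDerivAt_of_tendsto (fun x => (hF.differentiable one_ne_zero x).hasDerivAt) hi
      hbot htop, sub_zero, ENNReal.ofReal_one]

lemma cdf_mu1_deriv (hF : ContDiff ℝ 1 F) (hF0 : ∀ x, 0 ≤ deriv F x)
    (hbot : Tendsto F atBot (𝓝 0)) (htop : Tendsto F atTop (𝓝 1)) (x : ℝ) :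
    cdf (mu1 (deriv F)) x = F x := by
  have := isProbabilityMeasure_mu1_deriv hF hF0 hbot htop
  calc cdf (mu1 (deriv F)) x = ∫ _ in Iic x, (1 : ℝ) ∂mu1 (deriv F) := by simp [cdf_eq_real]
    _ = ∫ t in Iic x, deriv F t := by
        rw [setIntegral_mu1 (hF.continuous_deriv le_rfl).measurable hF0]
        simp_rw [mul_one]
    _ = F x := by
        rw [integral_Iic_of_hasDerivAt_of_tendsto'
          (fun t _ => (hF.differentiable one_ne_zero t).hasDerivAt)
          (integrable_deriv_of_nonneg hF hF0 hbot htop).integrableOn hbot, sub_zero]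

end Density

section Isoperimetry

variable {f g h : ℝ → ℝ} {c : ℝ}

/-- The test function is `ψ = c * P`, where `P x` is the integral of `h - ∫ h ∂μ` over `Iic x`:
it satisfies `|P| ≤ cdf μ * (1 - cdf μ)`. -/
lemma ofReal_mul_covariance_le_bvVar1 (hf : ContDiff ℝ 1 f) (hf0 : ∀ x, 0 < f x)
    [IsProbabilityMeasure (mu1 f)] (hc : 0 ≤ c)
    (hcf : ∀ x, c * (cdf (mu1 f) x * (1 - cdf (mu1 f) x)) ≤ f x)
    (hg : AEStronglyMeasurable g) (g01 : ∀ x, g x ∈ Icc 0 1)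
    (hh : Continuous h) (h01 : ∀ x, h x ∈ Icc 0 1) :
    ENNReal.ofReal (c * cov[g, h; mu1 f]) ≤ bvVar1 f (deriv f) g := by
  have hf0' : ∀ x, 0 ≤ f x := fun x => (hf0 x).le
  have hfm : Measurable f := hf.continuous.measurable
  have hgμ : AEStronglyMeasurable g (mu1 f) := hg.mono_ac (mu1_absolutelyContinuous f)
  let u : ℝ → ℝ := fun x => h x - ∫ t, h t ∂mu1 f
  have hu : Continuous u := hh.sub continuous_const
  have hui : Integrable u (mu1 f) :=
    (Integrable.of_mem_Icc 0 1 hh.aemeasurable (.of_forall h01)).sub (integrable_const _)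
  let ψ : ℝ → ℝ := fun x => c * ∫ t in Iic x, u t ∂mu1 f
  have hψ : ContDiff ℝ 1 ψ :=
    contDiff_const.mul (contDiff_setIntegral_Iic_mu1 hf.continuous hf0' hu hui)
  have hψ' : deriv ψ = fun x => c * (f x * u x) := funext fun x =>
    ((hasDerivAt_setIntegral_Iic_mu1 hf.continuous hf0' hu hui x).const_mul c).deriv
  have hψ'i : Integrable (deriv ψ) := by
    rw [hψ']
    exact ((integrable_mu1_iff hfm hf0').1 hui).const_mul c
  have hψf : ∀ x, |ψ x| ≤ f x := fun x => by
    rw [abs_mul, abs_of_nonneg hc]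
    refine le_trans (mul_le_mul_of_nonneg_left ?_ hc) (hcf x)
    rw [cdf_eq_real]
    exact abs_setIntegral_sub_integral_le hh.aestronglyMeasurable h01 measurableSet_Iic
  have hψi : Integrable ψ := (integrable_of_isFiniteMeasure_mu1 hfm hf0').mono'
    hψ.continuous.aestronglyMeasurable (.of_forall hψf)
  have hcov : c * cov[g, h; mu1 f] = ∫ x, g x * deriv ψ x := by
    rw [covariance_eq_integral_mul_sub (memLp_of_bounded (.of_forall g01) hgμ 2)
        (memLp_of_bounded (.of_forall h01) hh.aestronglyMeasurable 2),
      integral_mu1 hfm hf0', ← integral_const_mul, hψ']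
    exact integral_congr_ae (.of_forall fun x => by ring)
  rw [hcov]
  exact ofReal_integral_mul_deriv_le_bvVar1 hf hf0 hψ hψi hψ'i hψf hg
    fun x => (abs_of_nonneg (g01 x).1).trans_le (g01 x).2

lemma ofReal_mul_variance_le_bvVar1 (hf : ContDiff ℝ 1 f) (hf0 : ∀ x, 0 < f x)
    [IsProbabilityMeasure (mu1 f)] (hc : 0 ≤ c)
    (hcf : ∀ x, c * (cdf (mu1 f) x * (1 - cdf (mu1 f) x)) ≤ f x)
    (hg : AEStronglyMeasurable g) (g01 : ∀ x, g x ∈ Icc 0 1) :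
    ENNReal.ofReal (c * Var[g; mu1 f]) ≤ bvVar1 f (deriv f) g := by
  have hgμ : AEStronglyMeasurable g (mu1 f) := hg.mono_ac (mu1_absolutelyContinuous f)
  obtain ⟨h, hh, h01, hlim⟩ :=
    exists_seq_continuous_tendsto_eLpNorm_sub ENNReal.one_ne_top hgμ g01
  have hcov : Tendsto (fun n => cov[g, h n; mu1 f]) atTop (𝓝 Var[g; mu1 f]) :=
    tendsto_covariance_of_tendsto_eLpNorm hgμ g01 (fun n => (hh n).aestronglyMeasurable) h01 hlim
  exact le_of_tendsto' (ENNReal.tendsto_ofReal (hcov.const_mul c)) fun n =>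
    ofReal_mul_covariance_le_bvVar1 hf hf0 hc hcf hg g01 (hh n) (h01 n)

lemma ofReal_mul_measureReal_mul_le_perim1 (hf : ContDiff ℝ 1 f) (hf0 : ∀ x, 0 < f x)
    [IsProbabilityMeasure (mu1 f)] (hc : 0 ≤ c)
    (hcf : ∀ x, c * (cdf (mu1 f) x * (1 - cdf (mu1 f) x)) ≤ f x)
    {E : Set ℝ} (hE : NullMeasurableSet E) :
    ENNReal.ofReal (c * ((mu1 f).real E * (1 - (mu1 f).real E))) ≤ perim1 f (deriv f) E := by
  rw [← variance_indicator_one (hE.mono_ac (mu1_absolutelyContinuous f))]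
  exact ofReal_mul_variance_le_bvVar1 hf hf0 hc hcf
    (aestronglyMeasurable_const.indicator₀ hE) fun x => by by_cases hx : x ∈ E <;> simp [hx]

end Isoperimetry

section Symmetrization

variable {v : ℝ}

lemma ehrhard1D_eq_setOf_le {ν : Measure ℝ} {A : Set ℝ} {c : ℝ}
    (h : IsGLB {b | ν {y | b ≤ v * y} ≤ ν A} c) : ehrhard1D ν v A = {t | c ≤ v * t} := by
  ext t
  exact ⟨fun ht => ht c fun _ hb => h.1 hb, fun ht _ hb => (h.2 fun _ hx => hb _ hx).trans ht⟩

lemma ehrhard1D_eq_empty_or_univ_or_setOf_le {ν : Measure ℝ} [IsFiniteMeasure ν]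
    [NullSingletonClass ν] (hv : v ≠ 0) (A : Set ℝ) :
    ehrhard1D ν v A = ∅ ∨ ehrhard1D ν v A = univ ∨
      ∃ c, ehrhard1D ν v A = {t | c ≤ v * t} ∧ ν {t | c ≤ v * t} = ν A := by
  let G : ℝ → ℝ≥0∞ := fun c => ν {t | c ≤ v * t}
  have hG : Continuous G := continuous_measure_setOf_le (measurable_const_mul v) fun c => by
    have : {t | v * t = c} = {c / v} := by
      ext t
      rw [mem_ofPred_eq, mem_singleton_iff, eq_div_iff hv, mul_comm]
    rw [this, measure_singleton]
  let C : Set ℝ := {c | G c ≤ ν A}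
  rcases C.eq_empty_or_nonempty with hC | hC
  · refine .inl (eq_empty_of_forall_notMem fun t ht => ?_)
    exact (lt_add_one (v * t)).not_ge
      (ht _ fun c hc => absurd hc (eq_empty_iff_forall_notMem.1 hC c))
  by_cases hCb : BddBelow C
  · have hinf : IsGLB C (sInf C) := isGLB_csInf hC hCb
    have hCcl : IsClosed C := isClosed_le hG continuous_const
    refine .inr (.inr ⟨sInf C, ehrhard1D_eq_setOf_le hinf, ?_⟩)
    refine le_antisymm (hCcl.csInf_mem hC hCb) ?_
    refine ge_of_tendsto (hG.continuousWithinAt (s := Iio (sInf C))) ?_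
    filter_upwards [self_mem_nhdsWithin] with c hc
    exact (not_le.1 (notMem_of_lt_csInf hc hCb : c ∉ C)).le
  · exact .inr (.inl (eq_univ_of_forall fun t b hb => absurd ⟨b, fun c hc => hb c hc⟩ hCb))

end Symmetrization

section Criterion

variable {f : ℝ → ℝ}

lemma measureReal_Ici_mu1 [IsProbabilityMeasure (mu1 f)] (x : ℝ) :
    (mu1 f).real (Ici x) = 1 - cdf (mu1 f) x := by
  rw [measureReal_congr Ioi_ae_eq_Ici.symm, ← compl_Iic,
    probReal_compl_eq_one_sub measurableSet_Iic, cdf_eq_real]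

lemma perim1_setOf_le_le (hf : ContDiff ℝ 1 f) [IsProbabilityMeasure (mu1 f)] {k v : ℝ}
    (hk : ∀ x, |f x| ≤ k * (cdf (mu1 f) x * (1 - cdf (mu1 f) x))) (hv : v = 1 ∨ v = -1) (c : ℝ) :
    perim1 f (deriv f) {t | c ≤ v * t} ≤ ENNReal.ofReal
      (k * ((mu1 f).real {t | c ≤ v * t} * (1 - (mu1 f).real {t | c ≤ v * t}))) := by
  rcases hv with rfl | rfl
  · have hset : {t : ℝ | c ≤ 1 * t} = Ici c := by simp_rw [one_mul]; rfl
    rw [hset, measureReal_Ici_mu1, sub_sub_cancel, mul_comm (1 - _)]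
    exact (perim1_Ici_le hf c).trans (ENNReal.ofReal_le_ofReal (hk c))
  · have hset : {t : ℝ | c ≤ -1 * t} = Iic (-c) := by
      ext t
      rw [mem_ofPred_eq, neg_one_mul, mem_Iic, le_neg]
    rw [hset, ← cdf_eq_real]
    exact (perim1_Iic_le hf (-c)).trans (ENNReal.ofReal_le_ofReal (hk (-c)))

theorem isPS1_of_eq_mul_cdf (hf : ContDiff ℝ 1 f) (hf0 : ∀ x, 0 < f x)
    [IsProbabilityMeasure (mu1 f)] {k : ℝ}
    (hk : ∀ x, f x = k * (cdf (mu1 f) x * (1 - cdf (mu1 f) x))) : IsPS1 f (deriv f) := by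
  have hk0 : 0 ≤ k := by
    refine (pos_of_mul_pos_left ((hf0 0).trans_eq (hk 0)) ?_).le
    exact mul_nonneg (cdf_nonneg _ 0) (sub_nonneg.2 (cdf_le_one _ 0))
  intro v hv E hE _
  have hv0 : v ≠ 0 := by rcases hv with rfl | rfl <;> norm_num
  rcases ehrhard1D_eq_empty_or_univ_or_setOf_le (ν := mu1 f) hv0 E with hS | hS | ⟨c, hS, hνc⟩
  · rw [hS, perim1_empty]
    exact zero_le
  · rw [hS, perim1_univ hf]
    exact zero_le
  · have hreal : (mu1 f).real {t | c ≤ v * t} = (mu1 f).real E := congrArg ENNReal.toReal hνc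
    rw [hS]
    refine (perim1_setOf_le_le hf (k := k) (fun x => ?_) hv c).trans ?_
    · rw [abs_of_pos (hf0 x), ← hk]
    · rw [hreal]
      exact ofReal_mul_measureReal_mul_le_perim1 hf hf0 hk0 (fun x => (hk x).ge) hE

end Criterion

section Logistic

lemma deriv_sigmoid_eq_mul (x : ℝ) :
    deriv Real.sigmoid x = Real.sigmoid x * Real.sigmoid (-x) := by
  rw [Real.deriv_sigmoid, Real.sigmoid_neg]

lemma one_div_exp_add_exp_neg_sq (x : ℝ) :
    1 / (Real.exp (x / 2) + Real.exp (-(x / 2))) ^ 2 = deriv Real.sigmoid x := by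
  have hsq : (Real.exp (x / 2) + Real.exp (-(x / 2))) ^ 2
      = (1 + Real.exp (-x)) * (1 + Real.exp x) := by
    obtain ⟨y, rfl⟩ : ∃ y, x = 2 * y := ⟨x / 2, by ring⟩
    have hy : Real.exp y * Real.exp (-y) = 1 := by
      rw [← Real.exp_add, add_neg_cancel, Real.exp_zero]
    have h2y : Real.exp (2 * y) = Real.exp y ^ 2 := Real.exp_nat_mul y 2
    have h2y' : Real.exp (-(2 * y)) = Real.exp (-y) ^ 2 := by
      rw [← mul_neg]
      exact Real.exp_nat_mul (-y) 2
    rw [mul_div_cancel_left₀ y two_ne_zero, h2y, h2y']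
    linear_combination (1 - Real.exp y * Real.exp (-y)) * hy
  rw [deriv_sigmoid_eq_mul, Real.sigmoid_def, Real.sigmoid_def, neg_neg, hsq, one_div, mul_inv]

lemma contDiff_deriv_sigmoid : ContDiff ℝ 1 (deriv Real.sigmoid) := by
  rw [Real.deriv_sigmoid]
  have hσ : ContDiff ℝ 1 Real.sigmoid := contDiff_sigmoid.of_le le_top
  exact hσ.mul (contDiff_const.sub hσ)

lemma deriv_sigmoid_pos (x : ℝ) : 0 < deriv Real.sigmoid x := by
  rw [deriv_sigmoid_eq_mul]
  exact mul_pos (Real.sigmoid_pos x) (Real.sigmoid_pos (-x))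

theorem isPS1_deriv_sigmoid : IsPS1 (deriv Real.sigmoid) (deriv (deriv Real.sigmoid)) := by
  have hσ : ContDiff ℝ 1 Real.sigmoid := contDiff_sigmoid.of_le le_top
  have hσ0 : ∀ x, 0 ≤ deriv Real.sigmoid x := fun x => (deriv_sigmoid_pos x).le
  have := isProbabilityMeasure_mu1_deriv hσ hσ0 Real.tendsto_sigmoid_atBot
    Real.tendsto_sigmoid_atTop
  refine isPS1_of_eq_mul_cdf contDiff_deriv_sigmoid deriv_sigmoid_pos (k := 1) fun x => ?_
  rw [cdf_mu1_deriv hσ hσ0 Real.tendsto_sigmoid_atBot Real.tendsto_sigmoid_atTop, one_mul,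
    Real.deriv_sigmoid]

lemma tendsto_deriv_sigmoid_mul_exp :
    Tendsto (fun x => deriv Real.sigmoid x * Real.exp x) atTop (𝓝 1) := by
  have heq : ∀ x, deriv Real.sigmoid x * Real.exp x = Real.sigmoid x ^ 2 := fun x => by
    rw [deriv_sigmoid_eq_mul, ← Real.sigmoid_mul_rexp_neg, sq, mul_assoc, mul_assoc,
      ← Real.exp_add, neg_add_cancel, Real.exp_zero, mul_one]
  rw [funext heq]
  simpa using Real.tendsto_sigmoid_atTop.pow 2

lemma tendsto_gaussian_mul_exp (C a : ℝ) {c : ℝ} (hc : 0 < c) :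
    Tendsto (fun x => C * Real.exp (-c * (x - a) ^ 2) * Real.exp x) atTop (𝓝 0) := by
  have hexp : Tendsto (fun x : ℝ => -c * (x - a) ^ 2 + x) atTop atBot := by
    have hlin : Tendsto (fun x : ℝ => -c * x + (2 * c * a + 1)) atTop atBot :=
      tendsto_atBot_add_const_right _ _ (tendsto_id.const_mul_atTop_of_neg (neg_lt_zero.2 hc))
    refine ((tendsto_id.atTop_mul_atBot₀ hlin).atBot_add
      (tendsto_const_nhds (x := -c * a ^ 2))).congr fun x => ?_
    simp only [id_eq]
    ring
  simpa [mul_assoc, ← Real.exp_add] using (Real.tendsto_exp_atBot.comp hexp).const_mul C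

lemma deriv_sigmoid_ne_gaussian (C a : ℝ) {c : ℝ} (hc : 0 < c) :
    deriv Real.sigmoid ≠ fun x => C * Real.exp (-c * (x - a) ^ 2) := fun heq =>
  one_ne_zero <| tendsto_nhds_unique tendsto_deriv_sigmoid_mul_exp <| by
    rw [heq]
    exact tendsto_gaussian_mul_exp C a hc

end Logistic

/-- The standard logistic distribution `f(x) = (e^{x/2} + e^{-x/2})^{-2}` is a PS measure
on `ℝ`, yet it is not of Gaussian form. -/
theorem logistic_is_PS_not_Gaussian :
    IsPS1 (fun x : ℝ => 1 / (Real.exp (x / 2) + Real.exp (-(x / 2))) ^ 2)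
      (deriv fun x : ℝ => 1 / (Real.exp (x / 2) + Real.exp (-(x / 2))) ^ 2) ∧
    ¬∃ C c a : ℝ, 0 ≤ C ∧ 0 < c ∧
      ∀ x : ℝ, 1 / (Real.exp (x / 2) + Real.exp (-(x / 2))) ^ 2
        = C * Real.exp (-c * (x - a) ^ 2) := by
  rw [funext one_div_exp_add_exp_neg_sq]
  refine ⟨isPS1_deriv_sigmoid, ?_⟩
  rintro ⟨C, c, a, -, hc, hgauss⟩
  exact deriv_sigmoid_ne_gaussian C a hc
    (funext fun x => (one_div_exp_add_exp_neg_sq x).symm.trans (hgauss x))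

end
end
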